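/- arXiv:2505.14322 — 2 statements merged into one kernel-verified Lean document; each statement's English description precedes it below -/
import Mathlib

section
/- Let s be an integer with 2 < s < n. There is a constant q₀ depending only on n such that whenever q ≥ q₀, every EKR-set of totally isotropic s-spaces has cardinality strictly less than h_{n,s} = [n choose s]_q · ∏_{i=1}^{s−1} (q^{n−i} + 1); in particular no EKR-set of s-spaces is ratio-sharp. -/
open scoped Classical

open Module

section Defs

variable {F V : Type} [Field F] [AddCommGroup V] [Module F V]

/-- The orthogonal complement of a subspace with respect to a bilinear form. -/
def bperp (B : V →ₗ[F] V →ₗ[F] F) (W : Submodule F V) : Submodule F V :=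
  ⨅ w ∈ W, LinearMap.ker (B w)

/-- A subspace is totally isotropic for `B`. -/
def IsTotIso (B : V →ₗ[F] V →ₗ[F] F) (W : Submodule F V) : Prop :=
  ∀ u ∈ W, ∀ w ∈ W, B u w = 0

/-- `B` is an alternating form. -/
def IsAltForm (B : V →ₗ[F] V →ₗ[F] F) : Prop := ∀ v, B v v = 0

/-- `B` is nondegenerate. -/
def NondegForm (B : V →ₗ[F] V →ₗ[F] F) : Prop := ∀ v, (∀ w, B v w = 0) → v = 0

/-- A flag of type `J` of totally isotropic subspaces: entries outside `J` are `⊥`. -/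
structure SFlag (B : V →ₗ[F] V →ₗ[F] F) (J : Finset ℕ) where
  space : ℕ → Submodule F V
  isotropic : ∀ i ∈ J, IsTotIso B (space i)
  finrank_eq : ∀ i ∈ J, Module.finrank F (space i) = i
  mono : ∀ i ∈ J, ∀ j ∈ J, i ≤ j → space i ≤ space j
  eq_bot : ∀ i, i ∉ J → space i = ⊥

/-- Two flags of type `J` are opposite. -/
def FlagOpp {B : V →ₗ[F] V →ₗ[F] F} {J : Finset ℕ} (C C' : SFlag B J) : Prop :=
  ∀ i ∈ J, bperp B (C.space i) ⊓ C'.space i = ⊥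

/-- An EKR-set of flags of type `J`: no two members are opposite. -/
def IsEKRFlags {B : V →ₗ[F] V →ₗ[F] F} {J : Finset ℕ} (𝓕 : Set (SFlag B J)) : Prop :=
  ∀ C ∈ 𝓕, ∀ C' ∈ 𝓕, ¬ FlagOpp C C'

/-- Two subspaces are opposite. -/
def SpaceOpp (B : V →ₗ[F] V →ₗ[F] F) (S T : Submodule F V) : Prop :=
  bperp B S ⊓ T = ⊥

/-- An EKR-set of totally isotropic `s`-spaces: no two members are opposite. -/
def IsEKRSpaces (B : V →ₗ[F] V →ₗ[F] F) (s : ℕ) (𝓕 : Set (Submodule F V)) : Prop :=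
  (∀ S ∈ 𝓕, IsTotIso B S ∧ Module.finrank F S = s) ∧
    ∀ S ∈ 𝓕, ∀ T ∈ 𝓕, ¬ SpaceOpp B S T

/-- An `s`-space `S` is heavy with respect to a set `𝓕` of flags: every flag whose
`s`-th entry equals `S` belongs to `𝓕`. -/
def Heavy {B : V →ₗ[F] V →ₗ[F] F} {J : Finset ℕ} (𝓕 : Set (SFlag B J)) (s : ℕ)
    (S : Submodule F V) : Prop :=
  ∀ C : SFlag B J, C.space s = S → C ∈ 𝓕

end Defs

/-- `z_k = ∏_{i=1}^k (q^i-1)/(q-1)`. -/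
noncomputable def zpol (q k : ℕ) : ℝ :=
  ∏ i ∈ Finset.Icc 1 k, ((q : ℝ) ^ i - 1) / ((q : ℝ) - 1)

/-- The Gaussian binomial coefficient `[m choose k]_q` as a real number. -/
noncomputable def gaussq (q m k : ℕ) : ℝ :=
  ∏ i ∈ Finset.Icc 1 k, ((q : ℝ) ^ (m - k + i) - 1) / ((q : ℝ) ^ i - 1)

/-- `Φ_m^s` in `PS(n,1,q)`: the number of totally isotropic `s`-spaces containing a
fixed totally isotropic `m`-space. -/
noncomputable def PhiP (q n m s : ℕ) : ℝ :=
  gaussq q (n - m) (s - m) * ∏ i ∈ Finset.Icc 1 (s - m), ((q : ℝ) ^ (n - m + 1 - i) + 1)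

/-!
Let `N` be the number of totally isotropic `s`-spaces through a point and `d(v)` the number of
members of a family `A` through `v`; then `q ^ (n - s) * N ≤ h_{n,s}`. If no member of `A` is
opposite to a member of `A'`, then every `S^⊥ ∩ T` has at least `q` vectors, whereas the average
over all pairs of subspaces would be about `1`. Comparing the degree functions of the `S^⊥` and of
the `T` by Cauchy–Schwarz, after subtracting their means, gives
`(q - 2) |A| |A'| ≤ q ^ (n - s) √(Var d · Var d')`, where `Var` is the squared norm of a centered
function. The orthogonality graph has second eigenvalue about `q ^ n`, which bounds `Var d` by
`2 (q - 1) N |A|`, hence `|A| |A'| ≤ (4 q ^ (n - s) N) ^ 2`.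

This cross bound also applies to the members of `A` through each of two opposite subspaces `R` and
`R'`, whose traces on `(R + R')^⊥` form such a pair of families of smaller rank. For opposite
points it shows that points of degree at least `N / (4 q ^ (s - 1))` are pairwise orthogonal, so
there are at most `q ^ n` such vectors. For opposite lines, chosen by pigeonhole through two given
orthogonal points, it shows that two distinct points cannot both have degree at least
`9 N / q ^ (s - 1)`. But if `|A| ≥ q ^ (n - s) N`, the lower bound on `Var d` forces more than `q`
vectors of that degree.
-/

section IsoCount

/-- The number of totally isotropic `s`-spaces containing a fixed totally isotropic `j`-space in a
symplectic space of rank `n` over a field with `q` elements: this is `PhiP`, extended by `0` to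
`j > s`, where `PhiP` itself has a junk value. -/
noncomputable def isoCount (q n j s : ℕ) : ℝ := if j ≤ s then PhiP q n j s else 0

variable {q n j s : ℕ}

lemma isoCount_of_lt (h : s < j) : isoCount q n j s = 0 := if_neg h.not_ge

lemma isoCount_self : isoCount q n s s = 1 := by simp [isoCount, PhiP, gaussq]

lemma isoCount_sub_sub {ρ : ℕ} (h : ρ ≤ s) :
    isoCount q (n - ρ) j (s - ρ) = isoCount q n (ρ + j) s := by
  have hle : j ≤ s - ρ ↔ ρ + j ≤ s := by omega
  simp only [isoCount, PhiP, hle, Nat.sub_sub]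

lemma gaussq_nonneg (hq : 1 ≤ q) (m k : ℕ) : 0 ≤ gaussq q m k := by
  have hpow (i : ℕ) : 0 ≤ (q : ℝ) ^ i - 1 := sub_nonneg.2 (one_le_pow₀ (mod_cast hq))
  exact Finset.prod_nonneg fun i _ => div_nonneg (hpow _) (hpow _)

lemma isoCount_nonneg (hq : 1 ≤ q) : 0 ≤ isoCount q n j s := by
  unfold isoCount PhiP
  split_ifs
  · exact mul_nonneg (gaussq_nonneg hq _ _) (Finset.prod_nonneg fun i _ => by positivity)
  · rfl

lemma gaussq_succ_succ {m k : ℕ} (h : k ≤ m) :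
    gaussq q (m + 1) (k + 1) =
      gaussq q m k * (((q : ℝ) ^ (m + 1) - 1) / ((q : ℝ) ^ (k + 1) - 1)) := by
  have hm : m - k + (k + 1) = m + 1 := by omega
  simp only [gaussq, Nat.add_sub_add_right, Finset.prod_Icc_succ_top (Nat.le_add_left 1 k), hm]

lemma pow_sub_pow_eq {a b : ℕ} (h : a ≤ b) :
    (q : ℝ) ^ b - (q : ℝ) ^ a = (q : ℝ) ^ a * ((q : ℝ) ^ (b - a) - 1) := by
  rw [mul_sub_one, ← pow_add, Nat.add_sub_cancel' h]

lemma PhiP_succ (hq : 1 < q) (hj : j < s) (hs : s ≤ n) :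
    PhiP q n j s * ((q : ℝ) ^ s - (q : ℝ) ^ j) =
      ((q : ℝ) ^ (2 * n - j) - (q : ℝ) ^ j) * PhiP q n (j + 1) s := by
  obtain ⟨k, rfl⟩ := Nat.exists_eq_add_of_lt hj
  obtain ⟨m, rfl⟩ := Nat.exists_eq_add_of_le hs
  have hgauss := gaussq_succ_succ (q := q) (Nat.le_add_right k m)
  have hprod : ∏ i ∈ Finset.Icc 1 (k + 1), ((q : ℝ) ^ (k + m + 2 - i) + 1) =
      ((q : ℝ) ^ (k + m + 1) + 1) * ∏ i ∈ Finset.Icc 1 k, ((q : ℝ) ^ (k + m + 1 - i) + 1) := by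
    simp only [← Finset.Ico_add_one_right_eq_Icc, Finset.prod_Ico_eq_prod_range,
      Nat.add_sub_cancel, Finset.prod_range_succ' _ k]
    rw [mul_comm]
    refine congrArg₂ _ rfl (Finset.prod_congr rfl fun i _ => ?_)
    rw [show k + m + 2 - (1 + (i + 1)) = k + m + 1 - (1 + i) by omega]
  have e1 : j + k + 1 + m - j = k + m + 1 := by omega
  have e2 : j + k + 1 - j = k + 1 := by omega
  have e3 : j + k + 1 + m - (j + 1) = k + m := by omega
  have e4 : j + k + 1 - (j + 1) = k := by omega
  have e5 : 2 * (j + k + 1 + m) - j - j = (k + m + 1) + (k + m + 1) := by omega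
  have hne : (q : ℝ) ^ (k + 1) - 1 ≠ 0 :=
    sub_ne_zero.2 (one_lt_pow₀ (mod_cast hq) k.succ_ne_zero).ne'
  rw [pow_sub_pow_eq hj.le, pow_sub_pow_eq (by omega : j ≤ 2 * (j + k + 1 + m) - j)]
  simp only [PhiP, e1, e2, e3, e4, e5, hgauss, hprod, pow_add _ (k + m + 1) (k + m + 1)]
  field_simp
  ring

lemma isoCount_succ (hq : 1 < q) (hs : s ≤ n) :
    isoCount q n j s * ((q : ℝ) ^ s - (q : ℝ) ^ j) =
      ((q : ℝ) ^ (2 * n - j) - (q : ℝ) ^ j) * isoCount q n (j + 1) s := by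
  rcases lt_trichotomy j s with hj | rfl | hj
  · simpa only [isoCount, if_pos hj.le, if_pos (Nat.succ_le_of_lt hj)] using PhiP_succ hq hj hs
  · simp [isoCount_of_lt]
  · simp [isoCount_of_lt hj, isoCount_of_lt (hj.trans j.lt_succ_self)]

lemma isoCount_pos (hq : 1 < q) (hj : j ≤ s) : 0 < isoCount q n j s := by
  have hpow {i : ℕ} (hi : 1 ≤ i) : 0 < (q : ℝ) ^ i - 1 :=
    sub_pos.2 (one_lt_pow₀ (mod_cast hq) (by omega))
  rw [isoCount, if_pos hj]
  refine mul_pos (Finset.prod_pos fun i hi => ?_) (Finset.prod_pos fun i _ => by positivity)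
  have := (Finset.mem_Icc.1 hi).1
  exact div_pos (hpow (by omega)) (hpow this)

lemma isoCount_succ_mul_le (hq : 1 < q) (hs : s ≤ n) :
    isoCount q n (j + 1) s * (q : ℝ) ^ (2 * n - j) ≤ (q : ℝ) ^ s * isoCount q n j s := by
  rcases le_or_gt s j with hj | hj
  · rw [isoCount_of_lt (Nat.lt_succ_of_le hj), zero_mul]
    exact mul_nonneg (by positivity) (isoCount_nonneg hq.le)
  have hrec := isoCount_succ (j := j) hq hs
  have hq' : (1 : ℝ) < q := mod_cast hq
  have hlt : (q : ℝ) ^ j < (q : ℝ) ^ s := pow_lt_pow_right₀ hq' hj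
  have hle : (q : ℝ) ^ s ≤ (q : ℝ) ^ (2 * n - j) := pow_le_pow_right₀ hq'.le (by omega)
  have hnn : 0 ≤ isoCount q n (j + 1) s := isoCount_nonneg hq.le
  have hanti : isoCount q n (j + 1) s ≤ isoCount q n j s := by
    refine le_of_mul_le_mul_right ?_ (sub_pos.2 hlt)
    rw [hrec, mul_comm]
    exact mul_le_mul_of_nonneg_right (sub_le_sub_right hle _) hnn
  linarith [mul_le_mul_of_nonneg_left hanti (by positivity : (0 : ℝ) ≤ (q : ℝ) ^ j)]

lemma pow_mul_isoCount_one_le (hq : 1 < q) (hs : 1 ≤ s) (hn : s ≤ n) :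
    (q : ℝ) ^ (n - s) * isoCount q n 1 s ≤
      gaussq q n s * ∏ i ∈ Finset.Icc 1 (s - 1), ((q : ℝ) ^ (n - i) + 1) := by
  obtain ⟨k, rfl⟩ := Nat.exists_eq_add_of_le' hs
  obtain ⟨m, rfl⟩ := Nat.exists_eq_add_of_le hn
  have e1 : k + 1 + m = k + m + 1 := by omega
  have hpow : (0 : ℝ) < (q : ℝ) ^ (k + 1) - 1 :=
    sub_pos.2 (one_lt_pow₀ (mod_cast hq) k.succ_ne_zero)
  have hratio : (q : ℝ) ^ m ≤ ((q : ℝ) ^ (k + m + 1) - 1) / ((q : ℝ) ^ (k + 1) - 1) := by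
    rw [le_div_iff₀ hpow, mul_sub_one, ← pow_add, show m + (k + 1) = k + m + 1 by omega]
    exact sub_le_sub_left (one_le_pow₀ (mod_cast hq.le)) _
  have hcount : isoCount q (k + m + 1) 1 (k + 1) =
      gaussq q (k + m) k * ∏ i ∈ Finset.Icc 1 k, ((q : ℝ) ^ (k + m + 1 - i) + 1) := by
    simp [isoCount, PhiP]
  have hnn : 0 ≤ isoCount q (k + m + 1) 1 (k + 1) := isoCount_nonneg hq.le
  calc (q : ℝ) ^ (k + 1 + m - (k + 1)) * isoCount q (k + 1 + m) 1 (k + 1)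
      ≤ ((q : ℝ) ^ (k + m + 1) - 1) / ((q : ℝ) ^ (k + 1) - 1) *
          isoCount q (k + m + 1) 1 (k + 1) := by
        rw [Nat.add_sub_cancel_left, e1]
        exact mul_le_mul_of_nonneg_right hratio hnn
    _ = _ := by
        rw [hcount, e1, gaussq_succ_succ (Nat.le_add_right k m), Nat.add_sub_cancel]
        ring

end IsoCount

section Orthogonal

variable {F V : Type*} [Field F] [AddCommGroup V] [Module F V] {B : LinearMap.BilinForm F V}

lemma orthogonal_sup (S T : Submodule F V) :
    B.orthogonal (S ⊔ T) = B.orthogonal S ⊓ B.orthogonal T := by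
  refine le_antisymm (le_inf (B.orthogonal_le le_sup_left) (B.orthogonal_le le_sup_right)) ?_
  rintro v ⟨hS, hT⟩ w hw
  obtain ⟨a, ha, b, hb, rfl⟩ := Submodule.mem_sup.1 hw
  simpa using congrArg₂ (· + ·) (hS a ha) (hT b hb)

lemma mem_orthogonal_span_singleton {u v : V} : v ∈ B.orthogonal (F ∙ u) ↔ B u v = 0 := by
  rw [LinearMap.BilinForm.orthogonal_span_singleton_eq_toLin_ker, LinearMap.mem_ker]
  rfl

lemma le_orthogonal_comm (hB : B.IsRefl) {S T : Submodule F V} :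
    S ≤ B.orthogonal T ↔ T ≤ B.orthogonal S :=
  ⟨fun h v hv _ hw => hB _ _ (h hw v hv), fun h v hv _ hw => hB _ _ (h hw v hv)⟩

lemma le_orthogonal_span_singleton (hB : B.IsRefl) {S : Submodule F V} {v : V} :
    S ≤ B.orthogonal (F ∙ v) ↔ v ∈ B.orthogonal S := by
  rw [le_orthogonal_comm hB, Submodule.span_singleton_le_iff_mem]

lemma sup_le_orthogonal_sup (hB : B.IsRefl) {S T : Submodule F V} (hS : S ≤ B.orthogonal S)
    (hT : T ≤ B.orthogonal T) (hST : T ≤ B.orthogonal S) : S ⊔ T ≤ B.orthogonal (S ⊔ T) := by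
  rw [orthogonal_sup]
  exact sup_le (le_inf hS ((le_orthogonal_comm hB).1 hST)) (le_inf hST hT)

lemma span_singleton_le_orthogonal (hB : B.IsAlt) (v : V) :
    (F ∙ v) ≤ B.orthogonal (F ∙ v) := by
  rw [Submodule.span_singleton_le_iff_mem, mem_orthogonal_span_singleton]
  exact hB v

lemma finrank_span_pair [FiniteDimensional F V] {u v : V} (hu : u ≠ 0) (hv : v ∉ F ∙ u) :
    finrank F ((F ∙ u) ⊔ (F ∙ v) : Submodule F V) = 2 := by
  rw [Submodule.finrank_sup_span_singleton hv, finrank_span_singleton hu]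

/-- `B` is a symplectic form of rank `n`: the totally isotropic subspaces of `V`, encoded as the
subspaces `W` with `W ≤ B.orthogonal W`, form the symplectic polar space of rank `n`. -/
structure IsSymplectic (B : LinearMap.BilinForm F V) (n : ℕ) : Prop where
  isAlt : B.IsAlt
  nondegenerate : B.Nondegenerate
  finrank_eq : finrank F V = 2 * n

namespace IsSymplectic

variable {n : ℕ} (hB : IsSymplectic B n)
include hB

lemma isRefl : B.IsRefl := hB.isAlt.isRefl

lemma nontrivial (hn : 1 ≤ n) : Nontrivial V :=
  Module.nontrivial_of_finrank_pos (R := F) (by rw [hB.finrank_eq]; omega)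

lemma finrank_le [FiniteDimensional F V] (W : Submodule F V) : finrank F W ≤ 2 * n :=
  hB.finrank_eq ▸ W.finrank_le

lemma finrank_orthogonal [FiniteDimensional F V] (W : Submodule F V) :
    finrank F (B.orthogonal W) = 2 * n - finrank F W := by
  rw [LinearMap.BilinForm.finrank_orthogonal hB.nondegenerate, hB.finrank_eq]

lemma orthogonal_orthogonal [FiniteDimensional F V] (W : Submodule F V) :
    B.orthogonal (B.orthogonal W) = W :=
  LinearMap.BilinForm.orthogonal_orthogonal hB.nondegenerate hB.isRefl W

lemma finrank_le_of_isotropic [FiniteDimensional F V] {W : Submodule F V}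
    (hW : W ≤ B.orthogonal W) : finrank F W ≤ n := by
  have h := Submodule.finrank_mono hW
  rw [hB.finrank_orthogonal] at h
  omega

end IsSymplectic

end Orthogonal

section IsoSpaces

variable {F V : Type*} [Field F] [AddCommGroup V] [Module F V] [Finite V]
  {B : LinearMap.BilinForm F V} {s : ℕ}

/-- The totally isotropic `s`-spaces. -/
noncomputable def isoSpaces (B : LinearMap.BilinForm F V) (s : ℕ) : Finset (Submodule F V) :=
  (Set.toFinite {S : Submodule F V | S ≤ B.orthogonal S ∧ finrank F S = s}).toFinset

lemma mem_isoSpaces {S : Submodule F V} :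
    S ∈ isoSpaces B s ↔ S ≤ B.orthogonal S ∧ finrank F S = s := by simp [isoSpaces]

lemma isotropic_of_mem {A : Finset (Submodule F V)} (hA : A ⊆ isoSpaces B s) {S : Submodule F V}
    (hS : S ∈ A) : S ≤ B.orthogonal S := (mem_isoSpaces.1 (hA hS)).1

lemma finrank_of_mem {A : Finset (Submodule F V)} (hA : A ⊆ isoSpaces B s) {S : Submodule F V}
    (hS : S ∈ A) : finrank F S = s := (mem_isoSpaces.1 (hA hS)).2

end IsoSpaces

section Indicator

open scoped Matrix

variable {F V : Type*} [Field F] [AddCommGroup V] [Module F V]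

/-- The indicator function of a subspace. -/
noncomputable def ind (S : Submodule F V) (v : V) : ℝ := if v ∈ S then 1 else 0

lemma ind_of_mem {S : Submodule F V} {v : V} (h : v ∈ S) : ind S v = 1 := if_pos h

lemma ind_of_notMem {S : Submodule F V} {v : V} (h : v ∉ S) : ind S v = 0 := if_neg h

lemma ind_nonneg (S : Submodule F V) (v : V) : 0 ≤ ind S v := by
  unfold ind; split_ifs <;> norm_num

lemma ind_zero (S : Submodule F V) : ind S 0 = 1 := ind_of_mem S.zero_mem

lemma ind_smul (S : Submodule F V) {c : F} (hc : c ≠ 0) (v : V) : ind S (c • v) = ind S v := by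
  simp only [ind, S.smul_mem_iff hc]

lemma ind_mul (S T : Submodule F V) (v : V) : ind S v * ind T v = ind (S ⊓ T) v := by
  simp only [ind, Submodule.mem_inf, ite_and, ite_mul, one_mul, zero_mul]

/-- The number of members of the family `A` containing `v`, as a function of `v`. -/
noncomputable def pointDegree (A : Finset (Submodule F V)) : V → ℝ := ∑ S ∈ A, ind S

/-- The number of members of the family `A` orthogonal to `v`, as a function of `v`. -/
noncomputable def perpDegree (B : LinearMap.BilinForm F V) (A : Finset (Submodule F V)) : V → ℝ :=
  ∑ S ∈ A, ind (B.orthogonal S)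

lemma pointDegree_apply (A : Finset (Submodule F V)) (v : V) :
    pointDegree A v = ∑ S ∈ A, ind S v := Finset.sum_apply ..

lemma perpDegree_apply (B : LinearMap.BilinForm F V) (A : Finset (Submodule F V)) (v : V) :
    perpDegree B A v = ∑ S ∈ A, ind (B.orthogonal S) v := Finset.sum_apply ..

lemma pointDegree_eq_card (A : Finset (Submodule F V)) (v : V) :
    pointDegree A v = (A.filter (v ∈ ·)).card := by
  simp only [pointDegree_apply, ind, Finset.sum_boole]

lemma pointDegree_zero (A : Finset (Submodule F V)) : pointDegree A 0 = A.card := by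
  simp [pointDegree_eq_card]

lemma perpDegree_zero (B : LinearMap.BilinForm F V) (A : Finset (Submodule F V)) :
    perpDegree B A 0 = A.card := by
  simp [perpDegree_apply, ind_zero]

lemma pointDegree_smul (A : Finset (Submodule F V)) {c : F} (hc : c ≠ 0) (v : V) :
    pointDegree A (c • v) = pointDegree A v := by
  simp only [pointDegree_apply, ind_smul _ hc]

lemma pointDegree_filter_le (A : Finset (Submodule F V)) (R : Submodule F V) (v : V) :
    pointDegree (A.filter (R ≤ ·)) v = (A.filter (R ⊔ (F ∙ v) ≤ ·)).card := by
  simp only [pointDegree_eq_card, Finset.filter_filter, sup_le_iff,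
    Submodule.span_singleton_le_iff_mem]

variable [Fintype F] [Fintype V]

lemma sum_ind (S : Submodule F V) : ∑ v, ind S v = (Fintype.card F : ℝ) ^ finrank F S := by
  simp only [ind, Finset.sum_boole, ← Fintype.card_subtype, ← Nat.cast_pow]
  exact congrArg _ (Module.card_eq_pow_finrank (K := F) (V := S))

lemma ind_dotProduct_ind (S T : Submodule F V) :
    ind S ⬝ᵥ ind T = (Fintype.card F : ℝ) ^ finrank F (S ⊓ T : Submodule F V) := by
  simp only [dotProduct, ind_mul, sum_ind]

lemma sum_pointDegree {s : ℕ} {A : Finset (Submodule F V)} (hA : ∀ S ∈ A, finrank F S = s) :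
    ∑ v, pointDegree A v = A.card * (Fintype.card F : ℝ) ^ s := by
  simp_rw [pointDegree_apply]
  rw [Finset.sum_comm, Finset.sum_congr rfl fun S hS => (sum_ind S).trans (by rw [hA S hS])]
  simp

lemma sum_ind_dotProduct_sum_ind (A A' : Finset (Submodule F V))
    (f g : Submodule F V → Submodule F V) :
    (∑ S ∈ A, ind (f S)) ⬝ᵥ (∑ T ∈ A', ind (g T)) =
      ∑ S ∈ A, ∑ T ∈ A', (Fintype.card F : ℝ) ^ finrank F (f S ⊓ g T : Submodule F V) := by
  simp only [sum_dotProduct, dotProduct_sum, ind_dotProduct_ind]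
  exact Finset.sum_comm

lemma ind_orthogonal_sub_ind_dotProduct_pointDegree {B : LinearMap.BilinForm F V} {s : ℕ}
    {A : Finset (Submodule F V)} (hA : A ⊆ isoSpaces B s) {R : Submodule F V}
    (hR : ∀ S ∈ A, R ≤ S) :
    (ind (B.orthogonal R) - ind R) ⬝ᵥ pointDegree A =
      A.card * ((Fintype.card F : ℝ) ^ s - (Fintype.card F : ℝ) ^ finrank F R) := by
  rw [pointDegree, dotProduct_sum, ← nsmul_eq_mul, ← Finset.sum_const]
  refine Finset.sum_congr rfl fun S hS => ?_
  have hSR : S ≤ B.orthogonal R := (isotropic_of_mem hA hS).trans (B.orthogonal_le (hR S hS))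
  rw [sub_dotProduct, ind_dotProduct_ind, ind_dotProduct_ind, inf_eq_right.2 hSR,
    inf_eq_left.2 (hR S hS), finrank_of_mem hA hS]

end Indicator

section Counting

open scoped Matrix

variable {F V : Type*} [Field F] [Fintype F] [AddCommGroup V] [Module F V] [Finite V]
  {B : LinearMap.BilinForm F V} {n s : ℕ}

lemma card_filter_le_of_finrank_ge {R : Submodule F V} (hR : R ≤ B.orthogonal R)
    (h : s ≤ finrank F R) : (((isoSpaces B s).filter (R ≤ ·)).card : ℝ) =
      isoCount (Fintype.card F) n (finrank F R) s := by
  rcases h.eq_or_lt with rfl | hlt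
  · have : (isoSpaces B (finrank F R)).filter (R ≤ ·) = {R} := by
      ext S
      simp only [Finset.mem_filter, mem_isoSpaces, Finset.mem_singleton]
      exact ⟨fun ⟨⟨_, hS⟩, hRS⟩ => (Submodule.eq_of_le_of_finrank_eq hRS hS.symm).symm,
        by rintro rfl; exact ⟨⟨hR, rfl⟩, le_rfl⟩⟩
    simp [this, isoCount_self]
  · rw [isoCount_of_lt hlt, Nat.cast_eq_zero, Finset.card_eq_zero, Finset.filter_eq_empty_iff]
    intro S hS hRS
    have := Submodule.finrank_mono hRS
    have := (mem_isoSpaces.1 hS).2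
    omega

theorem card_filter_le_isoSpaces (hB : IsSymplectic B n) (hs : s ≤ n) {R : Submodule F V}
    (hR : R ≤ B.orthogonal R) : (((isoSpaces B s).filter (R ≤ ·)).card : ℝ) =
      isoCount (Fintype.card F) n (finrank F R) s := by
  cases nonempty_fintype V
  induction hk : s - finrank F R generalizing R with
  | zero => exact card_filter_le_of_finrank_ge hR (Nat.sub_eq_zero_iff_le.1 hk)
  | succ k ih =>
    have hext (v : V) : (ind (B.orthogonal R) - ind R) v *
        pointDegree ((isoSpaces B s).filter (R ≤ ·)) v = (ind (B.orthogonal R) - ind R) v *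
          isoCount (Fintype.card F) n (finrank F R + 1) s := by
      by_cases hvR : v ∈ R
      · simp [ind_of_mem hvR, ind_of_mem (hR hvR)]
      by_cases hv : v ∈ B.orthogonal R
      · have hfin := Submodule.finrank_sup_span_singleton hvR
        rw [pointDegree_filter_le, ih (sup_le_orthogonal_sup hB.isRefl hR
          (span_singleton_le_orthogonal hB.isAlt v)
          ((Submodule.span_singleton_le_iff_mem v _).2 hv)) (by omega), hfin]
      · simp [ind_of_notMem hvR, ind_of_notMem hv]
    have hcount := ind_orthogonal_sub_ind_dotProduct_pointDegree
      (Finset.filter_subset (R ≤ ·) (isoSpaces B s)) fun S hS => (Finset.mem_filter.1 hS).2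
    rw [dotProduct, Finset.sum_congr rfl fun v _ => hext v, ← Finset.sum_mul] at hcount
    simp only [Pi.sub_apply, Finset.sum_sub_distrib, sum_ind, hB.finrank_orthogonal] at hcount
    have hq : (1 : ℝ) < Fintype.card F := mod_cast Fintype.one_lt_card
    have hne : (Fintype.card F : ℝ) ^ s - (Fintype.card F : ℝ) ^ finrank F R ≠ 0 :=
      (sub_pos.2 (pow_lt_pow_right₀ hq (by omega))).ne'
    refine mul_right_cancel₀ hne ?_
    rw [← hcount, isoCount_succ Fintype.one_lt_card hs]

lemma pointDegree_filter_mem (hB : IsSymplectic B n) (hs : s ≤ n) {u : V} (hu : u ≠ 0) (v : V) :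
    pointDegree ((isoSpaces B s).filter (u ∈ ·)) v =
      isoCount (Fintype.card F) n 2 s * ind (B.orthogonal (F ∙ u)) v +
      (isoCount (Fintype.card F) n 1 s - isoCount (Fintype.card F) n 2 s) * ind (F ∙ u) v := by
  have hcard := pointDegree_filter_le (isoSpaces B s) (F ∙ u) v
  simp only [Submodule.span_singleton_le_iff_mem] at hcard
  have hiso := span_singleton_le_orthogonal hB.isAlt u
  rw [hcard]
  by_cases hvu : v ∈ F ∙ u
  · rw [sup_eq_left.2 ((Submodule.span_singleton_le_iff_mem v _).2 hvu),
      card_filter_le_isoSpaces hB hs hiso, finrank_span_singleton hu, ind_of_mem hvu,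
      ind_of_mem (hiso hvu)]
    ring
  by_cases hv : v ∈ B.orthogonal (F ∙ u)
  · rw [card_filter_le_isoSpaces hB hs (sup_le_orthogonal_sup hB.isRefl hiso
      (span_singleton_le_orthogonal hB.isAlt v) ((Submodule.span_singleton_le_iff_mem v _).2 hv)),
      finrank_span_pair hu hvu, ind_of_mem hv, ind_of_notMem hvu]
    ring
  · rw [Finset.filter_eq_empty_iff.2, ind_of_notMem hv, ind_of_notMem hvu]
    · simp
    · intro S hS hle
      obtain ⟨hSu, hSv⟩ := sup_le_iff.1 hle
      exact hv (B.orthogonal_le hSu ((mem_isoSpaces.1 hS).1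
        ((Submodule.span_singleton_le_iff_mem v S).1 hSv)))

end Counting

section Spectral

open scoped Matrix

variable {F V : Type*} [Field F] [AddCommGroup V] [Module F V] {B : LinearMap.BilinForm F V}

/-- `f` is a function on the points of the projective space of `V`, encoded as a function on the
vectors which is constant on punctured lines and vanishes at `0`. -/
structure IsPointFunction (F : Type*) {V : Type*} [Field F] [AddCommGroup V] [Module F V]
    (f : V → ℝ) : Prop where
  map_zero : f 0 = 0
  map_smul : ∀ c : F, c ≠ 0 → ∀ v, f (c • v) = f v

/-- The adjacency matrix of the orthogonality relation on vectors. -/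
noncomputable def orthMatrix (B : LinearMap.BilinForm F V) : Matrix V V ℝ :=
  Matrix.of fun u => ind (B.orthogonal (F ∙ u))

lemma orthMatrix_comm (hB : B.IsRefl) (u v : V) : orthMatrix B u v = orthMatrix B v u := by
  simp only [orthMatrix, Matrix.of_apply, ind, mem_orthogonal_span_singleton, hB.eq_iff]

lemma sum_ind_dotProduct_sq [Fintype V] (A : Finset (Submodule F V)) (f : V → ℝ) :
    ∑ S ∈ A, (ind S ⬝ᵥ f) ^ 2 = ∑ u, f u * (pointDegree (A.filter (u ∈ ·)) ⬝ᵥ f) := by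
  simp only [pointDegree, sum_dotProduct, Finset.sum_filter, Finset.mul_sum]
  rw [Finset.sum_comm]
  refine Finset.sum_congr rfl fun S _ => ?_
  rw [pow_two]
  nth_rewrite 1 [dotProduct]
  rw [Finset.sum_mul]
  refine Finset.sum_congr rfl fun u _ => ?_
  by_cases hu : u ∈ S
  · simp [hu, ind_of_mem hu]
  · simp [hu, ind_of_notMem hu]

variable [Fintype F] [Fintype V] {n s : ℕ}

lemma ind_span_singleton_dotProduct {f : V → ℝ} (hf : IsPointFunction F f) (u : V) :
    ind (F ∙ u) ⬝ᵥ f = ((Fintype.card F : ℝ) - 1) * f u := by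
  by_cases hu : u = 0
  · simp [hu, hf.map_zero, dotProduct, ind, Finset.sum_ite_eq']
  have hext (v : V) : ind (F ∙ u) v * f v = (ind (F ∙ u) v - ind (⊥ : Submodule F V) v) * f u := by
    by_cases hv : v ∈ F ∙ u
    · obtain ⟨c, rfl⟩ := Submodule.mem_span_singleton.1 hv
      by_cases hc : c = 0
      · simp [hc, ind_zero, hf.map_zero]
      · simp [hf.map_smul c hc, ind, hc, hu]
    · have hv0 : v ∉ (⊥ : Submodule F V) := fun h => hv (bot_le (a := F ∙ u) h)
      simp [ind_of_notMem hv, ind_of_notMem hv0]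
  simp only [dotProduct, hext, ← Finset.sum_mul, Finset.sum_sub_distrib, sum_ind,
    finrank_span_singleton hu, finrank_bot, pow_one, pow_zero]

lemma orthMatrix_mul_self_apply (hB : IsSymplectic B n) (hn : 1 ≤ n) {u : V} (hu : u ≠ 0)
    (v : V) : (orthMatrix B * orthMatrix B) u v =
      (Fintype.card F : ℝ) ^ (2 * n - 2) * (1 + ((Fintype.card F : ℝ) - 1) * ind (F ∙ u) v) := by
  have hsum : (orthMatrix B * orthMatrix B) u v =
      ind (B.orthogonal (F ∙ u)) ⬝ᵥ ind (B.orthogonal (F ∙ v)) := by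
    simp only [Matrix.mul_apply, orthMatrix_comm hB.isRefl _ v]
    rfl
  rw [hsum, ind_dotProduct_ind, ← orthogonal_sup, hB.finrank_orthogonal]
  by_cases h : v ∈ F ∙ u
  · rw [sup_eq_left.2 ((Submodule.span_singleton_le_iff_mem v _).2 h), finrank_span_singleton hu,
      ind_of_mem h, show 2 * n - 1 = 2 * n - 2 + 1 by omega, pow_succ]
    ring
  · rw [finrank_span_pair hu h, ind_of_notMem h]
    ring

lemma orthMatrix_mulVec_dotProduct_self (hB : IsSymplectic B n) (hn : 1 ≤ n) {f : V → ℝ}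
    (hf : IsPointFunction F f) (hsum : ∑ v, f v = 0) :
    (orthMatrix B *ᵥ f) ⬝ᵥ (orthMatrix B *ᵥ f) =
      ((Fintype.card F : ℝ) ^ (n - 1) * ((Fintype.card F : ℝ) - 1)) ^ 2 * (f ⬝ᵥ f) := by
  have hsymm : (orthMatrix B)ᵀ = orthMatrix B :=
    Matrix.ext fun u v => orthMatrix_comm hB.isRefl v u
  have hsq (u : V) (hu : u ≠ 0) : ((orthMatrix B * orthMatrix B) *ᵥ f) u =
      ((Fintype.card F : ℝ) ^ (n - 1) * ((Fintype.card F : ℝ) - 1)) ^ 2 * f u := by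
    have hext (v : V) : (orthMatrix B * orthMatrix B) u v * f v =
        (Fintype.card F : ℝ) ^ (2 * n - 2) *
          (f v + ((Fintype.card F : ℝ) - 1) * (ind (F ∙ u) v * f v)) := by
      rw [orthMatrix_mul_self_apply hB hn hu]; ring
    have hline := ind_span_singleton_dotProduct hf u
    simp only [dotProduct] at hline
    simp only [Matrix.mulVec, dotProduct, hext, ← Finset.mul_sum, Finset.sum_add_distrib, hsum,
      hline]
    rw [show 2 * n - 2 = (n - 1) * 2 by omega, pow_mul]
    ring
  rw [Matrix.dotProduct_mulVec, Matrix.vecMul_mulVec, hsymm, ← Matrix.dotProduct_mulVec,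
    dotProduct, dotProduct, Finset.mul_sum]
  refine Finset.sum_congr rfl fun u _ => ?_
  by_cases hu : u = 0
  · simp [hu, hf.map_zero]
  · rw [hsq u hu]; ring

lemma dotProduct_orthMatrix_mulVec_le (hB : IsSymplectic B n) (hn : 1 ≤ n) {f : V → ℝ}
    (hf : IsPointFunction F f) (hsum : ∑ v, f v = 0) :
    f ⬝ᵥ (orthMatrix B *ᵥ f) ≤
      (Fintype.card F : ℝ) ^ (n - 1) * ((Fintype.card F : ℝ) - 1) * (f ⬝ᵥ f) := by
  have hq : (1 : ℝ) ≤ Fintype.card F := mod_cast Fintype.card_pos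
  have hff : 0 ≤ f ⬝ᵥ f := Finset.sum_nonneg fun v _ => mul_self_nonneg (f v)
  have hcs := Finset.sum_mul_sq_le_sq_mul_sq Finset.univ f (orthMatrix B *ᵥ f)
  have hnorm := orthMatrix_mulVec_dotProduct_self hB hn hf hsum
  simp only [dotProduct, ← pow_two] at hnorm hff ⊢
  rw [hnorm] at hcs
  refine le_of_sq_le_sq ?_ (by have := sub_nonneg.2 hq; positivity)
  calc _ ≤ _ := hcs
    _ = _ := by ring

lemma sum_isoSpaces_ind_dotProduct_sq (hB : IsSymplectic B n) (hs : s ≤ n) {f : V → ℝ}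
    (hf : IsPointFunction F f) : ∑ S ∈ isoSpaces B s, (ind S ⬝ᵥ f) ^ 2 =
      isoCount (Fintype.card F) n 2 s * (f ⬝ᵥ (orthMatrix B *ᵥ f)) +
      (isoCount (Fintype.card F) n 1 s - isoCount (Fintype.card F) n 2 s) *
        (((Fintype.card F : ℝ) - 1) * (f ⬝ᵥ f)) := by
  rw [sum_ind_dotProduct_sq]
  have hsplit (a b c : ℝ) (g : V → ℝ) : a * (f ⬝ᵥ g) + b * (c * (f ⬝ᵥ f)) =
      ∑ u, (a * (f u * g u) + b * (c * (f u * f u))) := by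
    simp only [dotProduct, Finset.mul_sum, Finset.sum_add_distrib]
  rw [hsplit]
  refine Finset.sum_congr rfl fun u _ => ?_
  by_cases hu : u = 0
  · simp [hu, hf.map_zero]
  have hdeg : pointDegree ((isoSpaces B s).filter (u ∈ ·)) =
      isoCount (Fintype.card F) n 2 s • orthMatrix B u +
      (isoCount (Fintype.card F) n 1 s - isoCount (Fintype.card F) n 2 s) • ind (F ∙ u) :=
    funext fun v => pointDegree_filter_mem hB hs hu v
  rw [hdeg, add_dotProduct, smul_dotProduct, smul_dotProduct, ind_span_singleton_dotProduct hf]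
  simp only [smul_eq_mul, Matrix.mulVec]
  ring

end Spectral

section Centered

open scoped Matrix

variable {V : Type*} [AddCommGroup V] [Fintype V]

/-- The part of a function on the nonzero vectors orthogonal to the constants: the mean over
`v ≠ 0` is subtracted, and the value at `0` is set to `0`. -/
noncomputable def centered (f : V → ℝ) (v : V) : ℝ :=
  if v = 0 then 0 else f v - (∑ w, f w - f 0) / (Fintype.card V - 1)

lemma centered_zero (f : V → ℝ) : centered f 0 = 0 := if_pos rfl

lemma isPointFunction_centered {F : Type*} [Field F] [Module F V] {f : V → ℝ}
    (hf : ∀ c : F, c ≠ 0 → ∀ v, f (c • v) = f v) : IsPointFunction F (centered f) where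
  map_zero := centered_zero f
  map_smul c hc v := by simp [centered, hc, hf c hc]

lemma dotProduct_centered (f h : V → ℝ) : f ⬝ᵥ centered h =
    f ⬝ᵥ h - f 0 * h 0 - (∑ v, f v - f 0) * (∑ v, h v - h 0) / (Fintype.card V - 1) := by
  set c := (∑ w, h w - h 0) / (Fintype.card V - 1 : ℝ) with hc
  have hdecomp : centered h = h - c • 1 - (h 0 - c) • Pi.single 0 1 := by
    ext v
    by_cases hv : v = 0 <;> simp [centered, hv, hc]
  rw [hdecomp, dotProduct_sub, dotProduct_sub, dotProduct_smul, dotProduct_smul, dotProduct_one,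
    dotProduct_single_one, mul_div_assoc, ← hc, smul_eq_mul, smul_eq_mul]
  ring

variable [Nontrivial V]

lemma sum_centered (f : V → ℝ) : ∑ v, centered f v = 0 := by
  have hcard : (Fintype.card V : ℝ) - 1 ≠ 0 :=
    (sub_pos.2 (mod_cast Fintype.one_lt_card)).ne'
  have h := dotProduct_centered 1 f
  simp only [one_dotProduct, Pi.one_apply, Finset.sum_const, Finset.card_univ, nsmul_eq_mul,
    mul_one, one_mul] at h
  rw [h, mul_div_cancel_left₀ _ hcard]
  ring

lemma centered_dotProduct_centered (f h : V → ℝ) : centered f ⬝ᵥ centered h =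
    f ⬝ᵥ h - f 0 * h 0 - (∑ v, f v - f 0) * (∑ v, h v - h 0) / (Fintype.card V - 1) := by
  rw [dotProduct_comm, dotProduct_centered, sum_centered, centered_zero, dotProduct_comm,
    dotProduct_centered]
  ring

lemma centered_dotProduct_centered_eq (f h : V → ℝ) :
    centered f ⬝ᵥ centered h = f ⬝ᵥ centered h := by
  rw [centered_dotProduct_centered, dotProduct_centered]

end Centered

section Variance

open scoped Matrix

variable {F V : Type*} [Field F] [AddCommGroup V] [Module F V] [Fintype V]

/-- The squared norm of the centered degree function: `#(V \ {0})` times the variance of the number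
of members of `A` through a random point. -/
noncomputable def degreeVariance (A : Finset (Submodule F V)) : ℝ :=
  centered (pointDegree A) ⬝ᵥ centered (pointDegree A)

lemma degreeVariance_nonneg (A : Finset (Submodule F V)) : 0 ≤ degreeVariance A :=
  Finset.sum_nonneg fun v _ => mul_self_nonneg (centered (pointDegree A) v)

lemma isPointFunction_centered_pointDegree (A : Finset (Submodule F V)) :
    IsPointFunction F (centered (pointDegree A)) :=
  isPointFunction_centered fun _ hc v => pointDegree_smul A hc v

variable [Fintype F] {B : LinearMap.BilinForm F V} {n s : ℕ}

lemma IsSymplectic.card_eq (hB : IsSymplectic B n) :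
    (Fintype.card V : ℝ) = (Fintype.card F : ℝ) ^ (2 * n) := by
  rw [Module.card_eq_pow_finrank (K := F), hB.finrank_eq, Nat.cast_pow]

lemma sum_isoSpaces_ind_dotProduct_centered_sq_le (hB : IsSymplectic B n) (hs1 : 1 ≤ s)
    (hs : s ≤ n) (A : Finset (Submodule F V)) :
    ∑ S ∈ isoSpaces B s, (ind S ⬝ᵥ centered (pointDegree A)) ^ 2 ≤
      2 * ((Fintype.card F : ℝ) - 1) * isoCount (Fintype.card F) n 1 s * degreeVariance A := by
  have := hB.nontrivial (hs1.trans hs)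
  have hq : 1 < Fintype.card F := Fintype.one_lt_card
  have hq' : (1 : ℝ) < Fintype.card F := mod_cast hq
  have hf := isPointFunction_centered_pointDegree (F := F) A
  have hN2 : 0 ≤ isoCount (Fintype.card F) n 2 s := isoCount_nonneg hq.le
  have hstep : isoCount (Fintype.card F) n 2 s * (Fintype.card F : ℝ) ^ (n - 1) ≤
      isoCount (Fintype.card F) n 1 s := by
    have hpow : (Fintype.card F : ℝ) ^ s * (Fintype.card F : ℝ) ^ (n - 1) ≤
        (Fintype.card F : ℝ) ^ (2 * n - 1) := by
      rw [← pow_add]; exact pow_le_pow_right₀ hq'.le (by omega)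
    have hle := (mul_le_mul_of_nonneg_left hpow hN2).trans (isoCount_succ_mul_le hq hs)
    rw [mul_left_comm] at hle
    exact le_of_mul_le_mul_left hle (by positivity)
  have hquad := dotProduct_orthMatrix_mulVec_le hB (hs1.trans hs) hf (sum_centered _)
  rw [sum_isoSpaces_ind_dotProduct_sq hB hs hf, ← degreeVariance]
  rw [← degreeVariance] at hquad
  have hD : 0 ≤ ((Fintype.card F : ℝ) - 1) * degreeVariance A :=
    mul_nonneg (sub_nonneg.2 hq'.le) (degreeVariance_nonneg A)
  linarith [mul_le_mul_of_nonneg_left hquad hN2, mul_le_mul_of_nonneg_right hstep hD,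
    mul_nonneg hN2 hD]

theorem degreeVariance_le (hB : IsSymplectic B n) (hs1 : 1 ≤ s) (hs : s ≤ n)
    {A : Finset (Submodule F V)} (hA : A ⊆ isoSpaces B s) : degreeVariance A ≤
      2 * ((Fintype.card F : ℝ) - 1) * isoCount (Fintype.card F) n 1 s * A.card := by
  have := hB.nontrivial (hs1.trans hs)
  have hsum : degreeVariance A = ∑ S ∈ A, ind S ⬝ᵥ centered (pointDegree A) := by
    rw [degreeVariance, centered_dotProduct_centered_eq, ← sum_dotProduct, pointDegree]
  have hsq : degreeVariance A ^ 2 ≤ A.card *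
      (2 * ((Fintype.card F : ℝ) - 1) * isoCount (Fintype.card F) n 1 s * degreeVariance A) :=
    calc degreeVariance A ^ 2
        ≤ A.card * ∑ S ∈ A, (ind S ⬝ᵥ centered (pointDegree A)) ^ 2 :=
          hsum ▸ sq_sum_le_card_mul_sum_sq
      _ ≤ A.card * ∑ S ∈ isoSpaces B s, (ind S ⬝ᵥ centered (pointDegree A)) ^ 2 := by
          gcongr
      _ ≤ _ := by
          gcongr
          exact sum_isoSpaces_ind_dotProduct_centered_sq_le hB hs1 hs A
  rcases (degreeVariance_nonneg A).eq_or_lt with h0 | hpos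
  · rw [← h0]
    have hq : (1 : ℝ) ≤ Fintype.card F := mod_cast Fintype.card_pos
    have hN := isoCount_nonneg (n := n) (j := 1) (s := s) (Fintype.card_pos (α := F))
    exact mul_nonneg (mul_nonneg (by linarith) hN) (Nat.cast_nonneg _)
  · refine le_of_mul_le_mul_right ?_ hpos
    linarith

end Variance

section CrossEKR

open scoped Matrix

variable {F V : Type*} [Field F] [AddCommGroup V] [Module F V]

/-- No member of `A` is opposite to a member of `A'`; for `A = A'` this is the EKR condition. -/
def CrossEKR (B : LinearMap.BilinForm F V) (A A' : Set (Submodule F V)) : Prop :=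
  ∀ S ∈ A, ∀ T ∈ A', ¬Disjoint (B.orthogonal S) T

variable [Fintype F] [Fintype V] {B : LinearMap.BilinForm F V} {n s : ℕ}
  {A A' : Finset (Submodule F V)}

lemma CrossEKR.card_mul_le_dotProduct (h : CrossEKR B A A') :
    (Fintype.card F : ℝ) * A.card * A'.card ≤ perpDegree B A ⬝ᵥ pointDegree A' := by
  have hq : (1 : ℝ) ≤ Fintype.card F := mod_cast Fintype.card_pos
  have hconst : (Fintype.card F : ℝ) * A.card * A'.card =
      ∑ _ ∈ A, ∑ _ ∈ A', (Fintype.card F : ℝ) := by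
    simp only [Finset.sum_const, nsmul_eq_mul]; ring
  rw [hconst, perpDegree, pointDegree, sum_ind_dotProduct_sum_ind A A' B.orthogonal fun T => T]
  refine Finset.sum_le_sum fun S hS => Finset.sum_le_sum fun T hT => le_self_pow₀ hq fun h0 => ?_
  exact h S hS T hT (disjoint_iff.2 (Submodule.finrank_eq_zero.1 h0))

lemma sum_perpDegree (hB : IsSymplectic B n) (hA : A ⊆ isoSpaces B s) :
    ∑ v, perpDegree B A v = A.card * (Fintype.card F : ℝ) ^ (2 * n - s) := by
  simp_rw [perpDegree_apply]
  rw [Finset.sum_comm, Finset.sum_congr rfl fun S hS => (sum_ind (B.orthogonal S)).trans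
    (by rw [hB.finrank_orthogonal, finrank_of_mem hA hS])]
  simp

lemma perpDegree_dotProduct_self (hB : IsSymplectic B n) (hs : s ≤ n) (hA : A ⊆ isoSpaces B s) :
    perpDegree B A ⬝ᵥ perpDegree B A =
      (Fintype.card F : ℝ) ^ (2 * (n - s)) * (pointDegree A ⬝ᵥ pointDegree A) := by
  rw [perpDegree, pointDegree, sum_ind_dotProduct_sum_ind A A B.orthogonal B.orthogonal,
    sum_ind_dotProduct_sum_ind A A (fun S => S) fun T => T, Finset.mul_sum]
  refine Finset.sum_congr rfl fun S hS => ?_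
  rw [Finset.mul_sum]
  refine Finset.sum_congr rfl fun T hT => ?_
  have hdim := Submodule.finrank_sup_add_finrank_inf_eq S T
  have hle := hB.finrank_le (S ⊔ T)
  rw [finrank_of_mem hA hS, finrank_of_mem hA hT] at hdim
  rw [← orthogonal_sup, hB.finrank_orthogonal, ← pow_add]
  congr 1
  omega

lemma centered_perpDegree_dotProduct_self (hB : IsSymplectic B n) (hn : 1 ≤ n) (hs : s ≤ n)
    (hA : A ⊆ isoSpaces B s) : centered (perpDegree B A) ⬝ᵥ centered (perpDegree B A) =
      (Fintype.card F : ℝ) ^ (2 * (n - s)) * degreeVariance A := by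
  have := hB.nontrivial hn
  have hcard : (Fintype.card V : ℝ) - 1 ≠ 0 :=
    (sub_pos.2 (mod_cast Fintype.one_lt_card)).ne'
  have e1 : (Fintype.card F : ℝ) ^ (2 * n - s) =
      (Fintype.card F : ℝ) ^ s * (Fintype.card F : ℝ) ^ (2 * (n - s)) := by
    rw [← pow_add]; congr 1; omega
  have e2 : (Fintype.card V : ℝ) = (Fintype.card F : ℝ) ^ s * ((Fintype.card F : ℝ) ^ s *
      (Fintype.card F : ℝ) ^ (2 * (n - s))) := by
    rw [hB.card_eq, ← e1, ← pow_add]; congr 1; omega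
  rw [degreeVariance, centered_dotProduct_centered, centered_dotProduct_centered,
    perpDegree_dotProduct_self hB hs hA, sum_perpDegree hB hA,
    sum_pointDegree fun S hS => finrank_of_mem hA hS, perpDegree_zero, pointDegree_zero, e1]
  field_simp
  rw [e2]
  ring

lemma CrossEKR.le_centered_dotProduct (h : CrossEKR B A A') (hB : IsSymplectic B n) (hn : 1 ≤ n)
    (hs : s ≤ 2 * n) (hA : A ⊆ isoSpaces B s) (hA' : A' ⊆ isoSpaces B s) :
    ((Fintype.card F : ℝ) - 2) * A.card * A'.card ≤
      centered (perpDegree B A) ⬝ᵥ centered (pointDegree A') := by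
  have := hB.nontrivial hn
  have hq : (1 : ℝ) ≤ Fintype.card F := mod_cast Fintype.card_pos
  have hcard : 0 < (Fintype.card V : ℝ) - 1 := sub_pos.2 (mod_cast Fintype.one_lt_card)
  have e : (Fintype.card V : ℝ) =
      (Fintype.card F : ℝ) ^ (2 * n - s) * (Fintype.card F : ℝ) ^ s := by
    rw [hB.card_eq, ← pow_add]; congr 1; omega
  have hmean : ((Fintype.card F : ℝ) ^ (2 * n - s) - 1) * ((Fintype.card F : ℝ) ^ s - 1) /
      (Fintype.card V - 1) ≤ 1 := by
    rw [div_le_one hcard, e]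
    linarith [one_le_pow₀ hq (n := s), one_le_pow₀ hq (n := 2 * n - s)]
  rw [centered_dotProduct_centered, sum_perpDegree hB hA,
    sum_pointDegree fun S hS => finrank_of_mem hA' hS, perpDegree_zero, pointDegree_zero,
    ← mul_sub_one, ← mul_sub_one, mul_mul_mul_comm, mul_div_assoc]
  have haa : (0 : ℝ) ≤ A.card * A'.card := by positivity
  linarith [mul_le_mul_of_nonneg_left hmean haa, h.card_mul_le_dotProduct]

theorem CrossEKR.sq_card_mul_card_le (h : CrossEKR B A A') (hB : IsSymplectic B n) (hn : 1 ≤ n)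
    (hs : s ≤ n) (hA : A ⊆ isoSpaces B s) (hA' : A' ⊆ isoSpaces B s) :
    (((Fintype.card F : ℝ) - 2) * A.card * A'.card) ^ 2 ≤
      (Fintype.card F : ℝ) ^ (2 * (n - s)) * degreeVariance A * degreeVariance A' := by
  have hq : (2 : ℝ) ≤ Fintype.card F := mod_cast Fintype.one_lt_card (α := F)
  have hlow := h.le_centered_dotProduct hB hn (by omega) hA hA'
  have hcs := Finset.sum_mul_sq_le_sq_mul_sq Finset.univ (centered (perpDegree B A))
    (centered (pointDegree A'))
  have hnn : 0 ≤ ((Fintype.card F : ℝ) - 2) * A.card * A'.card := by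
    have := sub_nonneg.2 hq
    positivity
  rw [← centered_perpDegree_dotProduct_self hB hn hs hA, degreeVariance]
  refine (pow_le_pow_left₀ hnn hlow 2).trans ?_
  simpa only [dotProduct, ← pow_two] using hcs

end CrossEKR

section Residue

variable {F V : Type*} [Field F] [AddCommGroup V] [Module F V] [Finite V]
  {B : LinearMap.BilinForm F V} {n s : ℕ} {R R' S : Submodule F V}
  {A A' : Finset (Submodule F V)}

lemma IsSymplectic.orthogonal_sup_eq_top (hB : IsSymplectic B n)
    (hdim : finrank F R = finrank F R') (h : Disjoint (B.orthogonal R) R') :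
    B.orthogonal R ⊔ R' = ⊤ := by
  have hsum := Submodule.finrank_sup_add_finrank_inf_eq (B.orthogonal R) R'
  have := hB.finrank_le R
  rw [h.eq_bot, finrank_bot, hB.finrank_orthogonal] at hsum
  exact Submodule.eq_top_of_finrank_eq (by rw [hB.finrank_eq]; omega)

lemma IsSymplectic.disjoint_orthogonal_symm (hB : IsSymplectic B n)
    (hdim : finrank F R = finrank F R') (h : Disjoint (B.orthogonal R) R') :
    Disjoint (B.orthogonal R') R := by
  rw [disjoint_iff, inf_comm, ← hB.orthogonal_orthogonal R, ← orthogonal_sup,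
    hB.orthogonal_sup_eq_top hdim h]
  exact LinearMap.BilinForm.orthogonal_top_eq_bot hB.nondegenerate

lemma IsSymplectic.restrict_orthogonal_sup (hB : IsSymplectic B n) (hR : R ≤ B.orthogonal R)
    (hdim : finrank F R = finrank F R') (h : Disjoint (B.orthogonal R) R') :
    IsSymplectic (B.restrict (B.orthogonal (R ⊔ R'))) (n - finrank F R) where
  isAlt v := hB.isAlt v
  nondegenerate := by
    have hdisj : Disjoint (R ⊔ R') (B.orthogonal (R ⊔ R')) := by
      rw [disjoint_iff, orthogonal_sup, ← inf_assoc, sup_inf_assoc_of_le _ hR, inf_comm R',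
        h.eq_bot, sup_bot_eq, inf_comm]
      exact (hB.disjoint_orthogonal_symm hdim h).eq_bot
    refine LinearMap.BilinForm.nondegenerate_restrict_of_disjoint_orthogonal B hB.isRefl ?_
    rw [hB.orthogonal_orthogonal]
    exact hdisj.symm
  finrank_eq := by
    have hsum := Submodule.finrank_sup_add_finrank_inf_eq R R'
    rw [(h.mono_left hR).eq_bot, finrank_bot] at hsum
    rw [hB.finrank_orthogonal]
    omega

lemma sup_orthogonal_sup_inf_eq (hB : IsSymplectic B n) (hdim : finrank F R = finrank F R')
    (h : Disjoint (B.orthogonal R) R') (hS : S ≤ B.orthogonal S) (hRS : R ≤ S) :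
    R ⊔ B.orthogonal (R ⊔ R') ⊓ S = S := by
  have htop := hB.orthogonal_sup_eq_top hdim.symm (hB.disjoint_orthogonal_symm hdim h)
  have hSR : S ≤ B.orthogonal R := hS.trans (B.orthogonal_le hRS)
  rw [orthogonal_sup, inf_assoc, inf_left_comm, inf_eq_right.2 hSR, ← sup_inf_assoc_of_le _ hRS,
    sup_comm, htop, top_inf_eq]

lemma finrank_orthogonal_sup_inf (hB : IsSymplectic B n) (hdim : finrank F R = finrank F R')
    (h : Disjoint (B.orthogonal R) R') (hS : S ≤ B.orthogonal S) (hRS : R ≤ S) :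
    finrank F (B.orthogonal (R ⊔ R') ⊓ S : Submodule F V) = finrank F S - finrank F R := by
  have hsum := Submodule.finrank_sup_add_finrank_inf_eq R (B.orthogonal (R ⊔ R') ⊓ S)
  have hdisj : R ⊓ (B.orthogonal (R ⊔ R') ⊓ S) = ⊥ := by
    rw [eq_bot_iff, ← (hB.disjoint_orthogonal_symm hdim h).eq_bot, inf_comm]
    exact inf_le_inf_right R (inf_le_left.trans (B.orthogonal_le le_sup_right))
  rw [sup_orthogonal_sup_inf_eq hB hdim h hS hRS, hdisj, finrank_bot] at hsum
  omega

/-- The traces on `W` of the members of `A` containing `R`, as subspaces of `W`. -/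
noncomputable def traces (R W : Submodule F V) (A : Finset (Submodule F V)) :
    Finset (Submodule F W) :=
  (A.filter (R ≤ ·)).image (Submodule.comap W.subtype)

lemma card_traces (hB : IsSymplectic B n) (hdim : finrank F R = finrank F R')
    (h : Disjoint (B.orthogonal R) R') (hA : A ⊆ isoSpaces B s) :
    (traces R (B.orthogonal (R ⊔ R')) A).card = (A.filter (R ≤ ·)).card := by
  refine Finset.card_image_of_injOn fun S hS T hT hST => ?_
  obtain ⟨hSA, hRS⟩ := Finset.mem_filter.1 hS
  obtain ⟨hTA, hRT⟩ := Finset.mem_filter.1 hT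
  rw [← sup_orthogonal_sup_inf_eq hB hdim h (isotropic_of_mem hA hSA) hRS,
    ← sup_orthogonal_sup_inf_eq hB hdim h (isotropic_of_mem hA hTA) hRT,
    ← Submodule.map_comap_subtype, ← Submodule.map_comap_subtype, hST]

lemma traces_subset_isoSpaces (hB : IsSymplectic B n) (hdim : finrank F R = finrank F R')
    (h : Disjoint (B.orthogonal R) R') (hA : A ⊆ isoSpaces B s) :
    traces R (B.orthogonal (R ⊔ R')) A ⊆
      isoSpaces (B.restrict (B.orthogonal (R ⊔ R'))) (s - finrank F R) := by
  refine Finset.image_subset_iff.2 fun S hS => mem_isoSpaces.2 ?_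
  obtain ⟨hSA, hRS⟩ := Finset.mem_filter.1 hS
  have hSS := isotropic_of_mem hA hSA
  refine ⟨fun v hv w hw => hSS hv w hw, ?_⟩
  rw [← finrank_of_mem hA hSA, ← finrank_orthogonal_sup_inf hB hdim h hSS hRS,
    ← Submodule.map_comap_subtype, Submodule.finrank_map_subtype_eq]

lemma CrossEKR.traces (h : CrossEKR B A A') (hA' : A' ⊆ isoSpaces B s) :
    CrossEKR (B.restrict (B.orthogonal (R ⊔ R')))
      (traces R (B.orthogonal (R ⊔ R')) A : Set _)
      (traces R' (B.orthogonal (R ⊔ R')) A' : Set _) := by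
  intro S₀ hS₀ T₀ hT₀ hdisj
  obtain ⟨S, hS, rfl⟩ := Finset.mem_image.1 hS₀
  obtain ⟨T, hT, rfl⟩ := Finset.mem_image.1 hT₀
  obtain ⟨hSA, hRS⟩ := Finset.mem_filter.1 hS
  obtain ⟨hTA', hRT⟩ := Finset.mem_filter.1 hT
  refine h S hSA T hTA' (Submodule.disjoint_def.2 fun v hvS hvT => ?_)
  have hvW : v ∈ B.orthogonal (R ⊔ R') := by
    rw [orthogonal_sup]
    exact ⟨B.orthogonal_le hRS hvS, B.orthogonal_le hRT (isotropic_of_mem hA' hTA' hvT)⟩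
  exact congrArg Subtype.val
    (Submodule.disjoint_def.1 hdisj ⟨v, hvW⟩ (fun w hw => hvS w hw) hvT)

variable [Fintype F]

theorem CrossEKR.card_mul_card_le (h : CrossEKR B A A') (hB : IsSymplectic B n) (hs1 : 1 ≤ s)
    (hs : s ≤ n) (hq : 3 ≤ Fintype.card F) (hA : A ⊆ isoSpaces B s) (hA' : A' ⊆ isoSpaces B s) :
    (A.card : ℝ) * A'.card ≤
      (4 * (Fintype.card F : ℝ) ^ (n - s) * isoCount (Fintype.card F) n 1 s) ^ 2 := by
  cases nonempty_fintype V
  have hsq := h.sq_card_mul_card_le hB (hs1.trans hs) hs hA hA'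
  have hD := degreeVariance_le hB hs1 hs hA
  have hD' := degreeVariance_le hB hs1 hs hA'
  have hq' : (3 : ℝ) ≤ Fintype.card F := mod_cast hq
  set q : ℝ := (Fintype.card F : ℝ)
  set N := isoCount (Fintype.card F) n 1 s
  have hN : 0 ≤ N := isoCount_nonneg Fintype.card_pos
  set x : ℝ := A.card * A'.card
  have hx : 0 ≤ x := by positivity
  have hbound : (q - 2) ^ 2 * x ^ 2 ≤ (q - 2) ^ 2 * ((4 * q ^ (n - s) * N) ^ 2 * x) :=
    calc (q - 2) ^ 2 * x ^ 2 = ((q - 2) * A.card * A'.card) ^ 2 := by ring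
      _ ≤ q ^ (2 * (n - s)) * degreeVariance A * degreeVariance A' := hsq
      _ ≤ q ^ (2 * (n - s)) * (2 * (q - 1) * N * A.card) * (2 * (q - 1) * N * A'.card) := by
          have : 0 ≤ q - 1 := by linarith
          have := degreeVariance_nonneg A'
          gcongr
      _ = (q - 1) ^ 2 * ((2 * q ^ (n - s) * N) ^ 2 * x) := by ring
      _ ≤ (2 * (q - 2)) ^ 2 * ((2 * q ^ (n - s) * N) ^ 2 * x) := by
          gcongr <;> linarith
      _ = _ := by ring
  have hcancel := le_of_mul_le_mul_left hbound (by have : 0 < q - 2 := by linarith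
                                                   positivity)
  rcases hx.eq_or_lt with h0 | hpos
  · rw [← h0]; positivity
  · refine le_of_mul_le_mul_right ?_ hpos
    rwa [← pow_two]

theorem CrossEKR.card_filter_mul_card_filter_le (h : CrossEKR B A A') (hB : IsSymplectic B n)
    (hs : s ≤ n) (hq : 3 ≤ Fintype.card F) (hA : A ⊆ isoSpaces B s) (hA' : A' ⊆ isoSpaces B s)
    (hR : R ≤ B.orthogonal R) (hRs : finrank F R < s) (hdim : finrank F R = finrank F R')
    (hopp : Disjoint (B.orthogonal R) R') :
    ((A.filter (R ≤ ·)).card : ℝ) * (A'.filter (R' ≤ ·)).card ≤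
      (4 * (Fintype.card F : ℝ) ^ (n - s) *
        isoCount (Fintype.card F) n (finrank F R + 1) s) ^ 2 := by
  have hopp' := hB.disjoint_orthogonal_symm hdim hopp
  have hcard' := card_traces hB hdim.symm hopp' hA'
  have hsub' := traces_subset_isoSpaces hB hdim.symm hopp' hA'
  rw [sup_comm R'] at hcard' hsub'
  have key := (h.traces hA').card_mul_card_le (hB.restrict_orthogonal_sup hR hdim hopp)
    (by omega) (by omega) hq (traces_subset_isoSpaces hB hdim hopp hA) (hdim ▸ hsub')
  rwa [card_traces hB hdim hopp hA, hcard', isoCount_sub_sub hRs.le,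
    show n - finrank F R - (s - finrank F R) = n - s by omega] at key

end Residue

section Pigeonhole

open scoped Matrix

variable {F V : Type*} [Field F] [AddCommGroup V] [Module F V]
  {B : LinearMap.BilinForm F V} {n s : ℕ} {A : Finset (Submodule F V)} {u v : V}

lemma ind_orthogonal_span_singleton (v z : V) :
    ind (B.orthogonal (F ∙ v)) z = if B v z = 0 then 1 else 0 := by
  simp only [ind, mem_orthogonal_span_singleton]

lemma finrank_inf_orthogonal_span_singleton [FiniteDimensional F V] (hB : IsSymplectic B n)
    {S : Submodule F V} (hv : v ∉ B.orthogonal S) :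
    finrank F (S ⊓ B.orthogonal (F ∙ v) : Submodule F V) = finrank F S - 1 := by
  have hdim := Submodule.finrank_sup_span_singleton hv
  have hinf := hB.finrank_orthogonal (B.orthogonal S ⊔ F ∙ v)
  rw [orthogonal_sup, hB.orthogonal_orthogonal, hdim, hB.finrank_orthogonal] at hinf
  have hS := hB.finrank_le S
  omega

variable [Fintype F]

lemma ind_orthogonal_dotProduct_pointDegree [Fintype V] (hB : IsSymplectic B n) (hs1 : 1 ≤ s)
    (hA : A ⊆ isoSpaces B s) (v : V) : ind (B.orthogonal (F ∙ v)) ⬝ᵥ pointDegree A =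
      (Fintype.card F : ℝ) ^ (s - 1) *
        (A.card + ((Fintype.card F : ℝ) - 1) * perpDegree B A v) := by
  have hcard : (A.card : ℝ) = ∑ S ∈ A, 1 := by simp
  rw [pointDegree, dotProduct_sum, perpDegree_apply, hcard, Finset.mul_sum,
    ← Finset.sum_add_distrib, Finset.mul_sum]
  refine Finset.sum_congr rfl fun S hS => ?_
  have hS' := finrank_of_mem hA hS
  rw [dotProduct_comm, ind_dotProduct_ind]
  by_cases hv : v ∈ B.orthogonal S
  · rw [inf_eq_left.2 ((le_orthogonal_span_singleton hB.isRefl).2 hv), hS', ind_of_mem hv,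
      mul_one, add_sub_cancel, ← pow_succ, Nat.sub_add_cancel hs1]
  · rw [finrank_inf_orthogonal_span_singleton hB hv, hS', ind_of_notMem hv, mul_zero, add_zero,
      mul_one]

lemma perpDegree_filter_mem_mul [Finite V] (hB : IsSymplectic B n) (hs1 : 1 ≤ s) (hs : s ≤ n)
    (hu : u ≠ 0) (hv : v ∉ F ∙ u) (huv : B u v = 0) :
    perpDegree B ((isoSpaces B s).filter (u ∈ ·)) v * (Fintype.card F : ℝ) ^ (s - 1) =
      isoCount (Fintype.card F) n 1 s - isoCount (Fintype.card F) n 2 s := by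
  cases nonempty_fintype V
  have hperp := ind_orthogonal_dotProduct_pointDegree hB hs1
    (Finset.filter_subset (u ∈ ·) (isoSpaces B s)) v
  have hline : (F ∙ u) ≤ B.orthogonal (F ∙ v) := by
    rw [Submodule.span_singleton_le_iff_mem, mem_orthogonal_span_singleton]
    exact hB.isRefl _ _ huv
  have hdeg : pointDegree ((isoSpaces B s).filter (u ∈ ·)) =
      isoCount (Fintype.card F) n 2 s • ind (B.orthogonal (F ∙ u)) +
      (isoCount (Fintype.card F) n 1 s - isoCount (Fintype.card F) n 2 s) • ind (F ∙ u) :=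
    funext fun v => pointDegree_filter_mem hB hs hu v
  have hcard : (((isoSpaces B s).filter (u ∈ ·)).card : ℝ) = isoCount (Fintype.card F) n 1 s := by
    rw [← finrank_span_singleton (K := F) hu,
      ← card_filter_le_isoSpaces hB hs (span_singleton_le_orthogonal hB.isAlt u)]
    simp only [Submodule.span_singleton_le_iff_mem]
  have hrec := isoCount_succ (q := Fintype.card F) (n := n) (j := 1) Fintype.one_lt_card hs
  rw [hdeg, dotProduct_add, dotProduct_smul, dotProduct_smul, ind_dotProduct_ind,
    ind_dotProduct_ind, inf_eq_right.2 hline, inf_comm, ← orthogonal_sup,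
    hB.finrank_orthogonal, finrank_span_pair hu hv, finrank_span_singleton hu, hcard,
    smul_eq_mul, smul_eq_mul] at hperp
  have hq : (1 : ℝ) < Fintype.card F := mod_cast Fintype.one_lt_card
  have hpow_n := mul_pow_sub_one (show 2 * n - 1 ≠ 0 by omega) (Fintype.card F : ℝ)
  have hpow_s := mul_pow_sub_one (show s ≠ 0 by omega) (Fintype.card F : ℝ)
  rw [Nat.sub_sub] at hpow_n
  rw [← hpow_n, ← hpow_s, pow_one] at hrec
  rw [pow_one] at hperp
  refine mul_left_cancel₀ (mul_pos (zero_lt_one.trans hq) (sub_pos.2 hq)).ne' ?_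
  linear_combination (-(Fintype.card F : ℝ)) * hperp - hrec

lemma sum_pointDegree_apply_eq_zero_and_ne [Fintype V] (hB : IsSymplectic B n) (hs1 : 1 ≤ s)
    (hA : A ⊆ isoSpaces B s) (hu : ∀ S ∈ A, u ∈ S) (v : V) :
    ∑ z with B u z = 0 ∧ B v z ≠ 0, pointDegree A z =
      ((Fintype.card F : ℝ) - 1) * (Fintype.card F : ℝ) ^ (s - 1) *
        (A.card - perpDegree B A v) := by
  have hsupp {z : V} (huz : B u z ≠ 0) : pointDegree A z = 0 := by
    rw [pointDegree_apply]
    exact Finset.sum_eq_zero fun S hS => ind_of_notMem fun hz =>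
      huz (isotropic_of_mem hA hS hz u (hu S hS))
  have hcompl : ∑ z with B u z = 0 ∧ B v z ≠ 0, pointDegree A z =
      ∑ z, pointDegree A z - ind (B.orthogonal (F ∙ v)) ⬝ᵥ pointDegree A := by
    rw [dotProduct, ← Finset.sum_sub_distrib, Finset.sum_filter]
    refine Finset.sum_congr rfl fun z _ => ?_
    by_cases huz : B u z = 0 <;> by_cases hvz : B v z = 0 <;>
      simp [huz, hvz, ind_orthogonal_span_singleton, hsupp]
  rw [hcompl, sum_pointDegree fun S => finrank_of_mem hA,
    ind_orthogonal_dotProduct_pointDegree hB hs1 hA,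
    ← mul_pow_sub_one (show s ≠ 0 by omega) (Fintype.card F : ℝ)]
  ring

lemma card_filter_apply_eq_zero_and_ne [Fintype V] (hB : IsSymplectic B n) (hu : u ≠ 0)
    (hv : v ∉ F ∙ u) :
    ((Finset.univ.filter fun z => B u z = 0 ∧ B v z ≠ 0).card : ℝ) =
      ((Fintype.card F : ℝ) - 1) * (Fintype.card F : ℝ) ^ (2 * n - 2) := by
  have hle := hB.finrank_le ((F ∙ u) ⊔ (F ∙ v))
  rw [finrank_span_pair hu hv] at hle
  have hcompl : ((Finset.univ.filter fun z => B u z = 0 ∧ B v z ≠ 0).card : ℝ) =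
      ∑ z, ind (B.orthogonal (F ∙ u)) z - ∑ z, ind (B.orthogonal ((F ∙ u) ⊔ (F ∙ v))) z := by
    rw [← Finset.sum_sub_distrib, ← Finset.sum_boole]
    refine Finset.sum_congr rfl fun z _ => ?_
    by_cases huz : B u z = 0 <;> by_cases hvz : B v z = 0 <;>
      simp [huz, hvz, orthogonal_sup, ← ind_mul, ind_orthogonal_span_singleton]
  rw [hcompl, sum_ind, sum_ind, hB.finrank_orthogonal, hB.finrank_orthogonal,
    finrank_span_pair hu hv, finrank_span_singleton hu,
    ← mul_pow_sub_one (show 2 * n - 1 ≠ 0 by omega) (Fintype.card F : ℝ), Nat.sub_sub]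
  ring

lemma two_mul_perpDegree_filter_mem_le [Finite V] (hB : IsSymplectic B n) (hs1 : 1 ≤ s)
    (hs : s ≤ n) (hA : A ⊆ isoSpaces B s) (hu : u ≠ 0) (hv : v ∉ F ∙ u) (huv : B u v = 0)
    (hdeg : 2 * isoCount (Fintype.card F) n 1 s ≤
      pointDegree A u * (Fintype.card F : ℝ) ^ (s - 1)) :
    2 * perpDegree B (A.filter (u ∈ ·)) v ≤ pointDegree A u := by
  have hmono : perpDegree B (A.filter (u ∈ ·)) v ≤
      perpDegree B ((isoSpaces B s).filter (u ∈ ·)) v := by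
    simp only [perpDegree_apply]
    exact Finset.sum_le_sum_of_subset_of_nonneg (Finset.filter_subset_filter _ hA)
      fun S _ _ => ind_nonneg _ v
  have hΩ := perpDegree_filter_mem_mul hB hs1 hs hu hv huv
  have hN2 := isoCount_nonneg (q := Fintype.card F) (n := n) (j := 2) (s := s) Fintype.card_pos
  have hZ : (0 : ℝ) < (Fintype.card F : ℝ) ^ (s - 1) := by positivity
  refine le_of_mul_le_mul_right ?_ hZ
  linarith [mul_le_mul_of_nonneg_right hmono hZ.le]

theorem exists_pointDegree_le_card_filter_span_pair [Finite V] (hB : IsSymplectic B n)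
    (hs1 : 1 ≤ s) (hs : s ≤ n) (hA : A ⊆ isoSpaces B s) (hu : u ≠ 0) (hv : v ∉ F ∙ u)
    (huv : B u v = 0) (hdeg : 2 * isoCount (Fintype.card F) n 1 s ≤
      pointDegree A u * (Fintype.card F : ℝ) ^ (s - 1)) :
    ∃ z, B u z = 0 ∧ B v z ≠ 0 ∧ pointDegree A u ≤
      2 * ((Fintype.card F : ℝ) ^ (2 * (n - s)) * (Fintype.card F : ℝ) ^ (s - 1)) *
        (A.filter ((F ∙ u) ⊔ (F ∙ z) ≤ ·)).card := by
  cases nonempty_fintype V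
  have hq : (0 : ℝ) < (Fintype.card F : ℝ) - 1 := sub_pos.2 (mod_cast Fintype.one_lt_card)
  set Y : Finset V := Finset.univ.filter fun z => B u z = 0 ∧ B v z ≠ 0
  have hYcard : (Y.card : ℝ) = ((Fintype.card F : ℝ) - 1) *
      ((Fintype.card F : ℝ) ^ (2 * (n - s)) * (Fintype.card F : ℝ) ^ (s - 1) *
        (Fintype.card F : ℝ) ^ (s - 1)) := by
    rw [card_filter_apply_eq_zero_and_ne hB hu hv, ← pow_add, ← pow_add]
    congr 2; omega
  have hYne : Y.Nonempty := by
    rw [← Finset.card_pos, ← Nat.cast_pos (α := ℝ), hYcard]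
    positivity
  have hperp := two_mul_perpDegree_filter_mem_le hB hs1 hs hA hu hv huv hdeg
  have hsum := sum_pointDegree_apply_eq_zero_and_ne hB hs1
    ((Finset.filter_subset (u ∈ ·) A).trans hA) (fun S hS => (Finset.mem_filter.1 hS).2) v
  rw [← pointDegree_eq_card] at hsum
  have havg : ∑ _z ∈ Y, pointDegree A u ≤ ∑ z ∈ Y, 2 * ((Fintype.card F : ℝ) ^ (2 * (n - s)) *
      (Fintype.card F : ℝ) ^ (s - 1)) * pointDegree (A.filter (u ∈ ·)) z := by
    rw [Finset.sum_const, nsmul_eq_mul, ← Finset.mul_sum, hsum, hYcard]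
    have hc : 0 ≤ ((Fintype.card F : ℝ) - 1) * ((Fintype.card F : ℝ) ^ (2 * (n - s)) *
        (Fintype.card F : ℝ) ^ (s - 1) * (Fintype.card F : ℝ) ^ (s - 1)) := by positivity
    linarith [mul_le_mul_of_nonneg_left hperp hc]
  obtain ⟨z, hz, hle⟩ := Finset.exists_le_of_sum_le hYne havg
  obtain ⟨huz, hvz⟩ := (Finset.mem_filter.1 hz).2
  refine ⟨z, huz, hvz, ?_⟩
  rw [← pointDegree_filter_le]
  simpa only [Submodule.span_singleton_le_iff_mem] using hle

end Pigeonhole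

section Opposite

variable {F V : Type*} [Field F] [AddCommGroup V] [Module F V] {B : LinearMap.BilinForm F V}

lemma disjoint_orthogonal_span_singleton {u v : V} (huv : B u v ≠ 0) :
    Disjoint (B.orthogonal (F ∙ u)) (F ∙ v) := by
  rw [Submodule.disjoint_def]
  intro x hx hxv
  obtain ⟨c, rfl⟩ := Submodule.mem_span_singleton.1 hxv
  have hc : c = 0 := by simpa [huv] using mem_orthogonal_span_singleton.1 hx
  rw [hc, zero_smul]

lemma disjoint_orthogonal_span_pair {u z v w : V} (huv : B u v = 0) (huw : B u w ≠ 0)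
    (hzv : B z v ≠ 0) : Disjoint (B.orthogonal ((F ∙ u) ⊔ (F ∙ z))) ((F ∙ v) ⊔ (F ∙ w)) := by
  rw [Submodule.disjoint_def, orthogonal_sup, ← Submodule.span_insert]
  rintro x ⟨hxu, hxz⟩ hx
  obtain ⟨c, d, rfl⟩ := Submodule.mem_span_pair.1 hx
  have hd : d = 0 := by simpa [huv, huw] using mem_orthogonal_span_singleton.1 hxu
  have hc : c = 0 := by simpa [hd, hzv] using mem_orthogonal_span_singleton.1 hxz
  simp [hc, hd]

lemma notMem_span_singleton_of_apply {u v w : V} (huv : B v u = 0) (hw : B v w ≠ 0) :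
    w ∉ F ∙ u := by
  intro hmem
  obtain ⟨c, rfl⟩ := Submodule.mem_span_singleton.1 hmem
  simp [huv] at hw

end Opposite

section IsoCountBounds

variable {q n j s : ℕ}

lemma isoCount_succ_mul_pow_le (hq : 1 < q) (hj : j ≤ s) (hs : s ≤ n) :
    isoCount q n (j + 1) s * (q : ℝ) ^ (2 * (n - s) + (s - j)) ≤ isoCount q n j s := by
  have hpow : (q : ℝ) ^ (2 * n - j) = (q : ℝ) ^ s * (q : ℝ) ^ (2 * (n - s) + (s - j)) := by
    rw [← pow_add]; congr 1; omega
  have hle := isoCount_succ_mul_le (j := j) hq hs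
  rw [hpow, mul_left_comm] at hle
  exact le_of_mul_le_mul_left hle (by positivity)

lemma pow_mul_isoCount_two_le (hq : 1 < q) (hs1 : 1 ≤ s) (hs : s ≤ n) :
    (q : ℝ) ^ (n - s) * isoCount q n 2 s ≤
      isoCount q n 1 s / ((q : ℝ) ^ (n - s) * (q : ℝ) ^ (s - 1)) := by
  have hle := isoCount_succ_mul_pow_le hq hs1 hs
  rw [le_div_iff₀ (by positivity)]
  refine le_of_eq_of_le ?_ hle
  ring

lemma pow_mul_isoCount_three_le (hq : 1 < q) (hs2 : 2 ≤ s) (hs : s < n) :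
    (q : ℝ) ^ (3 * (n - s)) * (q : ℝ) ^ (s - 1) * isoCount q n 3 s ≤
      isoCount q n 1 s / (q : ℝ) ^ (s - 1) := by
  have h2 := isoCount_succ_mul_pow_le hq (by omega : 1 ≤ s) hs.le
  have h3 := isoCount_succ_mul_pow_le hq hs2 hs.le
  have hnn : 0 ≤ isoCount q n 3 s := isoCount_nonneg hq.le
  rw [le_div_iff₀ (by positivity)]
  calc (q : ℝ) ^ (3 * (n - s)) * (q : ℝ) ^ (s - 1) * isoCount q n 3 s * (q : ℝ) ^ (s - 1)
      = isoCount q n 3 s * (q : ℝ) ^ (3 * (n - s) + (s - 1) + (s - 1)) := by ring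
    _ ≤ isoCount q n 3 s *
          (q : ℝ) ^ (2 * (n - s) + (s - 2) + (2 * (n - s) + (s - 1))) := by
        exact mul_le_mul_of_nonneg_left
          (pow_le_pow_right₀ (mod_cast hq.le) (by omega)) hnn
    _ = isoCount q n 3 s * (q : ℝ) ^ (2 * (n - s) + (s - 2)) *
          (q : ℝ) ^ (2 * (n - s) + (s - 1)) := by ring
    _ ≤ isoCount q n 2 s * (q : ℝ) ^ (2 * (n - s) + (s - 1)) := by gcongr
    _ ≤ isoCount q n 1 s := h2

end IsoCountBounds

section DegreeProducts

variable {F V : Type*} [Field F] [Fintype F] [AddCommGroup V] [Module F V] [Finite V]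
  {B : LinearMap.BilinForm F V} {n s : ℕ} {A A' : Finset (Submodule F V)} {u v : V}

theorem CrossEKR.pointDegree_mul_pointDegree_le_of_apply_ne_zero (h : CrossEKR B A A')
    (hB : IsSymplectic B n) (hs2 : 2 ≤ s) (hs : s ≤ n) (hq : 3 ≤ Fintype.card F)
    (hA : A ⊆ isoSpaces B s) (hA' : A' ⊆ isoSpaces B s) (huv : B u v ≠ 0) :
    pointDegree A u * pointDegree A' v ≤
      (4 * (isoCount (Fintype.card F) n 1 s /
        ((Fintype.card F : ℝ) ^ (n - s) * (Fintype.card F : ℝ) ^ (s - 1)))) ^ 2 := by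
  have hu : u ≠ 0 := by rintro rfl; simp at huv
  have hv : v ≠ 0 := by rintro rfl; simp at huv
  have hu1 := finrank_span_singleton (K := F) hu
  have hv1 := finrank_span_singleton (K := F) hv
  have key := h.card_filter_mul_card_filter_le hB hs hq hA hA'
    (span_singleton_le_orthogonal hB.isAlt u) (by omega) (hu1.trans hv1.symm)
    (disjoint_orthogonal_span_singleton huv)
  simp only [Submodule.span_singleton_le_iff_mem, ← pointDegree_eq_card, hu1] at key
  have hN2 := isoCount_nonneg (n := n) (j := 2) (s := s) (Fintype.card_pos (α := F))
  refine key.trans (pow_le_pow_left₀ (by positivity) ?_ 2)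
  rw [mul_assoc]
  gcongr
  exact pow_mul_isoCount_two_le Fintype.one_lt_card (by omega) hs

theorem CrossEKR.pointDegree_mul_pointDegree_le_of_apply_eq_zero (h : CrossEKR B A A')
    (hB : IsSymplectic B n) (hs2 : 2 < s) (hs : s < n) (hq : 3 ≤ Fintype.card F)
    (hA : A ⊆ isoSpaces B s) (hA' : A' ⊆ isoSpaces B s) (hu : u ≠ 0) (hv : v ∉ F ∙ u)
    (huv : B u v = 0)
    (hdu : 2 * isoCount (Fintype.card F) n 1 s ≤
      pointDegree A u * (Fintype.card F : ℝ) ^ (s - 1))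
    (hdv : 2 * isoCount (Fintype.card F) n 1 s ≤
      pointDegree A' v * (Fintype.card F : ℝ) ^ (s - 1)) :
    pointDegree A u * pointDegree A' v ≤
      (8 * (isoCount (Fintype.card F) n 1 s / (Fintype.card F : ℝ) ^ (s - 1))) ^ 2 := by
  have hv0 : v ≠ 0 := fun h0 => hv (h0 ▸ Submodule.zero_mem _)
  have hu' : u ∉ F ∙ v := fun hmem => hv <| by
    rw [Submodule.eq_of_le_of_finrank_eq ((Submodule.span_singleton_le_iff_mem u _).2 hmem)
      (by rw [finrank_span_singleton hu, finrank_span_singleton hv0])]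
    exact Submodule.mem_span_singleton_self v
  have hvu : B v u = 0 := hB.isRefl _ _ huv
  obtain ⟨z, huz, hvz, hzle⟩ :=
    exists_pointDegree_le_card_filter_span_pair hB (by omega) hs.le hA hu hv huv hdu
  obtain ⟨w, -, huw, hwle⟩ :=
    exists_pointDegree_le_card_filter_span_pair hB (by omega) hs.le hA' hv0 hu' hvu hdv
  have huz2 := finrank_span_pair hu (notMem_span_singleton_of_apply hvu hvz)
  have hvw2 := finrank_span_pair hv0 (notMem_span_singleton_of_apply huv huw)
  have key := h.card_filter_mul_card_filter_le hB hs.le hq hA hA'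
    (sup_le_orthogonal_sup hB.isRefl (span_singleton_le_orthogonal hB.isAlt u)
      (span_singleton_le_orthogonal hB.isAlt z)
      ((Submodule.span_singleton_le_iff_mem _ _).2 (mem_orthogonal_span_singleton.2 huz)))
    (by omega) (huz2.trans hvw2.symm)
    (disjoint_orthogonal_span_pair huv huw fun h0 => hvz (hB.isRefl _ _ h0))
  rw [huz2] at key
  have hN3 := pow_mul_isoCount_three_le (n := n) (s := s) (Fintype.one_lt_card (α := F))
    hs2.le hs
  have hnn := isoCount_nonneg (n := n) (j := 3) (s := s) (Fintype.card_pos (α := F))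
  have hdv0 : 0 ≤ pointDegree A' v := by rw [pointDegree_eq_card]; positivity
  calc pointDegree A u * pointDegree A' v
      ≤ _ := mul_le_mul hzle hwle hdv0 (by positivity)
    _ = (2 * ((Fintype.card F : ℝ) ^ (2 * (n - s)) * (Fintype.card F : ℝ) ^ (s - 1))) ^ 2 *
          _ := by rw [mul_mul_mul_comm, ← pow_two]
    _ ≤ _ := mul_le_mul_of_nonneg_left key (by positivity)
    _ = (8 * ((Fintype.card F : ℝ) ^ (3 * (n - s)) * (Fintype.card F : ℝ) ^ (s - 1) *
          isoCount (Fintype.card F) n 3 s)) ^ 2 := by ring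
    _ ≤ _ := by gcongr

end DegreeProducts

section HeavyVectors

variable {F V : Type*} [Field F] [AddCommGroup V] [Module F V] {A : Finset (Submodule F V)}
  {c c' M : ℝ} {v : V}

lemma pointDegree_nonneg (A : Finset (Submodule F V)) (v : V) : 0 ≤ pointDegree A v := by
  rw [pointDegree_eq_card]
  positivity

variable [Fintype V]

/-- The nonzero vectors lying in at least `c` members of the family `A`. -/
noncomputable def heavyVectors (A : Finset (Submodule F V)) (c : ℝ) : Finset V :=
  Finset.univ.filter fun v => v ≠ 0 ∧ c ≤ pointDegree A v

lemma mem_heavyVectors : v ∈ heavyVectors A c ↔ v ≠ 0 ∧ c ≤ pointDegree A v := by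
  simp [heavyVectors]

lemma heavyVectors_subset (h : c ≤ c') : heavyVectors A c' ⊆ heavyVectors A c := fun _ hv =>
  mem_heavyVectors.2 ⟨(mem_heavyVectors.1 hv).1, h.trans (mem_heavyVectors.1 hv).2⟩

lemma degreeVariance_le_sum_sq [Nontrivial V] (A : Finset (Submodule F V)) :
    degreeVariance A ≤ ∑ v with v ≠ 0, pointDegree A v ^ 2 := by
  have hcard : 0 ≤ (Fintype.card V : ℝ) - 1 := sub_nonneg.2 (mod_cast Fintype.card_pos)
  have hsum : ∑ v with v ≠ 0, pointDegree A v ^ 2 =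
      ∑ v, pointDegree A v ^ 2 - pointDegree A 0 ^ 2 := by
    rw [← Finset.sum_erase_eq_sub (Finset.mem_univ 0), Finset.filter_ne']
  rw [degreeVariance, centered_dotProduct_centered, hsum]
  simp only [dotProduct, ← pow_two]
  exact sub_le_self _ (div_nonneg (sq_nonneg _) hcard)

lemma sum_sq_pointDegree_le (A : Finset (Submodule F V)) (hc : 0 ≤ c) :
    ∑ v with v ≠ 0, pointDegree A v ^ 2 ≤
      ∑ v ∈ heavyVectors A c, pointDegree A v ^ 2 + c * ∑ v, pointDegree A v := by
  rw [heavyVectors, ← Finset.filter_filter, Finset.mul_sum,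
    ← Finset.sum_filter_add_sum_filter_not (Finset.univ.filter (· ≠ 0)) (c ≤ pointDegree A ·)]
  gcongr
  refine (Finset.sum_le_sum fun v hv => ?_).trans (Finset.sum_le_sum_of_subset_of_nonneg
    (Finset.subset_univ _) fun v _ _ => mul_nonneg hc (pointDegree_nonneg A v))
  rw [pow_two]
  exact mul_le_mul_of_nonneg_right (not_le.1 (Finset.mem_filter.1 hv).2).le
    (pointDegree_nonneg A v)

lemma sum_sq_pointDegree_heavyVectors_le (hM : ∀ v ≠ 0, pointDegree A v ≤ M) (h : c ≤ c') :
    ∑ v ∈ heavyVectors A c, pointDegree A v ^ 2 ≤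
      (heavyVectors A c').card * M ^ 2 + (heavyVectors A c).card * c' ^ 2 := by
  rw [← Finset.sum_sdiff (heavyVectors_subset h), add_comm]
  refine add_le_add ?_ ?_
  · rw [← nsmul_eq_mul]
    refine Finset.sum_le_card_nsmul _ _ _ fun v hv => ?_
    exact pow_le_pow_left₀ (pointDegree_nonneg A v) (hM v (mem_heavyVectors.1 hv).1) 2
  · calc ∑ v ∈ heavyVectors A c \ heavyVectors A c', pointDegree A v ^ 2
        ≤ ((heavyVectors A c \ heavyVectors A c').card : ℝ) * c' ^ 2 := by
          rw [← nsmul_eq_mul]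
          refine Finset.sum_le_card_nsmul _ _ _ fun v hv => ?_
          obtain ⟨hv, hv'⟩ := Finset.mem_sdiff.1 hv
          have hlt : pointDegree A v < c' := not_le.1 fun hle =>
            hv' (mem_heavyVectors.2 ⟨(mem_heavyVectors.1 hv).1, hle⟩)
          exact pow_le_pow_left₀ (pointDegree_nonneg A v) hlt.le 2
      _ ≤ _ := by
          gcongr
          exact Finset.sdiff_subset

end HeavyVectors

section SecondMoment

variable {F V : Type*} [Field F] [Fintype F] [AddCommGroup V] [Module F V]
  {B : LinearMap.BilinForm F V} {n s : ℕ} {A : Finset (Submodule F V)}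

lemma card_le_pow_of_pairwise_orthogonal [FiniteDimensional F V] (hB : IsSymplectic B n)
    {X : Finset V} (hX : ∀ u ∈ X, ∀ v ∈ X, B u v = 0) : X.card ≤ Fintype.card F ^ n := by
  have hiso : Submodule.span F (X : Set V) ≤ B.orthogonal (Submodule.span F (X : Set V)) := by
    rw [Submodule.span_le]
    intro v hv
    rw [SetLike.mem_coe, ← le_orthogonal_span_singleton hB.isRefl, Submodule.span_le]
    exact fun u hu => mem_orthogonal_span_singleton.2 (hX v hv u hu)
  have : Finite V := Module.finite_of_finite F
  calc X.card = Nat.card (X : Set V) := by simp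
    _ ≤ Nat.card (Submodule.span F (X : Set V)) :=
        Nat.card_mono (Set.toFinite _) Submodule.subset_span
    _ = Fintype.card F ^ finrank F (Submodule.span F (X : Set V)) := by
        rw [Module.natCard_eq_pow_finrank (K := F), Nat.card_eq_fintype_card]
    _ ≤ Fintype.card F ^ n :=
        Nat.pow_le_pow_right Fintype.card_pos (hB.finrank_le_of_isotropic hiso)

lemma exists_notMem_span_singleton {X : Finset V} (hX : Fintype.card F < X.card) (u : V) :
    ∃ v ∈ X, v ∉ F ∙ u := by
  by_contra! hall
  have hsub : X ⊆ Finset.univ.image fun a : F => a • u := fun v hv => by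
    obtain ⟨a, rfl⟩ := Submodule.mem_span_singleton.1 (hall v hv)
    exact Finset.mem_image_of_mem _ (Finset.mem_univ a)
  exact hX.not_ge ((Finset.card_le_card hsub).trans Finset.card_image_le)

lemma pointDegree_le [Finite V] (hB : IsSymplectic B n) (hs : s ≤ n) (hA : A ⊆ isoSpaces B s)
    {v : V} (hv : v ≠ 0) : pointDegree A v ≤ isoCount (Fintype.card F) n 1 s := by
  rw [pointDegree_eq_card, ← finrank_span_singleton (K := F) hv,
    ← card_filter_le_isoSpaces hB hs (span_singleton_le_orthogonal hB.isAlt v)]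
  simp only [Submodule.span_singleton_le_iff_mem]
  gcongr

lemma CrossEKR.mul_sq_card_le [Fintype V] (h : CrossEKR B A A) (hB : IsSymplectic B n)
    (hn : 1 ≤ n) (hs : s ≤ n) (hA : A ⊆ isoSpaces B s) :
    ((Fintype.card F : ℝ) - 2) * (A.card : ℝ) ^ 2 ≤
      (Fintype.card F : ℝ) ^ (n - s) * ∑ v with v ≠ 0, pointDegree A v ^ 2 := by
  have := hB.nontrivial hn
  have hD := degreeVariance_nonneg A
  have hsq : (((Fintype.card F : ℝ) - 2) * A.card * A.card) ^ 2 ≤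
      ((Fintype.card F : ℝ) ^ (n - s) * degreeVariance A) ^ 2 :=
    (h.sq_card_mul_card_le hB hn hs hA hA).trans_eq (by ring)
  calc ((Fintype.card F : ℝ) - 2) * (A.card : ℝ) ^ 2
      = ((Fintype.card F : ℝ) - 2) * A.card * A.card := by ring
    _ ≤ (Fintype.card F : ℝ) ^ (n - s) * degreeVariance A :=
        (abs_le_of_sq_le_sq' hsq (by positivity)).2
    _ ≤ _ := by
        gcongr
        exact degreeVariance_le_sum_sq A

end SecondMoment

section HeavyEKR

variable {F V : Type*} [Field F] [Fintype F] [AddCommGroup V] [Module F V] [Fintype V]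
  {B : LinearMap.BilinForm F V} {n s : ℕ} {A : Finset (Submodule F V)}

lemma CrossEKR.apply_eq_zero_of_mem_heavyVectors (h : CrossEKR B A A) (hB : IsSymplectic B n)
    (hs2 : 2 ≤ s) (hs : s < n) (hq : 17 ≤ Fintype.card F) (hA : A ⊆ isoSpaces B s) {u v : V}
    (hu : u ∈ heavyVectors A (isoCount (Fintype.card F) n 1 s /
      (4 * (Fintype.card F : ℝ) ^ (s - 1))))
    (hv : v ∈ heavyVectors A (isoCount (Fintype.card F) n 1 s /
      (4 * (Fintype.card F : ℝ) ^ (s - 1)))) : B u v = 0 := by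
  by_contra huv
  have hN : 0 < isoCount (Fintype.card F) n 1 s :=
    isoCount_pos Fintype.one_lt_card (by omega)
  have hP : (17 : ℝ) ≤ (Fintype.card F : ℝ) ^ (n - s) := by
    exact_mod_cast hq.trans (Nat.le_self_pow (by omega) _)
  have hupper := h.pointDegree_mul_pointDegree_le_of_apply_ne_zero hB hs2 hs.le (by omega) hA hA
    huv
  have hlower := mul_le_mul (mem_heavyVectors.1 hu).2 (mem_heavyVectors.1 hv).2 (by positivity)
    (pointDegree_nonneg A u)
  set P := (Fintype.card F : ℝ) ^ (n - s)
  set Z := (Fintype.card F : ℝ) ^ (s - 1)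
  set N := isoCount (Fintype.card F) n 1 s
  have hZ : 0 < Z := by positivity
  have hlt : 4 * (N / (P * Z)) < N / (4 * Z) := by
    rw [mul_div_assoc', div_lt_div_iff₀ (by positivity) (by positivity)]
    nlinarith [mul_pos hN hZ]
  have := pow_lt_pow_left₀ hlt (by positivity) two_ne_zero
  linarith

lemma CrossEKR.le_sum_sq_pointDegree_heavyVectors (h : CrossEKR B A A) (hB : IsSymplectic B n)
    (hs1 : 1 ≤ s) (hs : s ≤ n) (hq : 8 ≤ Fintype.card F) (hA : A ⊆ isoSpaces B s)
    (hcard : (Fintype.card F : ℝ) ^ (n - s) * isoCount (Fintype.card F) n 1 s ≤ A.card) :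
    (Fintype.card F : ℝ) / 2 * (Fintype.card F : ℝ) ^ (n - s) *
        isoCount (Fintype.card F) n 1 s ^ 2 ≤
      ∑ v ∈ heavyVectors A (isoCount (Fintype.card F) n 1 s /
        (4 * (Fintype.card F : ℝ) ^ (s - 1))), pointDegree A v ^ 2 := by
  have hN : 0 < isoCount (Fintype.card F) n 1 s := isoCount_pos Fintype.one_lt_card hs1
  have hq' : (8 : ℝ) ≤ Fintype.card F := mod_cast hq
  have hqs : (Fintype.card F : ℝ) ^ s = Fintype.card F * (Fintype.card F : ℝ) ^ (s - 1) :=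
    (mul_pow_sub_one (by omega) _).symm
  have hvar := h.mul_sq_card_le hB (hs1.trans hs) hs hA
  set P := (Fintype.card F : ℝ) ^ (n - s)
  set Z := (Fintype.card F : ℝ) ^ (s - 1)
  set N := isoCount (Fintype.card F) n 1 s
  have hP : 0 < P := by positivity
  have hZ : 0 < Z := by positivity
  have hsplit := sum_sq_pointDegree_le A (c := N / (4 * Z)) (by positivity)
  rw [sum_pointDegree fun S hS => (mem_isoSpaces.1 (hA hS)).2, hqs,
    show N / (4 * Z) * (A.card * (Fintype.card F * Z)) = Fintype.card F / 4 * N * A.card by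
      field_simp] at hsplit
  set S := ∑ v ∈ heavyVectors A (N / (4 * Z)), pointDegree A v ^ 2
  refine le_of_mul_le_mul_left ?_ hP
  calc P * (Fintype.card F / 2 * P * N ^ 2) = Fintype.card F / 2 * (P * N) ^ 2 := by ring
    _ ≤ Fintype.card F / 2 * (A.card : ℝ) ^ 2 := by gcongr
    _ ≤ (Fintype.card F - 2) * (A.card : ℝ) ^ 2 -
          Fintype.card F / 4 * (A.card : ℝ) ^ 2 := by
        nlinarith [sq_nonneg (A.card : ℝ)]
    _ ≤ P * (S + Fintype.card F / 4 * N * A.card) -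
          Fintype.card F / 4 * (P * N * A.card) := by
        rw [pow_two (A.card : ℝ)] at hvar ⊢
        refine sub_le_sub (hvar.trans ?_) ?_ <;> gcongr
    _ = P * S := by ring

lemma CrossEKR.card_heavyVectors_mul_sq_le (h : CrossEKR B A A) (hB : IsSymplectic B n)
    (hs2 : 2 < s) (hs : s < n) (hq : 18 ≤ Fintype.card F) (hA : A ⊆ isoSpaces B s) :
    (heavyVectors A (isoCount (Fintype.card F) n 1 s /
        (4 * (Fintype.card F : ℝ) ^ (s - 1)))).card *
          (9 * isoCount (Fintype.card F) n 1 s / (Fintype.card F : ℝ) ^ (s - 1)) ^ 2 ≤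
      (Fintype.card F : ℝ) / 4 * (Fintype.card F : ℝ) ^ (n - s) *
        isoCount (Fintype.card F) n 1 s ^ 2 := by
  have hq' : (18 : ℝ) ≤ Fintype.card F := mod_cast hq
  have hqn : (Fintype.card F : ℝ) ^ n = (Fintype.card F : ℝ) ^ (n - s) *
      (Fintype.card F * (Fintype.card F : ℝ) ^ (s - 1)) := by
    rw [mul_pow_sub_one (by omega), ← pow_add, Nat.sub_add_cancel hs.le]
  have hX : ((heavyVectors A (isoCount (Fintype.card F) n 1 s /
      (4 * (Fintype.card F : ℝ) ^ (s - 1)))).card : ℝ) ≤ (Fintype.card F : ℝ) ^ n := by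
    exact_mod_cast card_le_pow_of_pairwise_orthogonal hB fun u hu v hv =>
      h.apply_eq_zero_of_mem_heavyVectors hB hs2.le hs (by omega) hA hu hv
  have hZ : (Fintype.card F : ℝ) ^ 2 ≤ (Fintype.card F : ℝ) ^ (s - 1) :=
    pow_le_pow_right₀ (by linarith) (by omega)
  rw [hqn] at hX
  set P := (Fintype.card F : ℝ) ^ (n - s)
  set Z := (Fintype.card F : ℝ) ^ (s - 1)
  set N := isoCount (Fintype.card F) n 1 s
  have hZ0 : 0 < Z := by positivity
  calc (heavyVectors A (N / (4 * Z))).card * (9 * N / Z) ^ 2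
      ≤ P * (Fintype.card F * Z) * (9 * N / Z) ^ 2 := by gcongr
    _ = Fintype.card F * P * N ^ 2 * (81 / Z) := by field_simp; ring
    _ ≤ Fintype.card F * P * N ^ 2 * (1 / 4) := by
        gcongr ?_ * ?_
        rw [div_le_div_iff₀ hZ0 (by norm_num)]
        nlinarith
    _ = Fintype.card F / 4 * P * N ^ 2 := by ring

lemma CrossEKR.card_lt_card_heavyVectors (h : CrossEKR B A A) (hB : IsSymplectic B n)
    (hs2 : 2 < s) (hs : s < n) (hq : 18 ≤ Fintype.card F) (hA : A ⊆ isoSpaces B s)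
    (hcard : (Fintype.card F : ℝ) ^ (n - s) * isoCount (Fintype.card F) n 1 s ≤ A.card) :
    Fintype.card F < (heavyVectors A (9 * isoCount (Fintype.card F) n 1 s /
      (Fintype.card F : ℝ) ^ (s - 1))).card := by
  have hN : 0 < isoCount (Fintype.card F) n 1 s := isoCount_pos Fintype.one_lt_card (by omega)
  have hq' : (18 : ℝ) ≤ Fintype.card F := mod_cast hq
  have hP : (Fintype.card F : ℝ) ≤ (Fintype.card F : ℝ) ^ (n - s) :=
    le_self_pow₀ (by linarith) (by omega)
  have hlower := h.le_sum_sq_pointDegree_heavyVectors hB (by omega) hs.le (by omega) hA hcard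
  have hfew := h.card_heavyVectors_mul_sq_le hB hs2 hs hq hA
  have hmax (v : V) (hv : v ≠ 0) := pointDegree_le hB hs.le hA hv
  set P := (Fintype.card F : ℝ) ^ (n - s)
  set Z := (Fintype.card F : ℝ) ^ (s - 1)
  set N := isoCount (Fintype.card F) n 1 s
  have hZ : 0 < Z := by positivity
  have hle : N / (4 * Z) ≤ 9 * N / Z := by
    rw [div_le_div_iff₀ (by positivity) hZ]
    nlinarith [mul_pos hN hZ]
  have hupper := sum_sq_pointDegree_heavyVectors_le hmax hle
  have hmany : Fintype.card F / 4 * P ≤ (heavyVectors A (9 * N / Z)).card := by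
    refine le_of_mul_le_mul_right ?_ (pow_pos hN 2)
    linarith
  have : (Fintype.card F : ℝ) < (heavyVectors A (9 * N / Z)).card := by nlinarith
  exact_mod_cast this

end HeavyEKR

section CardLt

variable {F V : Type*} [Field F] [Fintype F] [AddCommGroup V] [Module F V] [Finite V]
  {B : LinearMap.BilinForm F V} {n s : ℕ} {A : Finset (Submodule F V)}

theorem CrossEKR.card_lt (h : CrossEKR B A A) (hB : IsSymplectic B n) (hs2 : 2 < s) (hs : s < n)
    (hq : 18 ≤ Fintype.card F) (hA : A ⊆ isoSpaces B s) :
    (A.card : ℝ) < (Fintype.card F : ℝ) ^ (n - s) * isoCount (Fintype.card F) n 1 s := by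
  cases nonempty_fintype V
  by_contra! hcard
  have hN : 0 < isoCount (Fintype.card F) n 1 s := isoCount_pos Fintype.one_lt_card (by omega)
  have hmany := h.card_lt_card_heavyVectors hB hs2 hs hq hA hcard
  obtain ⟨u, hu⟩ := Finset.card_pos.1 (Nat.zero_lt_of_lt hmany)
  obtain ⟨v, hv, huv⟩ := exists_notMem_span_singleton hmany u
  have hproduct := h.pointDegree_mul_pointDegree_le_of_apply_eq_zero hB hs2 hs (by omega) hA hA
    (mem_heavyVectors.1 hu).1 huv
  have horth := h.apply_eq_zero_of_mem_heavyVectors (u := u) (v := v) hB hs2.le hs (by omega) hA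
  set Z := (Fintype.card F : ℝ) ^ (s - 1)
  set N := isoCount (Fintype.card F) n 1 s
  have hZ : 0 < Z := by positivity
  have hsub : heavyVectors A (9 * N / Z) ⊆ heavyVectors A (N / (4 * Z)) :=
    heavyVectors_subset (by
      rw [div_le_div_iff₀ (by positivity) hZ]
      nlinarith [mul_pos hN hZ])
  have hdeg {w : V} (hw : w ∈ heavyVectors A (9 * N / Z)) : 2 * N ≤ pointDegree A w * Z := by
    linarith [(div_le_iff₀ hZ).1 (mem_heavyVectors.1 hw).2]
  have hlower := mul_le_mul (mem_heavyVectors.1 hu).2 (mem_heavyVectors.1 hv).2 (by positivity)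
    (pointDegree_nonneg A u)
  have hupper := hproduct (horth (hsub hu) (hsub hv)) (hdeg hu) (hdeg hv)
  have : 0 < N / Z := by positivity
  rw [mul_div_assoc] at hlower
  nlinarith

end CardLt

section Translation

variable {F V : Type} [Field F] [AddCommGroup V] [Module F V] {B : V →ₗ[F] V →ₗ[F] F}

lemma bperp_eq_orthogonal (W : Submodule F V) :
    bperp B W = LinearMap.BilinForm.orthogonal B W := by
  ext v
  simp [bperp, LinearMap.BilinForm.mem_orthogonal_iff]

lemma IsTotIso.le_orthogonal {W : Submodule F V} (hW : IsTotIso B W) :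
    W ≤ LinearMap.BilinForm.orthogonal B W := fun v hv u hu => hW u hu v hv

lemma IsEKRSpaces.crossEKR {s : ℕ} {𝓕 : Set (Submodule F V)} (h : IsEKRSpaces B s 𝓕) :
    CrossEKR B 𝓕 𝓕 := fun S hS T hT hdisj =>
  h.2 S hS T hT (by rw [SpaceOpp, bperp_eq_orthogonal, hdisj.eq_bot])

lemma IsAltForm.isSymplectic {n : ℕ} (hB : IsAltForm B) (hnd : NondegForm B)
    (hdim : finrank F V = 2 * n) : IsSymplectic B n where
  isAlt := hB
  nondegenerate := (LinearMap.IsAlt.isRefl hB).nondegenerate_iff_separatingLeft.2 hnd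
  finrank_eq := hdim

end Translation

theorem stmt_3_general {F V : Type*} [Field F] [Fintype F] [AddCommGroup V] [Module F V]
    {B : LinearMap.BilinForm F V} {n s : ℕ} (hB : IsSymplectic B n) (hq : 18 ≤ Fintype.card F)
    (hs2 : 2 < s) (hs : s < n) {𝓕 : Set (Submodule F V)}
    (h𝓕 : ∀ S ∈ 𝓕, S ≤ B.orthogonal S ∧ finrank F S = s) (h : CrossEKR B 𝓕 𝓕) :
    (𝓕.ncard : ℝ) < gaussq (Fintype.card F) n s *
      ∏ i ∈ Finset.Icc 1 (s - 1), ((Fintype.card F : ℝ) ^ (n - i) + 1) := by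
  have : FiniteDimensional F V :=
    Module.finite_of_finrank_pos (by rw [hB.finrank_eq]; omega)
  have : Finite V := Module.finite_of_finite F
  lift 𝓕 to Finset (Submodule F V) using Set.toFinite 𝓕
  rw [Set.ncard_coe_finset]
  exact (h.card_lt hB hs2 hs hq fun S hS => mem_isoSpaces.2 (h𝓕 S hS)).trans_le
    (pow_mul_isoCount_one_le Fintype.one_lt_card (by omega) hs.le)

/-- For `2 < s < n` and `q` large (in terms of `n`), every EKR-set
of totally isotropic `s`-spaces has size strictly less than
`h_{n,s} = [n choose s]_q ∏_{i=1}^{s-1}(q^{n-i}+1)`. -/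
theorem stmt_3 (n : ℕ) (hn : 3 ≤ n) :
    ∃ q₀ : ℕ, ∀ (F V : Type) [Field F] [Fintype F] [AddCommGroup V] [Module F V],
      ∀ q : ℕ, Fintype.card F = q → q₀ ≤ q →
      ∀ B : V →ₗ[F] V →ₗ[F] F, IsAltForm B → NondegForm B →
      FiniteDimensional F V → Module.finrank F V = 2 * n →
      ∀ s : ℕ, 2 < s → s < n →
      ∀ 𝓕 : Set (Submodule F V),
        IsEKRSpaces B s 𝓕 →
        (𝓕.ncard : ℝ) <
          gaussq q n s * ∏ i ∈ Finset.Icc 1 (s - 1), ((q : ℝ) ^ (n - i) + 1) := by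
  refine ⟨18, fun F V _ _ _ _ q hcard hq B hB hnd _ hdim s hs2 hs 𝓕 h𝓕 => ?_⟩
  subst hcard
  exact stmt_3_general (hB.isSymplectic hnd hdim) hq hs2 hs
    (fun S hS => ⟨(h𝓕.1 S hS).1.le_orthogonal, (h𝓕.1 S hS).2⟩) h𝓕.crossEKR
end

section
/- Let 1 ≤ s ≤ n−1 and let P be a point (a totally isotropic 1-space) of the symplectic polar space of rank n. If 𝓕̃ is a set of totally isotropic s-spaces, each contained in P^⊥ and none containing P, such that no two members of 𝓕̃ are opposite, then |𝓕̃| ≤ q^s · [ (n−1) choose s ]_q · ∏_{i=1}^{s−1} (q^{n−1−i} + 1). -/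
open scoped Classical

open Module

/-!
Projecting `P^⊥` along `P` onto a nondegenerate complement `W` of `P` in `P^⊥` preserves the form,
hence maps an EKR-set of subspaces of `P^⊥` disjoint from `P` to an EKR-set of the polar space
of `W`. A subspace of `P^⊥` disjoint from `P` is the graph of a linear map from its image to `P`,
so a fibre over an `s`-space has at most `q^{s · dim P}` members.

For EKR-sets in the polar space of `W`, of rank `m`, apply Hoffman's ratio bound to the opposition
graph on ordered bases of `s`-spaces. Let `f` be an eigenvector with nonzero eigenvalue orthogonal
to the constants, and let `k` be minimal such that the sum of `f` over all extensions of some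
`k`-tuple `Y` is nonzero; let `g` be the function of these sums. Minimality turns the eigenvalue
equation for `g` into a character sum over the tuples with vanishing Gram matrix relative to `Y`,
and Plancherel bounds that sum. The result is `|μ| ≤ d / q^m`, with `d` the valency.
-/

namespace SymplecticEKR

open Finset

section Counting

theorem card_extensions {α : Type*} [Fintype α] {Q : ∀ t, (Fin t → α) → Prop} {r : ℕ → ℕ}
    (init : ∀ t (Z : Fin (t + 1) → α), Q (t + 1) Z → Q t (Fin.init Z)) {k s : ℕ} (hks : k ≤ s)
    (card_snoc : ∀ t < s, ∀ Y, Q t Y → #{w | Q (t + 1) (Fin.snoc Y w)} = r t)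
    {Y : Fin k → α} (hY : Q k Y) :
    #{Z : Fin s → α | Q s Z ∧ Z ∘ Fin.castLE hks = Y} = ∏ j ∈ Ico k s, r j := by
  induction s, hks using Nat.le_induction with
  | base =>
    rw [Ico_self, prod_empty, card_eq_one]
    refine ⟨Y, ?_⟩
    ext Z
    simp only [mem_filter, mem_univ, true_and, mem_singleton]
    exact ⟨And.right, by rintro rfl; exact ⟨hY, rfl⟩⟩
  | succ s hks ih =>
    rw [prod_Ico_succ_top hks, ← ih fun t ht => card_snoc t (by omega),
      card_eq_sum_card_fiberwise (f := Fin.init) (t := {Z | Q s Z ∧ Z ∘ Fin.castLE hks = Y}),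
      sum_const_nat (m := r s)]
    · simp only [mem_filter, mem_univ, true_and]
      intro Z hZ
      rw [← card_snoc s s.lt_succ_self Z hZ.1, filter_filter]
      refine card_nbij' (fun Z' => Z' (Fin.last s)) (fun w => Fin.snoc Z w) ?_ ?_ ?_ ?_
      · rintro Z' h
        simp only [coe_filter, mem_univ, true_and, Set.mem_ofPred_eq] at h ⊢
        rw [← h.2, Fin.snoc_init_self]
        exact h.1.1
      · intro w h
        simp only [coe_filter, mem_univ, true_and, Set.mem_ofPred_eq, Fin.init_snoc, and_true]
          at h ⊢
        refine ⟨h, ?_⟩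
        rw [← hZ.2]
        exact funext fun i => Fin.snoc_castSucc (α := fun _ => α) w Z (Fin.castLE hks i)
      · rintro Z' h
        simp only [coe_filter, mem_univ, true_and, Set.mem_ofPred_eq] at h
        exact h.2 ▸ Fin.snoc_init_self Z'
      · exact fun w _ => Fin.snoc_last ..
    · intro Z hZ
      simp only [coe_filter, mem_univ, true_and, Set.mem_ofPred_eq] at hZ ⊢
      exact ⟨init s Z hZ.1, hZ.2⟩

end Counting

section CharacterSums

variable {F : Type*} [Field F]

theorem sum_addChar_linearMap {R E : Type*} [CommRing R] [IsDomain R] [AddCommGroup E] [Module F E]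
    [Fintype E] {ψ : AddChar F R} (hψ : ψ ≠ 1) (φ : E →ₗ[F] F) :
    ∑ e, ψ (φ e) = if φ = 0 then (Fintype.card E : R) else 0 := by
  split_ifs with hφ
  · simp [hφ]
  · refine AddChar.sum_eq_zero_of_ne_one (ψ := ψ.compAddMonoidHom φ.toAddMonoidHom) ?_
    obtain ⟨a, ha⟩ := AddChar.ne_one_iff.1 hψ
    obtain ⟨e, he⟩ := LinearMap.surjective hφ a
    exact AddChar.ne_one_iff.2 ⟨e, by simpa [he] using ha⟩

theorem sum_addChar_mem_submodule {R E : Type*} [CommRing R] [IsDomain R] [AddCommGroup E]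
    [Module F E] [Fintype E] {ψ : AddChar F R} (hψ : ψ ≠ 1) (φ : E →ₗ[F] F)
    (S : Submodule F E) :
    ∑ e with e ∈ S, ψ (φ e) = if S ≤ LinearMap.ker φ then (Fintype.card S : R) else 0 := by
  have hker : φ.domRestrict S = 0 ↔ S ≤ LinearMap.ker φ :=
    ⟨fun h x hx => LinearMap.congr_fun h ⟨x, hx⟩, fun h => LinearMap.ext fun x => h x.2⟩
  rw [sum_subtype _ (p := (· ∈ S)) (by simp)]
  simpa only [hker, LinearMap.domRestrict_apply] using sum_addChar_linearMap hψ (φ.domRestrict S)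

theorem fourier_inversion {R U M : Type*} [CommRing R] [IsDomain R] [AddCommGroup U] [Module F U]
    [Fintype U] [AddCommGroup M] [Module F M] [Fintype M] {ψ : AddChar F R} (hψ : ψ ≠ 1)
    {β : U →ₗ[F] M →ₗ[F] F} (hβ : β.SeparatingRight) (g : M → R) (x : M) :
    ∑ u, (∑ y, g y * ψ (-β u y)) * ψ (β u x) = Fintype.card U * g x := by
  have hsum (y : M) : ∑ u, ψ (-β u y) * ψ (β u x) = if y = x then (Fintype.card U : R) else 0 := by
    have hzero : β.flip (x - y) = 0 ↔ y = x := by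
      refine ⟨fun h => (sub_eq_zero.1 (hβ _ fun u => LinearMap.congr_fun h u)).symm, ?_⟩
      rintro rfl
      simp
    have hflip := sum_addChar_linearMap hψ (β.flip (x - y))
    simp only [hzero] at hflip
    rw [← hflip]
    refine sum_congr rfl fun u _ => ?_
    rw [← AddChar.map_add_eq_mul, neg_add_eq_sub, LinearMap.flip_apply, (β u).map_sub]
  simp only [sum_mul, mul_assoc]
  rw [sum_comm]
  simp only [← mul_sum, hsum, mul_ite, mul_zero, sum_ite_eq', mem_univ, if_true]
  exact mul_comm ..

theorem plancherel [Finite F] {U M : Type*} [AddCommGroup U] [Module F U] [Fintype U]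
    [AddCommGroup M] [Module F M] [Fintype M] {ψ : AddChar F ℂ} (hψ : ψ ≠ 1)
    {β : U →ₗ[F] M →ₗ[F] F} (hβ : β.SeparatingRight) (h : M → ℂ) :
    ∑ u, ‖∑ x, h x * ψ (β u x)‖ ^ 2 = Fintype.card U * ∑ x, ‖h x‖ ^ 2 := by
  have expand (u : U) : (‖∑ x, h x * ψ (β u x)‖ ^ 2 : ℂ) =
      ∑ x, h x * ψ (β u x) * ∑ y, starRingEnd ℂ (h y) * ψ (-β u y) := by
    rw [← Complex.mul_conj', sum_mul, map_sum]
    simp only [map_mul, AddChar.map_neg_eq_conj]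
  have key : (∑ u, ‖∑ x, h x * ψ (β u x)‖ ^ 2 : ℂ) = Fintype.card U * ∑ x, (‖h x‖ ^ 2 : ℂ) := by
    simp only [expand]
    rw [sum_comm, mul_sum]
    refine sum_congr rfl fun x _ => ?_
    rw [← Complex.mul_conj', mul_left_comm,
      ← fourier_inversion hψ hβ (fun y => starRingEnd ℂ (h y)) x, mul_sum]
    exact sum_congr rfl fun u _ => by ring
  exact_mod_cast key

theorem linearIndependent_domRestrict_ker {E : Type*} [AddCommGroup E] [Module F E] {k : ℕ}
    {w : Fin (k + 1) → E →ₗ[F] F} (hw : LinearIndependent F w) :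
    LinearIndependent F fun j : Fin k => (w j.succ).domRestrict (LinearMap.ker (w 0)) := by
  rw [Fintype.linearIndependent_iff]
  intro c hc
  have hmem : ∑ j, c j • w j.succ ∈ Submodule.span F (Set.range fun _ : Unit => w 0) := by
    refine mem_span_of_iInf_ker_le_ker fun x hx => ?_
    simpa using LinearMap.congr_fun hc ⟨x, by simpa using hx⟩
  rw [Set.range_const, Submodule.mem_span_singleton] at hmem
  obtain ⟨a, ha⟩ := hmem
  intro j
  simpa using Fintype.linearIndependent_iff.1 hw (Fin.cons (-a) c)
    (by simp [Fin.sum_univ_succ, ← ha]) j.succ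

theorem sum_addChar_notMem_span [Fintype F] {R E : Type*} [CommRing R] [IsDomain R]
    [AddCommGroup E] [Module F E] [Fintype E] {ψ : AddChar F R} (hψ : ψ ≠ 1) {φ : E →ₗ[F] F}
    (hφ : φ ≠ 0) {k : ℕ} {v : Fin k → E} (hv : LinearIndependent F v) :
    ∑ x with x ∉ Submodule.span F (Set.range v), ψ (φ x) =
      if ∀ j, φ (v j) = 0 then -(Fintype.card F : R) ^ k else 0 := by
  have hspan : Submodule.span F (Set.range v) ≤ LinearMap.ker φ ↔ ∀ j, φ (v j) = 0 := by
    rw [Submodule.span_le, Set.range_subset_iff]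
    rfl
  have hcard : Fintype.card (Submodule.span F (Set.range v)) = Fintype.card F ^ k := by
    rw [card_eq_pow_finrank (K := F), finrank_span_eq_card hv, Fintype.card_fin]
  have htotal := sum_filter_add_sum_filter_not univ (· ∈ Submodule.span F (Set.range v))
    fun x => ψ (φ x)
  rw [sum_addChar_linearMap hψ, if_neg hφ, sum_addChar_mem_submodule hψ, add_comm] at htotal
  simp only [hspan, hcard] at htotal
  rw [eq_neg_of_add_eq_zero_left htotal]
  split_ifs <;> simp

theorem sum_linearIndependent_ker {R E : Type*} [AddCommMonoid R]
    [AddCommGroup E] [Module F E] [Fintype E] {k : ℕ} (φ : E →ₗ[F] F) (g : (Fin k → E) → R) :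
    ∑ v with LinearIndependent F v ∧ ∀ j, φ (v j) = 0, g v =
      ∑ v : Fin k → LinearMap.ker φ with LinearIndependent F v, g fun j => v j := by
  have hsub (v : Fin k → LinearMap.ker φ) :
      LinearIndependent F (fun j => (v j : E)) ↔ LinearIndependent F v :=
    LinearMap.linearIndependent_iff (LinearMap.ker φ).subtype (Submodule.ker_subtype _)
  symm
  refine sum_bij' (fun v _ j => (v j : E))
    (fun v hv j => ⟨v j, (mem_filter.1 hv).2.2 j⟩) ?_ ?_ ?_ ?_ ?_
  · exact fun v hv => by
      simpa only [mem_filter, mem_univ, true_and, hsub] using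
        ⟨(mem_filter.1 hv).2, fun j => (v j).2⟩
  · intro v hv
    rw [mem_filter, ← hsub]
    exact ⟨mem_univ _, (mem_filter.1 hv).2.1⟩
  all_goals exact fun _ _ => rfl

theorem sum_addChar_linearIndependent [Fintype F] {R : Type*} [CommRing R] [IsDomain R]
    {ψ : AddChar F R} (hψ : ψ ≠ 1) {k : ℕ} {E : Type*} [AddCommGroup E] [Module F E] [Fintype E]
    {w : Fin k → E →ₗ[F] F} (hw : LinearIndependent F w) :
    ∑ v with LinearIndependent F v, ψ (∑ j, w j (v j)) =
      (-1) ^ k * (Fintype.card F : R) ^ k.choose 2 := by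
  induction k generalizing E with
  | zero => simp [filter_true_of_mem]
  | succ k ih =>
    have hcons (v : Fin k → E) :
        ∑ x, (if LinearIndependent F (Fin.cons x v : Fin (k + 1) → E) then
          ψ (∑ j, w j ((Fin.cons x v : Fin (k + 1) → E) j)) else 0) =
        if LinearIndependent F v ∧ ∀ j, w 0 (v j) = 0 then
          -(Fintype.card F : R) ^ k * ψ (∑ j, w j.succ (v j)) else 0 := by
      simp only [linearIndependent_finCons, Fin.sum_univ_succ, Fin.cons_zero, Fin.cons_succ,
        AddChar.map_add_eq_mul]
      by_cases hv : LinearIndependent F v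
      · simp only [hv, true_and, ← sum_filter, ← sum_mul,
          sum_addChar_notMem_span hψ (hw.ne_zero 0) hv, ite_mul, zero_mul]
      · simp [hv]
    calc ∑ v with LinearIndependent F v, ψ (∑ j, w j (v j))
        = ∑ v : Fin k → E with LinearIndependent F v ∧ ∀ j, w 0 (v j) = 0,
            -(Fintype.card F : R) ^ k * ψ (∑ j, w j.succ (v j)) := by
          rw [sum_filter, ← (Fin.consEquiv fun _ => E).sum_comp, Fintype.sum_prod_type_right,
            sum_filter]
          exact sum_congr rfl fun v _ => hcons v
      _ = -(Fintype.card F : R) ^ k * ((-1) ^ k * (Fintype.card F : R) ^ k.choose 2) := by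
          rw [sum_linearIndependent_ker (w 0), ← mul_sum,
            ← ih (linearIndependent_domRestrict_ker hw)]
          rfl
      _ = _ := by rw [Nat.choose_succ_succ' k 1, Nat.choose_one_right]; ring

end CharacterSums

section TuplePairing

variable {F E E' ι : Type*} [Field F] [AddCommGroup E] [Module F E] [AddCommGroup E'] [Module F E']
  [Fintype ι]

/-- The bilinear pairing `(x, y) ↦ ∑ i, β (x i) (y i)` of tuples induced by a bilinear pairing `β`
of their entries. -/
def tuplePairing (ι : Type*) [Fintype ι] (β : E →ₗ[F] E' →ₗ[F] F) :
    (ι → E) →ₗ[F] (ι → E') →ₗ[F] F :=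
  ∑ i, β.compl₁₂ (LinearMap.proj i) (LinearMap.proj i)

theorem tuplePairing_apply (β : E →ₗ[F] E' →ₗ[F] F) (x : ι → E) (y : ι → E') :
    tuplePairing ι β x y = ∑ i, β (x i) (y i) := by
  simp [tuplePairing, LinearMap.sum_apply]

theorem separatingRight_tuplePairing {β : E →ₗ[F] E' →ₗ[F] F} (hβ : β.SeparatingRight) :
    (tuplePairing ι β).SeparatingRight := by
  intro y hy
  funext i
  refine hβ _ fun v => ?_
  have := hy (Pi.single i v)
  rwa [tuplePairing_apply, sum_eq_single i, Pi.single_eq_same] at this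
  · intro j _ hj
    rw [Pi.single_eq_of_ne hj, map_zero, LinearMap.zero_apply]
  · exact fun h => (h (mem_univ i)).elim

end TuplePairing

section Frames

variable {F W ι κ : Type*} [Field F] [AddCommGroup W] [Module F W]
  {B : W →ₗ[F] W →ₗ[F] F}

/-- A frame: an ordered basis of a totally isotropic subspace. -/
def IsFrame (B : W →ₗ[F] W →ₗ[F] F) (X : ι → W) : Prop :=
  LinearIndependent F X ∧ ∀ i j, B (X i) (X j) = 0

/-- The Gram matrix of two tuples, regarded as the tuple of its rows. -/
def gram (B : W →ₗ[F] W →ₗ[F] F) (Y : ι → W) (X : κ → W) : ι → κ → F :=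
  fun j i => B (Y j) (X i)

/-- `Y` is a frame whose span meets the orthogonal complement of `X` trivially: pairing with `X`
is injective on the span of `Y`. For frames of equal length this says that their spans are
opposite. -/
def IsOppositeFrame (B : W →ₗ[F] W →ₗ[F] F) (X : κ → W) (Y : ι → W) : Prop :=
  IsFrame B Y ∧ LinearIndependent F (gram B Y X)

theorem IsFrame.comp {X : ι → W} (hX : IsFrame B X) {e : κ → ι} (he : Function.Injective e) :
    IsFrame B (X ∘ e) :=
  ⟨hX.1.comp e he, fun _ _ => hX.2 _ _⟩

theorem IsOppositeFrame.comp {ι' : Type*} {X : κ → W} {Y : ι → W} (hY : IsOppositeFrame B X Y)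
    {e : ι' → ι} (he : Function.Injective e) : IsOppositeFrame B X (Y ∘ e) :=
  ⟨hY.1.comp he, hY.2.comp e he⟩

theorem isFrame_snoc_iff (hB : B.IsAlt) {t : ℕ} {Y : Fin t → W} {w : W} :
    IsFrame B (Fin.snoc Y w : Fin (t + 1) → W) ↔
      IsFrame B Y ∧ w ∉ Submodule.span F (Set.range Y) ∧ ∀ i, B (Y i) w = 0 := by
  have hiso : (∀ i j, B ((Fin.snoc Y w : Fin (t + 1) → W) i) ((Fin.snoc Y w : Fin (t + 1) → W) j)
      = 0) ↔ (∀ i j, B (Y i) (Y j) = 0) ∧ ∀ i, B (Y i) w = 0 := by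
    simp only [Fin.forall_fin_succ', Fin.snoc_castSucc, Fin.snoc_last, hB w, and_true,
      fun i => hB.isRefl.eq_iff (x := w) (y := Y i), forall_and]
    tauto
  rw [IsFrame, IsFrame, linearIndependent_finSnoc, hiso]
  tauto

theorem gram_snoc {t : ℕ} (Y : Fin t → W) (w : W) (X : κ → W) :
    gram B (Fin.snoc Y w : Fin (t + 1) → W) X = Fin.snoc (gram B Y X) fun i => B w (X i) := by
  ext j i
  refine Fin.lastCases ?_ (fun j => ?_) j <;> simp [gram]

theorem isOppositeFrame_snoc_iff (hB : B.IsAlt) {t : ℕ} {X : κ → W} {Y : Fin t → W}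
    (hY : IsOppositeFrame B X Y) {w : W} :
    IsOppositeFrame B X (Fin.snoc Y w : Fin (t + 1) → W) ↔
      (∀ i, B w (Y i) = 0) ∧
        (fun i => B w (X i)) ∉ Submodule.span F (Set.range (gram B Y X)) := by
  rw [IsOppositeFrame, isFrame_snoc_iff hB, gram_snoc, linearIndependent_finSnoc]
  simp only [hY.1, hY.2, true_and, fun i => hB.isRefl.eq_iff (x := w) (y := Y i)]
  refine ⟨fun h => ⟨h.1.2, h.2⟩, fun h => ⟨⟨fun hw => h.2 ?_, h.1⟩, h.2⟩⟩
  have := Submodule.mem_map_of_mem (f := LinearMap.pi fun i => B.flip (X i)) hw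
  rwa [Submodule.map_span, ← Set.range_comp] at this

theorem IsOppositeFrame.linearIndependent_sumElim {X : κ → W} (hX : IsFrame B X) {Y : ι → W}
    (hY : IsOppositeFrame B X Y) : LinearIndependent F (Sum.elim Y X) := by
  refine hY.1.1.sum_type hX.1 ?_
  refine (Submodule.range_ker_disjoint (f := LinearMap.pi fun i => B.flip (X i)) hY.2).mono_right ?_
  rw [Submodule.span_le, Set.range_subset_iff]
  exact fun i => funext fun j => hX.2 i j

end Frames

theorem surjective_pi_of_linearIndependent {F W ι : Type*} [Field F] [AddCommGroup W] [Module F W]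
    [Finite ι] {φ : ι → Dual F W}
    (hφ : LinearIndependent F φ) : Function.Surjective (LinearMap.pi φ) := by
  have hcoe : LinearIndependent F fun i => (φ i : W → F) :=
    hφ.map' (LinearMap.ltoFun F W F F) (LinearMap.ker_eq_bot.2 DFunLike.coe_injective)
  rw [← LinearMap.range_eq_top, ← Submodule.span_eq (LinearMap.range _)]
  exact span_flip_eq_top_iff_linearIndependent.2 hcoe

section FrameCounting

variable {F W : Type*} [Field F] [Fintype F] [AddCommGroup W] [Module F W] [Fintype W]
  {B : W →ₗ[F] W →ₗ[F] F}

theorem card_filter_dual_eq {ι : Type*} [Fintype ι] {φ : ι → Dual F W}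
    (hφ : LinearIndependent F φ) (a : ι → F) :
    #{w | ∀ i, φ i w = a i} = Fintype.card F ^ (finrank F W - Fintype.card ι) := by
  have hsurj := surjective_pi_of_linearIndependent hφ
  have hker : finrank F (LinearMap.ker (LinearMap.pi φ)) = finrank F W - Fintype.card ι := by
    have := (LinearMap.pi φ).finrank_range_add_finrank_ker
    rw [LinearMap.range_eq_top.2 hsurj, finrank_top, finrank_pi] at this
    omega
  have hfibre := AddMonoidHom.card_fiber_eq_of_mem_range (LinearMap.pi φ) (hsurj a) (hsurj 0)
  simp only [funext_iff, LinearMap.pi_apply, Pi.zero_apply] at hfibre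
  rw [hfibre, ← hker, ← card_eq_pow_finrank, Fintype.card_subtype]
  simp [funext_iff]

theorem card_snoc_isFrame (hB : B.IsAlt) (hnd : B.SeparatingLeft) {t : ℕ} {Y : Fin t → W}
    (hY : IsFrame B Y) :
    #{w | IsFrame B (Fin.snoc Y w : Fin (t + 1) → W)} =
      Fintype.card F ^ (finrank F W - t) - Fintype.card F ^ t := by
  have hspan : #{w | w ∈ Submodule.span F (Set.range Y)} = Fintype.card F ^ t := by
    rw [← Fintype.card_subtype, card_eq_pow_finrank (K := F) (V := Submodule.span F _),
      finrank_span_eq_card hY.1, Fintype.card_fin]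
  have hperp : #{w | ∀ i, B (Y i) w = 0} = Fintype.card F ^ (finrank F W - t) := by
    simpa using card_filter_dual_eq
      (hY.1.map' B (LinearMap.separatingLeft_iff_ker_eq_bot.1 hnd)) 0
  rw [← hspan, ← hperp, ← card_sdiff_of_subset]
  · congr 1
    ext w
    simp [isFrame_snoc_iff hB, hY, and_comm]
  · intro w hw
    have : Submodule.span F (Set.range Y) ≤ LinearMap.ker (LinearMap.pi fun i => B (Y i)) := by
      rw [Submodule.span_le, Set.range_subset_iff]
      exact fun j => funext fun i => hY.2 i j
    simpa [funext_iff] using this (mem_filter.1 hw).2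

theorem card_frames (hB : B.IsAlt) (hnd : B.SeparatingLeft) (s : ℕ) :
    #{X : Fin s → W | IsFrame B X} =
      ∏ j ∈ range s, (Fintype.card F ^ (finrank F W - j) - Fintype.card F ^ j) := by
  rw [range_eq_Ico, ← card_extensions (Q := fun _ (X : Fin _ → W) => IsFrame B X)
    (Y := Fin.elim0) (fun t _ hZ => hZ.comp (Fin.castSucc_injective t)) s.zero_le
    (fun _ _ _ hY => card_snoc_isFrame hB hnd hY)
    ⟨linearIndependent_empty_type, fun i => i.elim0⟩]
  exact congrArg card (filter_congr fun X _ => (and_iff_left (Subsingleton.elim _ _)).symm)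

theorem card_snoc_isOppositeFrame (hB : B.IsAlt) (hnd : B.SeparatingRight) {s t : ℕ}
    {X : Fin s → W} (hX : IsFrame B X) {Y : Fin t → W} (hY : IsOppositeFrame B X Y) :
    #{w | IsOppositeFrame B X (Fin.snoc Y w : Fin (t + 1) → W)} =
      (Fintype.card F ^ s - Fintype.card F ^ t) * Fintype.card F ^ (finrank F W - (s + t)) := by
  set R := Submodule.span F (Set.range (gram B Y X))
  have hR : #{a : Fin s → F | a ∉ R} = Fintype.card F ^ s - Fintype.card F ^ t := by
    rw [← compl_filter, card_compl, Fintype.card_fun, Fintype.card_fin, ← Fintype.card_subtype,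
      card_eq_pow_finrank (K := F) (V := R), finrank_span_eq_card hY.2, Fintype.card_fin]
  simp only [isOppositeFrame_snoc_iff hB hY]
  rw [card_eq_sum_card_fiberwise (f := fun w i => B w (X i)) (t := {a | a ∉ R})
    fun w hw => by simpa using (mem_filter.1 hw).2.2, ← hR, sum_const_nat]
  intro a ha
  have hfibre := card_filter_dual_eq ((hY.linearIndependent_sumElim hX).map' B.flip
    (LinearMap.separatingRight_iff_flip_ker_eq_bot.1 hnd)) (Sum.elim 0 a)
  rw [Fintype.card_sum, Fintype.card_fin, Fintype.card_fin, add_comm t s] at hfibre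
  rw [← hfibre, filter_filter]
  congr 1
  ext w
  simp only [mem_filter, mem_univ, true_and, Sum.forall, Function.comp_apply, Sum.elim_inl,
    Sum.elim_inr, LinearMap.flip_apply, Pi.zero_apply, and_assoc, funext_iff]
  refine and_congr_right fun _ => ⟨And.right, fun h => ⟨?_, h⟩⟩
  exact (funext h : _ = a) ▸ (mem_filter.1 ha).2

theorem card_isOppositeFrame_extensions (hB : B.IsAlt) (hnd : B.SeparatingRight) {k s : ℕ}
    (hks : k ≤ s) {X : Fin s → W} (hX : IsFrame B X) {Y : Fin k → W}
    (hY : IsOppositeFrame B X Y) :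
    #{Z : Fin s → W | IsOppositeFrame B X Z ∧ Z ∘ Fin.castLE hks = Y} =
      ∏ j ∈ Ico k s, (Fintype.card F ^ s - Fintype.card F ^ j) *
        Fintype.card F ^ (finrank F W - (s + j)) :=
  card_extensions (Q := fun t (Z : Fin t → W) => IsOppositeFrame B X Z)
    (r := fun t => (Fintype.card F ^ s - Fintype.card F ^ t) *
      Fintype.card F ^ (finrank F W - (s + t)))
    (fun t _ hZ => hZ.comp (Fin.castSucc_injective t)) hks
    (fun _ _ _ hY => card_snoc_isOppositeFrame hB hnd hX hY) hY

end FrameCounting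

section Combinations

variable {F W ι κ μ : Type*} [Field F] [AddCommGroup W] [Module F W] [Fintype κ]

/-- The tuple of linear combinations of `X` whose coefficients are the rows of `u`. -/
def combine (u : ι → κ → F) (X : κ → W) : ι → W :=
  Fintype.linearCombination F X ∘ u

theorem combine_apply (u : ι → κ → F) (X : κ → W) (j : ι) : combine u X j = ∑ i, u j i • X i :=
  Fintype.linearCombination_apply F X (u j)

theorem combine_combine [Fintype ι] (c : μ → ι → F) (u : ι → κ → F) (X : κ → W) :
    combine c (combine u X) = combine (combine c u) X := by
  funext p
  rw [combine_apply, combine, combine, Function.comp_apply, combine_apply, map_sum]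
  simp only [map_smul, Function.comp_apply]

theorem span_range_combine {u : ι → κ → F} (hu : Submodule.span F (Set.range u) = ⊤)
    (X : κ → W) : Submodule.span F (Set.range (combine u X)) = Submodule.span F (Set.range X) := by
  rw [combine, Set.range_comp, ← Submodule.map_span, hu, Submodule.map_top,
    Fintype.range_linearCombination]

theorem combine_injective {u : ι → κ → F} (hu : Submodule.span F (Set.range u) = ⊤) :
    Function.Injective (combine (W := W) u) := by
  intro X X' h
  have heq : Fintype.linearCombination F X = Fintype.linearCombination F X' :=
    LinearMap.ext_on hu (by rintro _ ⟨j, rfl⟩; exact congrFun h j)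
  funext i
  simpa using LinearMap.congr_fun heq (Pi.single i 1)

theorem exists_linearIndependent_extension {E : Type*} [AddCommGroup E] [Module F E] {k s : ℕ}
    (hks : k ≤ s) (hs : s ≤ finrank F E) {u : Fin k → E} (hu : LinearIndependent F u) :
    ∃ g : Fin s → E, LinearIndependent F g ∧ g ∘ Fin.castLE hks = u := by
  induction s, hks using Nat.le_induction with
  | base => exact ⟨u, hu, rfl⟩
  | succ s hks ih =>
    obtain ⟨g, hg, rfl⟩ := ih (by omega)
    obtain ⟨x, hx⟩ := exists_linearIndependent_snoc_of_lt_finrank hg hs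
    refine ⟨Fin.snoc g x, hx, funext fun j => ?_⟩
    exact Fin.snoc_castSucc (α := fun _ => E) x g (Fin.castLE hks j)

end Combinations

section RestrictSum

variable {W R : Type*} [Fintype W] [CommSemiring R] {k s : ℕ}

/-- The sum of `f` over all extensions of a `k`-tuple to an `s`-tuple. -/
noncomputable def restrictSum (hks : k ≤ s) (f : (Fin s → W) → R) (Z : Fin k → W) : R :=
  ∑ X with X ∘ Fin.castLE hks = Z, f X

theorem restrictSum_self (f : (Fin s → W) → R) : restrictSum le_rfl f = f := by
  funext Z
  simp [restrictSum, sum_filter]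

theorem restrictSum_zero (f : (Fin s → W) → R) (Z : Fin 0 → W) :
    restrictSum s.zero_le f Z = ∑ X, f X := by
  rw [restrictSum, filter_true_of_mem fun X _ => Subsingleton.elim _ _]

theorem sum_mul_comp_castLE (hks : k ≤ s) (f : (Fin s → W) → R) (Θ : (Fin k → W) → R) :
    ∑ X, f X * Θ (X ∘ Fin.castLE hks) = ∑ Z, restrictSum hks f Z * Θ Z := by
  rw [← sum_fiberwise univ fun X : Fin s → W => X ∘ Fin.castLE hks]
  refine sum_congr rfl fun Z _ => ?_
  rw [restrictSum, sum_mul]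
  exact sum_congr rfl fun X hX => by rw [(mem_filter.1 hX).2]

theorem exists_minimal_restrictSum {f : (Fin s → W) → R} (hf : f ≠ 0)
    (hsum : ∑ X, f X = 0) :
    ∃ k, 1 ≤ k ∧ ∃ hks : k ≤ s, restrictSum hks f ≠ 0 ∧
      ∀ p (hps : p ≤ s), p < k → restrictSum hps f = 0 := by
  have hex : ∃ k, ∃ hks : k ≤ s, restrictSum hks f ≠ 0 :=
    ⟨s, le_rfl, by rwa [restrictSum_self]⟩
  obtain ⟨hks, hne⟩ := Nat.find_spec hex
  refine ⟨Nat.find hex, Nat.one_le_iff_ne_zero.2 fun hzero => ?_, hks, hne, fun p hps hp => ?_⟩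
  · obtain ⟨h0, hne0⟩ := (Nat.find_eq_zero hex).1 hzero
    exact hne0 (funext fun Z => (restrictSum_zero f Z).trans hsum)
  · by_contra hpne
    exact Nat.find_min hex hp ⟨hps, hpne⟩

variable {F : Type*} [Field F] [AddCommGroup W] [Module F W] {f : (Fin s → W) → R}

theorem sum_mul_combine
    (hf : ∀ X Y, Submodule.span F (Set.range X) = Submodule.span F (Set.range Y) → f X = f Y)
    (hks : k ≤ s) {u : Fin k → Fin s → F} (hu : LinearIndependent F u) (Θ : (Fin k → W) → R) :
    ∑ X, f X * Θ (combine u X) = ∑ Z, restrictSum hks f Z * Θ Z := by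
  obtain ⟨g, hg, rfl⟩ := exists_linearIndependent_extension hks (by simp) hu
  have htop := hg.span_eq_top_of_card_eq_finrank' (by simp)
  rw [← sum_mul_comp_castLE, ← (Finite.injective_iff_bijective.1 (combine_injective htop)).sum_comp
    fun X => f X * Θ (X ∘ Fin.castLE hks)]
  exact sum_congr rfl fun X _ => by rw [hf _ _ (span_range_combine htop X)]; rfl

theorem sum_mul_combine_eq_zero
    (hf : ∀ X Y, Submodule.span F (Set.range X) = Submodule.span F (Set.range Y) → f X = f Y)
    (hzero : ∀ p (hps : p ≤ s), p < k → restrictSum hps f = 0)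
    {u : Fin k → Fin s → F} (hu : ¬ LinearIndependent F u) (Θ : (Fin k → W) → R) :
    ∑ X, f X * Θ (combine u X) = 0 := by
  obtain ⟨v, -, hvspan, hv⟩ := Submodule.exists_fun_fin_finrank_span_eq F (Set.range u)
  generalize hp : finrank F (Submodule.span F (Set.range u)) = p at v hvspan hv
  have hps : p ≤ s := by simpa using hv.fintype_card_le_finrank
  have hpk : p < k := by
    simpa [Set.finrank, hp] using mt linearIndependent_iff_card_le_finrank_span.2 hu
  have hcoeff (j : Fin k) : ∃ c : Fin p → F, ∑ i, c i • v i = u j := by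
    have : u j ∈ Submodule.span F (Set.range v) := hvspan ▸ Submodule.subset_span ⟨j, rfl⟩
    exact (Submodule.mem_span_range_iff_exists_fun F).1 this
  choose c hc using hcoeff
  have hu_eq : u = combine c v := funext fun j => by rw [combine_apply, hc]
  calc ∑ X, f X * Θ (combine u X) = ∑ X, f X * Θ (combine c (combine v X)) := by
        simp only [combine_combine, hu_eq]
    _ = ∑ Z, restrictSum hps f Z * Θ (combine c Z) :=
        sum_mul_combine hf hps hv fun Z => Θ (combine c Z)
    _ = 0 := by simp [hzero p hps hpk]

end RestrictSum

section OppositeSpans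

variable {F W ι κ : Type*} [Field F] [AddCommGroup W] [Module F W] {B : W →ₗ[F] W →ₗ[F] F}

theorem linearIndependent_map_iff {E : Type*} [AddCommGroup E] [Module F E] {φ : W →ₗ[F] E}
    {v : ι → W} : LinearIndependent F (φ ∘ v) ↔
      LinearIndependent F v ∧ Disjoint (Submodule.span F (Set.range v)) (LinearMap.ker φ) :=
  ⟨fun h => ⟨h.of_comp, Submodule.range_ker_disjoint h⟩, fun h => h.1.map h.2⟩

theorem mem_orthogonalBilin_span_range {X : ι → W} {w : W} :
    w ∈ (Submodule.span F (Set.range X)).orthogonalBilin B ↔ ∀ i, B (X i) w = 0 := by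
  have : w ∈ (Submodule.span F (Set.range X)).orthogonalBilin B ↔
      Submodule.span F (Set.range X) ≤ LinearMap.ker (B.flip w) := Iff.rfl
  rw [this, Submodule.span_le, Set.range_subset_iff]
  rfl

theorem isOppositeFrame_iff (hB : B.IsRefl) {X : κ → W} {Y : ι → W} :
    IsOppositeFrame B X Y ↔ IsFrame B Y ∧ Disjoint (Submodule.span F (Set.range Y))
      ((Submodule.span F (Set.range X)).orthogonalBilin B) := by
  have hker : LinearMap.ker (LinearMap.pi fun i => B.flip (X i)) =
      (Submodule.span F (Set.range X)).orthogonalBilin B := by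
    ext w
    rw [LinearMap.mem_ker, mem_orthogonalBilin_span_range, funext_iff]
    exact forall_congr' fun i => hB.eq_iff
  have hmap := linearIndependent_map_iff (φ := LinearMap.pi fun i => B.flip (X i)) (v := Y)
  rw [hker] at hmap
  rw [IsOppositeFrame, IsFrame, ← and_congr_right fun hY => (hmap.trans (and_iff_right hY.1))]
  rfl

theorem isFrame_iff {X : ι → W} : IsFrame B X ↔ LinearIndependent F X ∧
    Submodule.span F (Set.range X) ≤ (Submodule.span F (Set.range X)).orthogonalBilin B := by
  rw [IsFrame, Submodule.span_le, Set.range_subset_iff]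
  simp only [SetLike.mem_coe, mem_orthogonalBilin_span_range]
  exact and_congr_right fun _ => forall_comm

theorem IsFrame.of_span_eq [Finite ι] {X Y : ι → W} (hX : IsFrame B X)
    (hspan : Submodule.span F (Set.range X) = Submodule.span F (Set.range Y)) : IsFrame B Y := by
  have := Fintype.ofFinite ι
  rw [isFrame_iff, linearIndependent_iff_card_eq_finrank_span, Set.finrank] at hX ⊢
  rwa [hspan] at hX

theorem isOppositeFrame_comm [Finite ι] (hB : B.IsAlt) {X Y : ι → W} (hX : IsFrame B X)
    (hY : IsFrame B Y) : IsOppositeFrame B X Y ↔ IsOppositeFrame B Y X := by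
  have := Fintype.ofFinite ι
  have htranspose : Matrix.of (gram B X Y) = -(Matrix.of (gram B Y X)).transpose := by
    ext i j
    exact (hB.neg (Y j) (X i)).symm
  have hlin (G : ι → ι → F) : LinearIndependent F G ↔ IsUnit (Matrix.of G) :=
    Matrix.linearIndependent_rows_iff_isUnit (A := Matrix.of G)
  rw [IsOppositeFrame, IsOppositeFrame, hlin, hlin, htranspose, IsUnit.neg_iff,
    Matrix.isUnit_transpose]
  simp only [hX, hY, true_and]

end OppositeSpans

section Spectrum

variable {F W : Type*} [Field F] [AddCommGroup W] [Module F W] [Fintype W]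
  {B : W →ₗ[F] W →ₗ[F] F} {s k : ℕ}

theorem eq_of_span_eq {R : Type*} [CommRing R] [IsDomain R] (hB : B.IsRefl) {f : (Fin s → W) → R}
    {μ : R} (hμ : μ ≠ 0) (hsupp : ∀ X, ¬ IsFrame B X → f X = 0)
    (heig : ∀ X, IsFrame B X → ∑ Y with IsOppositeFrame B X Y, f Y = μ * f X) {X Y : Fin s → W}
    (hspan : Submodule.span F (Set.range X) = Submodule.span F (Set.range Y)) : f X = f Y := by
  by_cases hX : IsFrame B X
  · have hopp (Z : Fin s → W) : IsOppositeFrame B X Z ↔ IsOppositeFrame B Y Z := by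
      rw [isOppositeFrame_iff hB, isOppositeFrame_iff hB, hspan]
    refine mul_left_cancel₀ hμ ?_
    rw [← heig X hX, ← heig Y (hX.of_span_eq hspan)]
    simp only [hopp]
  · rw [hsupp X hX, hsupp Y fun hY => hX (hY.of_span_eq hspan.symm)]

theorem restrictSum_eq_zero {R : Type*} [CommSemiring R] {f : (Fin s → W) → R}
    (hsupp : ∀ X, ¬ IsFrame B X → f X = 0) (hks : k ≤ s) {Y : Fin k → W} (hY : ¬ IsFrame B Y) :
    restrictSum hks f Y = 0 :=
  sum_eq_zero fun X hX => hsupp X fun hfr =>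
    hY ((mem_filter.1 hX).2 ▸ hfr.comp (Fin.castLE_injective hks))

variable [Fintype F]

local notation "q" => Fintype.card F

theorem mul_restrictSum {R : Type*} [CommRing R] (hB : B.IsAlt) (hnd : B.SeparatingRight)
    {f : (Fin s → W) → R} {μ : R} (hsupp : ∀ X, ¬ IsFrame B X → f X = 0)
    (heig : ∀ X, IsFrame B X → ∑ Y with IsOppositeFrame B X Y, f Y = μ * f X) (hks : k ≤ s)
    {Y : Fin k → W} (hY : IsFrame B Y) :
    μ * restrictSum hks f Y =
      (∏ j ∈ Ico k s, (q ^ s - q ^ j) * q ^ (finrank F W - (s + j)) : ℕ) *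
        ∑ X with LinearIndependent F (gram B Y X), f X := by
  have hrow (Z : Fin s → W) : μ * f Z = ∑ X with IsOppositeFrame B X Z, f X := by
    by_cases hZ : IsFrame B Z
    · rw [← heig Z hZ, sum_filter, sum_filter]
      refine sum_congr rfl fun X _ => ?_
      by_cases hX : IsFrame B X
      · simp only [isOppositeFrame_comm hB hZ hX]
      · simp only [hsupp X hX, ite_self]
    · rw [hsupp Z hZ, mul_zero, filter_false_of_mem fun X _ h => hZ h.1, sum_empty]
  have hcount (X : Fin s → W) :
      ∑ Z with Z ∘ Fin.castLE hks = Y, (if IsOppositeFrame B X Z then f X else 0) =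
        if LinearIndependent F (gram B Y X) then
          (∏ j ∈ Ico k s, (q ^ s - q ^ j) * q ^ (finrank F W - (s + j)) : ℕ) * f X else 0 := by
    rw [← sum_filter, filter_filter, sum_const, nsmul_eq_mul]
    by_cases hX : IsFrame B X
    · split_ifs with hlin
      · rw [← card_isOppositeFrame_extensions hB hnd hks hX ⟨hY, hlin⟩]
        simp only [and_comm]
      · rw [filter_false_of_mem, card_empty, Nat.cast_zero, zero_mul]
        rintro Z - ⟨rfl, hZ⟩
        exact hlin (hZ.comp (Fin.castLE_injective hks)).2
    · simp only [hsupp X hX, mul_zero, ite_self]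
  calc μ * restrictSum hks f Y
      = ∑ Z with Z ∘ Fin.castLE hks = Y, ∑ X, if IsOppositeFrame B X Z then f X else 0 := by
        rw [restrictSum, mul_sum]
        exact sum_congr rfl fun Z _ => by rw [hrow, sum_filter]
    _ = _ := by rw [sum_comm, sum_congr rfl fun X _ => hcount X, ← sum_filter, mul_sum]

end Spectrum

section FourierTransform

variable {F W : Type*} [Field F] [AddCommGroup W] [Module F W] {s k : ℕ}

theorem tuplePairing_gram (B : W →ₗ[F] W →ₗ[F] F) (u : Fin k → Fin s → F) (Y : Fin k → W)
    (X : Fin s → W) : tuplePairing (Fin k) (dotProductBilin F F) u (gram B Y X) =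
      tuplePairing (Fin k) B Y (combine u X) := by
  simp [tuplePairing_apply, gram, combine_apply, dotProduct]

variable [Fintype F]

local notation "q" => Fintype.card F

variable {R : Type*} [CommRing R] [IsDomain R] {ψ : AddChar F R}

theorem sum_linearIndependent_mul_addChar (hψ : ψ ≠ 1) (G : Fin k → Fin s → F) :
    ∑ u, (∑ v with LinearIndependent F v, ψ (-tuplePairing (Fin k) (dotProductBilin F F) u v)) *
      ψ (tuplePairing (Fin k) (dotProductBilin F F) u G) =
        if LinearIndependent F G then (q : R) ^ (s * k) else 0 := by
  have hsep : (tuplePairing (Fin k) (dotProductBilin F F (m := Fin s))).SeparatingRight :=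
    separatingRight_tuplePairing fun y hy => dotProduct_eq_zero _ fun x => by
      simpa [dotProduct_comm] using hy x
  have := fourier_inversion hψ hsep (fun v => if LinearIndependent F v then 1 else 0) G
  simpa [ite_mul, ← sum_filter, pow_mul] using this

theorem sum_addChar_neg_tuplePairing (hψ : ψ ≠ 1) {u : Fin k → Fin s → F}
    (hu : LinearIndependent F u) :
    ∑ v with LinearIndependent F v, ψ (-tuplePairing (Fin k) (dotProductBilin F F) u v) =
      (-1) ^ k * (q : R) ^ k.choose 2 := by
  have hker : LinearMap.ker (-dotProductBilin F F : (Fin s → F) →ₗ[F] (Fin s → F) →ₗ[F] F) = ⊥ :=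
    LinearMap.ker_eq_bot'.2 fun x hx => dotProduct_eq_zero _ fun y => by
      simpa using LinearMap.congr_fun hx y
  rw [← sum_addChar_linearIndependent hψ (hu.map' _ hker)]
  simp [tuplePairing_apply]

theorem card_linearIndependent_rows (hks : k ≤ s) :
    #{u : Fin k → Fin s → F | LinearIndependent F u} = ∏ j ∈ range k, (q ^ s - q ^ j) := by
  rw [← Fintype.card_subtype, ← Nat.card_eq_fintype_card, card_linearIndependent (by simpa),
    finrank_fin_fun, prod_range]

theorem sum_linearIndependent_gram [Fintype W] (hψ : ψ ≠ 1) (B : W →ₗ[F] W →ₗ[F] F)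
    {f : (Fin s → W) → R}
    (hf : ∀ X Y, Submodule.span F (Set.range X) = Submodule.span F (Set.range Y) → f X = f Y)
    (hks : k ≤ s) (hzero : ∀ p (hps : p ≤ s), p < k → restrictSum hps f = 0) (Y : Fin k → W) :
    (q : R) ^ (s * k) * ∑ X with LinearIndependent F (gram B Y X), f X =
      (∏ j ∈ range k, (q ^ s - q ^ j) : ℕ) * ((-1) ^ k * (q : R) ^ k.choose 2) *
        ∑ Z, restrictSum hks f Z * ψ (tuplePairing (Fin k) B Y Z) := by
  set coeff := fun u : Fin k → Fin s → F =>
    ∑ v with LinearIndependent F v, ψ (-tuplePairing (Fin k) (dotProductBilin F F) u v)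
  have expand (X : Fin s → W) : (if LinearIndependent F (gram B Y X) then (q : R) ^ (s * k) * f X
      else 0) = ∑ u, coeff u * (f X * ψ (tuplePairing (Fin k) B Y (combine u X))) := by
    rw [← ite_zero_mul, ← sum_linearIndependent_mul_addChar hψ, sum_mul]
    refine sum_congr rfl fun u _ => ?_
    rw [tuplePairing_gram]
    ring
  have transform (u : Fin k → Fin s → F) :
      coeff u * ∑ X, f X * ψ (tuplePairing (Fin k) B Y (combine u X)) =
        if LinearIndependent F u then (-1) ^ k * (q : R) ^ k.choose 2 *
          ∑ Z, restrictSum hks f Z * ψ (tuplePairing (Fin k) B Y Z) else 0 := by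
    split_ifs with hu
    · rw [sum_mul_combine hf hks hu fun Z => ψ (tuplePairing (Fin k) B Y Z)]
      exact congrArg (· * _) (sum_addChar_neg_tuplePairing hψ hu)
    · rw [sum_mul_combine_eq_zero hf hzero hu fun Z => ψ (tuplePairing (Fin k) B Y Z), mul_zero]
  rw [mul_sum, sum_filter, sum_congr rfl fun X _ => expand X, sum_comm]
  simp only [← mul_sum, transform]
  rw [← sum_filter, sum_const, card_linearIndependent_rows hks, nsmul_eq_mul, ← mul_assoc]

end FourierTransform

theorem choose_two_add_mul_add_le {m s k : ℕ} (hs : s ≤ m) (hk : k ≤ s) (hk1 : 1 ≤ k) :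
    k.choose 2 + m * k + m ≤ s * k + ∑ j ∈ range k, (2 * m - (s + j)) := by
  have hsum : s * k + ∑ j ∈ range k, (2 * m - (s + j)) + k.choose 2 = 2 * m * k := by
    have hterm : ∀ j ∈ range k, s + (2 * m - (s + j)) + j = 2 * m := fun j hj => by
      have := mem_range.1 hj
      omega
    rw [Nat.choose_two_right, ← sum_range_id, mul_comm s, ← smul_eq_mul, ← card_range k,
      ← sum_const, card_range, ← sum_add_distrib, ← sum_add_distrib, sum_congr rfl hterm, sum_const,
      card_range, smul_eq_mul, mul_comm]
  have htri : 2 * k.choose 2 + k = k * k := by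
    obtain ⟨k, rfl⟩ := Nat.exists_eq_add_of_le' hk1
    rw [Nat.choose_two_right, Nat.mul_div_cancel' (Nat.even_mul_pred_self _).two_dvd]
    simp only [Nat.add_sub_cancel]
    ring
  nlinarith [Nat.mul_le_mul (Nat.sub_le_sub_right (hk.trans hs) 1) hk1]

section EigenvalueBound

variable {F W : Type*} [Field F] [Fintype F] [AddCommGroup W] [Module F W] [Fintype W]
  {B : W →ₗ[F] W →ₗ[F] F} {s k : ℕ} {f : (Fin s → W) → ℂ} {μ : ℂ}

local notation "q" => Fintype.card F

theorem norm_restrictSum_le (hB : B.IsAlt) (hnd : B.SeparatingRight)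
    (hsupp : ∀ X, ¬ IsFrame B X → f X = 0)
    (heig : ∀ X, IsFrame B X → ∑ Y with IsOppositeFrame B X Y, f Y = μ * f X) (hμ : μ ≠ 0)
    (hks : k ≤ s) (hzero : ∀ p (hps : p ≤ s), p < k → restrictSum hps f = 0) {ψ : AddChar F ℂ}
    (hψ : ψ ≠ 1) (Y : Fin k → W) :
    ‖μ‖ * (q : ℝ) ^ (s * k) * ‖restrictSum hks f Y‖ ≤
      (∏ j ∈ Ico k s, (q ^ s - q ^ j) * q ^ (finrank F W - (s + j)) : ℕ) *
        (∏ j ∈ range k, (q ^ s - q ^ j) : ℕ) * (q : ℝ) ^ k.choose 2 *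
          ‖∑ Z, restrictSum hks f Z * ψ (tuplePairing (Fin k) B Y Z)‖ := by
  by_cases hY : IsFrame B Y
  · have hmul := mul_restrictSum hB hnd hsupp heig hks hY
    have hgram := sum_linearIndependent_gram hψ B
      (fun _ _ => eq_of_span_eq hB.isRefl hμ hsupp heig) hks hzero Y
    refine le_of_eq ?_
    calc ‖μ‖ * (q : ℝ) ^ (s * k) * ‖restrictSum hks f Y‖
        = ‖(q : ℂ) ^ (s * k) * (μ * restrictSum hks f Y)‖ := by
          simp only [norm_mul, norm_pow, Complex.norm_natCast]
          ring
      _ = _ := by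
          rw [hmul, mul_left_comm, hgram]
          simp only [norm_mul, norm_pow, Complex.norm_natCast, norm_neg, norm_one, one_pow]
          ring
  · rw [restrictSum_eq_zero hsupp hks hY, norm_zero, mul_zero]
    positivity

theorem norm_mul_pow_le (hB : B.IsAlt) (hnd : B.SeparatingRight)
    (hsupp : ∀ X, ¬ IsFrame B X → f X = 0)
    (heig : ∀ X, IsFrame B X → ∑ Y with IsOppositeFrame B X Y, f Y = μ * f X) (hμ : μ ≠ 0)
    {m : ℕ} (hm : finrank F W = 2 * m) (hks : k ≤ s) (hne : restrictSum hks f ≠ 0)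
    (hzero : ∀ p (hps : p ≤ s), p < k → restrictSum hps f = 0) :
    ‖μ‖ * (q : ℝ) ^ (s * k) ≤
      (∏ j ∈ Ico k s, (q ^ s - q ^ j) * q ^ (2 * m - (s + j)) : ℕ) *
        (∏ j ∈ range k, (q ^ s - q ^ j) : ℕ) * (q : ℝ) ^ (k.choose 2 + m * k) := by
  set ψ := AddChar.FiniteField.primitiveChar_to_Complex F
  have hψ : ψ ≠ 1 := by
    simpa using AddChar.FiniteField.primitiveChar_to_Complex_isPrimitive F one_ne_zero
  have pointwise := norm_restrictSum_le hB hnd hsupp heig hμ hks hzero hψ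
  rw [hm] at pointwise
  generalize (∏ j ∈ Ico k s, (q ^ s - q ^ j) * q ^ (2 * m - (s + j)) : ℕ) = c at *
  generalize (∏ j ∈ range k, (q ^ s - q ^ j) : ℕ) = N at *
  generalize restrictSum hks f = h at *
  have hcard : (Fintype.card (Fin k → W) : ℝ) = ((q : ℝ) ^ (m * k)) ^ 2 := by
    rw [Fintype.card_fun, Module.card_eq_pow_finrank (K := F) (V := W), hm, Fintype.card_fin]
    push_cast
    ring
  have hpos : 0 < ∑ Y, ‖h Y‖ ^ 2 := by
    obtain ⟨Z, hZ⟩ := Function.ne_iff.1 hne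
    exact sum_pos' (fun _ _ => by positivity)
      ⟨Z, mem_univ _, pow_pos (norm_pos_iff.2 hZ) 2⟩
  refine (sq_le_sq₀ (by positivity) (by positivity)).1 (le_of_mul_le_mul_right ?_ hpos)
  calc (‖μ‖ * (q : ℝ) ^ (s * k)) ^ 2 * ∑ Y, ‖h Y‖ ^ 2
      = ∑ Y, (‖μ‖ * (q : ℝ) ^ (s * k) * ‖h Y‖) ^ 2 := by simp only [mul_sum, mul_pow]
    _ ≤ ∑ Y, (c * N * (q : ℝ) ^ k.choose 2 *
          ‖∑ Z, h Z * ψ (tuplePairing (Fin k) B Y Z)‖) ^ 2 :=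
        sum_le_sum fun Y _ => pow_le_pow_left₀ (by positivity) (pointwise Y) 2
    _ = (c * N * (q : ℝ) ^ k.choose 2) ^ 2 * (((q : ℝ) ^ (m * k)) ^ 2 * ∑ Y, ‖h Y‖ ^ 2) := by
        simp only [mul_pow _ ‖_‖, ← mul_sum]
        rw [plancherel hψ (separatingRight_tuplePairing hnd), hcard]
    _ = _ := by rw [pow_add]; ring

theorem norm_eigenvalue_mul_pow_le (hB : B.IsAlt) (hnd : B.SeparatingRight) {m : ℕ}
    (hm : finrank F W = 2 * m) (hsm : s ≤ m) (hf : f ≠ 0) (hsum : ∑ X, f X = 0)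
    (hsupp : ∀ X, ¬ IsFrame B X → f X = 0)
    (heig : ∀ X, IsFrame B X → ∑ Y with IsOppositeFrame B X Y, f Y = μ * f X) :
    ‖μ‖ * (q : ℝ) ^ m ≤ (∏ j ∈ range s, (q ^ s - q ^ j) * q ^ (2 * m - (s + j)) : ℕ) := by
  rcases eq_or_ne μ 0 with rfl | hμ
  · rw [norm_zero, zero_mul]
    positivity
  obtain ⟨k, hk1, hks, hne, hzero⟩ := exists_minimal_restrictSum hf hsum
  have hle := norm_mul_pow_le hB hnd hsupp heig hμ hm hks hne hzero
  have hsplit : ∏ j ∈ range s, (q ^ s - q ^ j) * q ^ (2 * m - (s + j)) =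
      (∏ j ∈ Ico k s, (q ^ s - q ^ j) * q ^ (2 * m - (s + j))) *
        (∏ j ∈ range k, (q ^ s - q ^ j)) * q ^ ∑ j ∈ range k, (2 * m - (s + j)) := by
    rw [← prod_range_mul_prod_Ico _ hks, prod_mul_distrib, prod_pow_eq_pow_sum]
    ring
  rw [hsplit]
  generalize ∏ j ∈ Ico k s, (q ^ s - q ^ j) * q ^ (2 * m - (s + j)) = c at hle
  generalize ∏ j ∈ range k, (q ^ s - q ^ j) = N at hle
  have hq : (1 : ℝ) ≤ q := by exact_mod_cast Fintype.card_pos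
  refine le_of_mul_le_mul_left ?_ (show (0 : ℝ) < (q : ℝ) ^ (k.choose 2 + m * k) by positivity)
  push_cast
  set e := ∑ j ∈ range k, (2 * m - (s + j))
  calc (q : ℝ) ^ (k.choose 2 + m * k) * (‖μ‖ * (q : ℝ) ^ m)
      = ‖μ‖ * (q : ℝ) ^ (k.choose 2 + m * k + m) := by ring
    _ ≤ ‖μ‖ * (q : ℝ) ^ (s * k + e) :=
        mul_le_mul_of_nonneg_left (pow_le_pow_right₀ hq (choose_two_add_mul_add_le hsm hks hk1))
          (norm_nonneg μ)
    _ = ‖μ‖ * (q : ℝ) ^ (s * k) * (q : ℝ) ^ e := by ring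
    _ ≤ c * N * (q : ℝ) ^ (k.choose 2 + m * k) * (q : ℝ) ^ e := by gcongr
    _ = _ := by ring

end EigenvalueBound

section RatioBound

open Matrix

variable {Ω : Type*} [Fintype Ω] {A : Matrix Ω Ω ℝ} {d τ : ℝ}

/-- Hoffman's matrix `A + τ I - (d + τ)/|Ω| J`, where `J` is the all-ones matrix; subtracting the
multiple of `J` moves the eigenvalue of the all-ones vector from `d + τ` to `0`. -/
noncomputable def hoffmanMatrix (A : Matrix Ω Ω ℝ) (d τ : ℝ) : Matrix Ω Ω ℝ :=
  A + τ • 1 - ((d + τ) / Fintype.card Ω) • of fun _ _ => 1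

theorem hoffmanMatrix_mulVec (f : Ω → ℝ) (x : Ω) :
    (hoffmanMatrix A d τ *ᵥ f) x =
      (A *ᵥ f) x + τ * f x - (d + τ) / Fintype.card Ω * ∑ y, f y := by
  simp only [hoffmanMatrix, sub_mulVec, add_mulVec, smul_mulVec, one_mulVec, Pi.sub_apply,
    Pi.add_apply, Pi.smul_apply, smul_eq_mul]
  simp only [mulVec, dotProduct, of_apply, one_mul]

theorem sum_hoffmanMatrix_mulVec (hA : A.IsSymm) (hrow : ∀ x, ∑ y, A x y = d) (f : Ω → ℝ) :
    ∑ x, (hoffmanMatrix A d τ *ᵥ f) x = 0 := by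
  have hsum : ∑ x, (A *ᵥ f) x = d * ∑ y, f y := by
    simp only [mulVec, dotProduct]
    rw [sum_comm]
    simp only [hA.apply, ← sum_mul, hrow, mul_sum]
  have hcard : (Fintype.card Ω : ℝ) * ((d + τ) / Fintype.card Ω * ∑ y, f y) =
      (d + τ) * ∑ y, f y := by
    rcases isEmpty_or_nonempty Ω with hΩ | hΩ
    · simp
    · field_simp
  simp only [hoffmanMatrix_mulVec]
  rw [sum_sub_distrib, sum_add_distrib, hsum, ← mul_sum, sum_const, card_univ, nsmul_eq_mul, hcard]
  ring

theorem posSemidef_hoffmanMatrix (hA : A.IsSymm) (hrow : ∀ x, ∑ y, A x y = d)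
    (heig : ∀ f : Ω → ℝ, f ≠ 0 → ∑ x, f x = 0 → ∀ μ : ℝ, A *ᵥ f = μ • f → -τ ≤ μ) :
    (hoffmanMatrix A d τ).PosSemidef := by
  have hherm : (hoffmanMatrix A d τ).IsHermitian := by
    ext x y
    simp [hoffmanMatrix, hA.apply x y, one_apply, eq_comm]
  rw [hherm.posSemidef_iff_eigenvalues_nonneg]
  intro i
  set f : Ω → ℝ := (hherm.eigenvectorBasis i).ofLp
  set μ := hherm.eigenvalues i
  have hf0 : f ≠ 0 := by
    simpa [f] using hherm.eigenvectorBasis.toBasis.ne_zero i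
  have hμ : hoffmanMatrix A d τ *ᵥ f = μ • f := hherm.mulVec_eigenvectorBasis i
  have hzero : μ = 0 ∨ ∑ x, f x = 0 := by
    simpa [hμ, ← mul_sum] using sum_hoffmanMatrix_mulVec (τ := τ) hA hrow f
  rcases hzero with hμ0 | hsum
  · exact hμ0.ge
  · have hAf : A *ᵥ f = (μ - τ) • f := by
      ext x
      have := congrFun hμ x
      rw [hoffmanMatrix_mulVec, hsum, mul_zero, sub_zero] at this
      simp only [Pi.smul_apply, smul_eq_mul] at this ⊢
      linarith
    simpa using heig f hf0 hsum _ hAf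

theorem card_mul_le_of_coclique (hA : A.IsSymm) (hrow : ∀ x, ∑ y, A x y = d) (hτ : 0 ≤ τ)
    (heig : ∀ f : Ω → ℝ, f ≠ 0 → ∑ x, f x = 0 → ∀ μ : ℝ, A *ᵥ f = μ • f → -τ ≤ μ)
    {G : Finset Ω} (hG : ∀ x ∈ G, ∀ y ∈ G, A x y = 0) :
    #G * (d + τ) ≤ τ * Fintype.card Ω := by
  rcases G.eq_empty_or_nonempty with rfl | hne
  · simpa using mul_nonneg hτ (Nat.cast_nonneg _)
  set f : Ω → ℝ := fun x => if x ∈ G then 1 else 0 with hf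
  have hfsum : ∑ x, f x = #G := by simp [hf]
  have hAf : ∀ x ∈ G, (A *ᵥ f) x = 0 := fun x hx => by
    simpa [mulVec, dotProduct, hf] using sum_eq_zero (hG x hx)
  have hquad : f ⬝ᵥ (hoffmanMatrix A d τ *ᵥ f) = #G * (τ - (d + τ) / Fintype.card Ω * #G) := by
    simp only [dotProduct, hf, ite_mul, one_mul, zero_mul, sum_ite_mem, univ_inter]
    rw [← nsmul_eq_mul, ← sum_const]
    refine sum_congr rfl fun x hx => ?_
    rw [hoffmanMatrix_mulVec, hAf x hx, hfsum]
    simp [hx]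
  have hnonneg := (posSemidef_hoffmanMatrix hA hrow heig).dotProduct_mulVec_nonneg f
  rw [star_trivial, hquad] at hnonneg
  have hcardG : (0 : ℝ) < #G := by exact_mod_cast hne.card_pos
  have hΩ : (0 : ℝ) < Fintype.card Ω := hcardG.trans_le (by exact_mod_cast card_le_univ G)
  have := nonneg_of_mul_nonneg_right hnonneg hcardG
  field_simp at this
  linarith

end RatioBound

section OppositionMatrix

open Matrix

variable {F W : Type*} [Field F] [AddCommGroup W] [Module F W] {B : W →ₗ[F] W →ₗ[F] F} {s m : ℕ}

/-- The adjacency matrix of the opposition graph on the frames of length `s`. -/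
noncomputable def oppositionMatrix (B : W →ₗ[F] W →ₗ[F] F) (s : ℕ) :
    Matrix {X : Fin s → W // IsFrame B X} {X : Fin s → W // IsFrame B X} ℝ :=
  of fun X Y => if IsOppositeFrame B X.1 Y.1 then 1 else 0

theorem isSymm_oppositionMatrix (hB : B.IsAlt) : (oppositionMatrix B s).IsSymm := by
  ext X Y
  simp only [oppositionMatrix, transpose_apply, of_apply, isOppositeFrame_comm hB Y.2 X.2]

theorem sum_extend_isFrame [Fintype W] {R : Type*} [AddCommMonoid R] (φ : (Fin s → W) → R)
    (hφ : ∀ X, ¬ IsFrame B X → φ X = 0) : ∑ X : {X : Fin s → W // IsFrame B X}, φ X = ∑ X, φ X :=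
  Fintype.sum_of_injective _ Subtype.val_injective _ _
    (fun X hX => hφ X fun h => hX ⟨⟨X, h⟩, rfl⟩) fun _ => rfl

theorem oppositionMatrix_mulVec [Fintype W] (φ : (Fin s → W) → ℝ)
    (X : {X : Fin s → W // IsFrame B X}) :
    (oppositionMatrix B s *ᵥ fun Y => φ Y) X = ∑ Y with IsOppositeFrame B X.1 Y, φ Y := by
  rw [sum_filter, ← sum_extend_isFrame (B := B) _ fun Y hY => if_neg fun h => hY h.1]
  simp only [oppositionMatrix, mulVec, dotProduct, of_apply, ite_mul, one_mul, zero_mul]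

variable [Fintype F]

local notation "q" => Fintype.card F

theorem sum_oppositionMatrix [Fintype W] (hB : B.IsAlt) (hnd : B.SeparatingRight)
    (X : {X : Fin s → W // IsFrame B X}) :
    ∑ Y, oppositionMatrix B s X Y =
      (∏ j ∈ range s, (q ^ s - q ^ j) * q ^ (finrank F W - (s + j)) : ℕ) := by
  have hcard := card_isOppositeFrame_extensions hB hnd s.zero_le X.2 (Y := Fin.elim0)
    ⟨⟨linearIndependent_empty_type, fun i => i.elim0⟩, linearIndependent_empty_type⟩
  rw [← range_eq_Ico] at hcard
  have hmul := oppositionMatrix_mulVec (fun _ => 1) X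
  simp only [mulVec, dotProduct, mul_one, sum_const, nsmul_eq_mul] at hmul
  rw [hmul, ← hcard]
  exact congrArg (fun t => ((#t : ℕ) : ℝ))
    (filter_congr fun Z _ => (and_iff_left (Subsingleton.elim _ _)).symm)

theorem neg_le_of_oppositionMatrix_mulVec [Fintype W] (hB : B.IsAlt) (hnd : B.SeparatingRight)
    (hm : finrank F W = 2 * m) (hsm : s ≤ m) {f : {X : Fin s → W // IsFrame B X} → ℝ}
    (hf : f ≠ 0) (hsum : ∑ X, f X = 0) {μ : ℝ} (heig : oppositionMatrix B s *ᵥ f = μ • f) :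
    -((∏ j ∈ range s, (q ^ s - q ^ j) * q ^ (2 * m - (s + j)) : ℕ) / (q : ℝ) ^ m) ≤ μ := by
  set φ : (Fin s → W) → ℝ := Function.extend Subtype.val f fun _ => 0
  have hφ (X : {X : Fin s → W // IsFrame B X}) : φ X = f X :=
    Subtype.val_injective.extend_apply f _ X
  have hφ0 (X) (hX : ¬ IsFrame B X) : φ X = 0 :=
    Function.extend_apply' f _ X fun ⟨Y, hY⟩ => hX (hY ▸ Y.2)
  have hφne : (fun X => (φ X : ℂ)) ≠ 0 := fun h => hf <| funext fun X => by
    simpa [hφ] using congrFun h X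
  have hφsum : ∑ X, (φ X : ℂ) = 0 := by
    rw [← Complex.ofReal_sum, ← sum_extend_isFrame φ hφ0, sum_congr rfl fun X _ => hφ X, hsum,
      Complex.ofReal_zero]
  have hφeig (X) (hX : IsFrame B X) : ∑ Y with IsOppositeFrame B X Y, (φ Y : ℂ) = μ * φ X := by
    have hfX := congrFun heig ⟨X, hX⟩
    simp only [← funext hφ] at hfX
    rw [oppositionMatrix_mulVec] at hfX
    rw [← Complex.ofReal_sum, hfX, Pi.smul_apply, smul_eq_mul, Complex.ofReal_mul]
  have hnorm := norm_eigenvalue_mul_pow_le hB hnd hm hsm hφne hφsum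
    (fun X hX => by rw [hφ0 X hX, Complex.ofReal_zero]) hφeig
  rw [Complex.norm_real, Real.norm_eq_abs, ← le_div_iff₀ (by positivity)] at hnorm
  exact neg_le_of_abs_le hnorm

theorem card_mul_le_of_pairwise_not_isOppositeFrame [Finite W] (hB : B.IsAlt)
    (hnd : B.Nondegenerate) (hm : finrank F W = 2 * m) (hsm : s ≤ m) {G : Finset (Fin s → W)}
    (hframe : ∀ X ∈ G, IsFrame B X) (hG : ∀ X ∈ G, ∀ Y ∈ G, ¬ IsOppositeFrame B X Y) :
    #G * ((q : ℝ) ^ m + 1) ≤ (∏ j ∈ range s, (q ^ (2 * m - j) - q ^ j) : ℕ) := by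
  have := Fintype.ofFinite W
  set d : ℕ := ∏ j ∈ range s, (q ^ s - q ^ j) * q ^ (2 * m - (s + j))
  have hdpos : 0 < d := prod_pos fun j hj => Nat.mul_pos
    (Nat.sub_pos_of_lt (Nat.pow_lt_pow_right Fintype.one_lt_card (mem_range.1 hj))) (by positivity)
  have hratio := card_mul_le_of_coclique (A := oppositionMatrix B s) (d := d)
    (τ := d / (q : ℝ) ^ m) (isSymm_oppositionMatrix hB)
    (fun X => by rw [sum_oppositionMatrix hB hnd.2, hm])
    (by positivity)
    (fun f hf hsum μ heig => neg_le_of_oppositionMatrix_mulVec hB hnd.2 hm hsm hf hsum heig)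
    (G := G.subtype (IsFrame B))
    (fun X hX Y hY => if_neg (hG _ (mem_subtype.1 hX) _ (mem_subtype.1 hY)))
  rw [card_subtype, filter_true_of_mem hframe, Fintype.card_subtype, card_frames hB hnd.1, hm]
    at hratio
  have hd' : (0 : ℝ) < d := by exact_mod_cast hdpos
  field_simp at hratio
  linarith

end OppositionMatrix

section Numerics

variable {q m s : ℕ}

theorem gaussq_eq_prod_range (hsm : s ≤ m) :
    gaussq q m s = ∏ i ∈ range s, ((q : ℝ) ^ (m - i) - 1) / ((q : ℝ) ^ (s - i) - 1) := by
  rw [gaussq, ← prod_range_reflect, ← Ico_add_one_right_eq_Icc, prod_Ico_eq_prod_range]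
  refine prod_congr rfl fun i hi => ?_
  have := mem_range.1 hi
  congr 3 <;> omega

theorem prod_pow_add_one_eq_mul_prod_Icc (hs : 1 ≤ s) :
    ∏ i ∈ range s, ((q : ℝ) ^ (m - i) + 1) =
      ((q : ℝ) ^ m + 1) * ∏ i ∈ Icc 1 (s - 1), ((q : ℝ) ^ (m - i) + 1) := by
  rw [range_eq_Ico, prod_eq_prod_Ico_succ_bot hs, Nat.sub_zero, zero_add,
    ← Ico_add_one_right_eq_Icc, Nat.sub_add_cancel hs]

theorem prod_pow_sub_pow_eq_mul_gaussq (hq : 1 < q) (hsm : s ≤ m) :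
    ((∏ i ∈ range s, (q ^ (2 * m - i) - q ^ i) : ℕ) : ℝ) =
      (∏ i ∈ range s, (q ^ s - q ^ i) : ℕ) * gaussq q m s *
        ∏ i ∈ range s, ((q : ℝ) ^ (m - i) + 1) := by
  rw [gaussq_eq_prod_range hsm, Nat.cast_prod, Nat.cast_prod, ← prod_mul_distrib,
    ← prod_mul_distrib]
  refine prod_congr rfl fun i hi => ?_
  have his := mem_range.1 hi
  have hq' : (1 : ℝ) < q := by exact_mod_cast hq
  have hne : (q : ℝ) ^ (s - i) - 1 ≠ 0 := sub_ne_zero.2 (one_lt_pow₀ hq' (by omega)).ne'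
  have hs : (q : ℝ) ^ s = q ^ i * q ^ (s - i) := by rw [← pow_add, Nat.add_sub_cancel' his.le]
  have hm : (q : ℝ) ^ (2 * m - i) = q ^ i * q ^ (m - i) * q ^ (m - i) := by
    rw [← pow_add, ← pow_add]
    congr 1
    omega
  rw [Nat.cast_sub (Nat.pow_le_pow_right hq.le (by omega)),
    Nat.cast_sub (Nat.pow_le_pow_right hq.le his.le)]
  push_cast
  rw [hs, hm]
  field_simp
  ring

end Numerics

section SpacesBound

theorem card_linearIndependent_span_eq {F V : Type*} [Field F] [Fintype F] [AddCommGroup V]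
    [Module F V] [Fintype V] {s : ℕ} {S : Submodule F V} (hS : finrank F S = s) :
    #{X : Fin s → V | LinearIndependent F X ∧ Submodule.span F (Set.range X) = S} =
      ∏ i ∈ range s, (Fintype.card F ^ s - Fintype.card F ^ i) := by
  have hcard := card_linearIndependent (K := F) (V := S) (k := s) hS.ge
  rw [hS, ← prod_range fun i => Fintype.card F ^ s - Fintype.card F ^ i, Nat.card_eq_fintype_card,
    Fintype.card_subtype] at hcard
  rw [← hcard]
  symm
  have hcoe (Y : Fin s → S) : LinearIndependent F (fun i => (Y i : V)) ↔ LinearIndependent F Y :=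
    LinearMap.linearIndependent_iff S.subtype S.ker_subtype
  refine card_bij (fun Y _ i => (Y i : V)) (fun Y hY => ?_) (fun Y _ Y' _ hYY' => ?_) fun X hX => ?_
  · have hY := (hcoe Y).2 (mem_filter.1 hY).2
    refine mem_filter.2 ⟨mem_univ _, hY, Submodule.eq_of_le_of_finrank_eq ?_ ?_⟩
    · exact Submodule.span_le.2 (Set.range_subset_iff.2 fun i => (Y i).2)
    · rw [finrank_span_eq_card hY, Fintype.card_fin, hS]
  · exact funext fun i => Subtype.ext (congrFun hYY' i)
  · obtain ⟨hli, hspan⟩ := (mem_filter.1 hX).2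
    exact ⟨fun i => ⟨X i, hspan ▸ Submodule.subset_span ⟨i, rfl⟩⟩,
      mem_filter.2 ⟨mem_univ _, (hcoe _).1 hli⟩, rfl⟩

section Bperp

variable {F V : Type} [Field F] [AddCommGroup V] [Module F V] {B : V →ₗ[F] V →ₗ[F] F}

theorem bperp_eq_orthogonalBilin (S : Submodule F V) : bperp B S = S.orthogonalBilin B := by
  ext w
  simp [bperp, Submodule.mem_orthogonalBilin_iff]

theorem isTotIso_iff_le_orthogonalBilin {S : Submodule F V} :
    IsTotIso B S ↔ S ≤ S.orthogonalBilin B :=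
  ⟨fun h w hw u hu => h u hu w hw, fun h u hu _ hw => h hw u hu⟩

theorem spaceOpp_iff {S T : Submodule F V} :
    SpaceOpp B S T ↔ Disjoint T (S.orthogonalBilin B) := by
  rw [SpaceOpp, bperp_eq_orthogonalBilin, disjoint_comm, disjoint_iff]

theorem nondegenerate_of_nondegForm (halt : IsAltForm B) (hnd : NondegForm B) :
    B.Nondegenerate :=
  (LinearMap.IsAlt.isRefl halt).nondegenerate_iff_separatingLeft.2 hnd

end Bperp

/-- The ratio bound `h_{m,s} = [m choose s]_q ∏_{i=1}^{s-1} (q^{m-i} + 1)` on the number of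
members of an EKR-set of `s`-spaces in the symplectic polar space of rank `m`. -/
noncomputable def ratioBound (q m s : ℕ) : ℝ :=
  gaussq q m s * ∏ i ∈ Icc 1 (s - 1), ((q : ℝ) ^ (m - i) + 1)

variable {F V : Type} [Field F] [Fintype F] [AddCommGroup V] [Module F V]
  [FiniteDimensional F V] {B : V →ₗ[F] V →ₗ[F] F} {m s : ℕ} {𝓕 : Set (Submodule F V)}

theorem ncard_le_ratioBound (hB : B.IsAlt) (hnd : B.Nondegenerate) (hm : finrank F V = 2 * m)
    (hs : 1 ≤ s) (hsm : s ≤ m) (h𝓕 : IsEKRSpaces B s 𝓕) :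
    𝓕.ncard ≤ ratioBound (Fintype.card F) m s := by
  have : Finite V := Module.finite_of_finite F
  let := Fintype.ofFinite V
  set q := Fintype.card F
  set N := ∏ i ∈ range s, (q ^ s - q ^ i) with hN
  have hq : 1 < q := Fintype.one_lt_card
  have hNpos : 0 < N := prod_pos fun i hi =>
    Nat.sub_pos_of_lt (Nat.pow_lt_pow_right hq (mem_range.1 hi))
  set G : Finset (Fin s → V) :=
    {X | LinearIndependent F X ∧ Submodule.span F (Set.range X) ∈ 𝓕} with hG
  have hcard : #G = 𝓕.ncard * N := by
    rw [card_eq_sum_card_fiberwise (f := fun X => Submodule.span F (Set.range X))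
      (t := 𝓕.toFinite.toFinset) fun X hX => by simpa using (mem_filter.1 hX).2.2,
      Set.ncard_eq_toFinset_card 𝓕, sum_const_nat fun S hS => ?_]
    have hS' : S ∈ 𝓕 := by simpa using hS
    rw [hN, ← card_linearIndependent_span_eq (h𝓕.1 S hS').2, hG, filter_filter]
    congr 1
    ext X
    simp only [mem_filter, mem_univ, true_and, and_assoc]
    exact and_congr_right fun _ => ⟨And.right, fun h => ⟨h ▸ hS', h⟩⟩
  have hbound := card_mul_le_of_pairwise_not_isOppositeFrame hB hnd hm hsm (G := G)
    (fun X hX => isFrame_iff.2 ⟨(mem_filter.1 hX).2.1,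
      isTotIso_iff_le_orthogonalBilin.1 (h𝓕.1 _ (mem_filter.1 hX).2.2).1⟩)
    (fun X hX Y hY hXY => h𝓕.2 _ (mem_filter.1 hX).2.2 _ (mem_filter.1 hY).2.2
      (spaceOpp_iff.2 ((isOppositeFrame_iff hB.isRefl).1 hXY).2))
  rw [hcard, prod_pow_sub_pow_eq_mul_gaussq hq hsm, prod_pow_add_one_eq_mul_prod_Icc hs] at hbound
  have hpos : (0 : ℝ) < N * ((q : ℝ) ^ m + 1) := by positivity
  refine le_of_mul_le_mul_right ?_ hpos
  rw [ratioBound]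
  rw [Nat.cast_mul] at hbound
  linarith

end SpacesBound

section Sections

variable {F E E' : Type*} [Field F] [AddCommGroup E] [Module F E] [AddCommGroup E'] [Module F E']
  {f : E →ₗ[F] E'}

theorem finrank_map_of_disjoint_ker {S : Submodule F E} (hdisj : Disjoint S (LinearMap.ker f)) :
    finrank F (S.map f) = finrank F S := by
  rw [← LinearMap.range_domRestrict]
  exact LinearMap.finrank_range_of_inj (LinearMap.injective_domRestrict_iff.2 hdisj)

theorem exists_section_range_eq {S : Submodule F E} {T : Submodule F E'}
    (hdisj : Disjoint S (LinearMap.ker f)) (hmap : S.map f = T) :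
    ∃ e : T →ₗ[F] E, LinearMap.range e = S ∧ ∀ t, f (e t) = t := by
  subst hmap
  let g : S ≃ₗ[F] S.map f :=
    (LinearEquiv.ofInjective _ (LinearMap.injective_domRestrict_iff.2 hdisj)).trans
      (LinearEquiv.ofEq _ _ (LinearMap.range_domRestrict S f))
  refine ⟨S.subtype ∘ₗ g.symm.toLinearMap, ?_, fun t => ?_⟩
  · rw [LinearMap.range_comp_of_range_eq_top _ g.symm.range, Submodule.range_subtype]
  · exact congrArg Subtype.val (g.apply_symm_apply t)

theorem ncard_disjoint_ker_map_eq_le [Fintype F] [FiniteDimensional F E] (f : E →ₗ[F] E')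
    (D : Submodule F E) (T : Submodule F E') [FiniteDimensional F T] :
    {S : Submodule F E | S ≤ D ∧ Disjoint S (LinearMap.ker f) ∧ S.map f = T}.ncard ≤
      Fintype.card F ^ (finrank F T * finrank F ↥(D ⊓ LinearMap.ker f)) := by
  set K := D ⊓ LinearMap.ker f
  rcases Set.eq_empty_or_nonempty
    {S : Submodule F E | S ≤ D ∧ Disjoint S (LinearMap.ker f) ∧ S.map f = T} with
    hempty | ⟨S₀, hS₀D, hS₀, hS₀T⟩
  · simp [hempty]
  obtain ⟨e₀, rfl, he₀⟩ := exists_section_range_eq hS₀ hS₀T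
  have hsub : {S : Submodule F E | S ≤ D ∧ Disjoint S (LinearMap.ker f) ∧ S.map f = T} ⊆
      Set.range fun φ : T →ₗ[F] K => LinearMap.range (e₀ + K.subtype ∘ₗ φ) := by
    rintro S ⟨hSD, hS, hST⟩
    obtain ⟨e, rfl, he⟩ := exists_section_range_eq hS hST
    have hdiff (t : T) : (e - e₀) t ∈ K := by
      refine ⟨sub_mem (hSD ⟨t, rfl⟩) (hS₀D ⟨t, rfl⟩), LinearMap.mem_ker.2 ?_⟩
      rw [LinearMap.sub_apply, map_sub, he, he₀, sub_self]
    refine ⟨(e - e₀).codRestrict K hdiff, congrArg LinearMap.range ?_⟩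
    rw [LinearMap.subtype_comp_codRestrict, add_sub_cancel]
  have : Finite (T →ₗ[F] K) := Module.finite_of_finite F
  calc _ ≤ (Set.range fun φ : T →ₗ[F] K => LinearMap.range (e₀ + K.subtype ∘ₗ φ)).ncard :=
        Set.ncard_le_ncard hsub (Set.finite_range _)
    _ ≤ Nat.card (T →ₗ[F] K) := Finite.card_range_le _
    _ = _ := by
        rw [Module.natCard_eq_pow_finrank (K := F), Module.finrank_linearMap,
          Nat.card_eq_fintype_card]

theorem ncard_le_mul_ncard_image_map [Fintype F] [FiniteDimensional F E] {D : Submodule F E}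
    {s : ℕ} {𝓕 : Set (Submodule F E)} (hs : ∀ S ∈ 𝓕, finrank F S = s)
    (h𝓕 : ∀ S ∈ 𝓕, S ≤ D ∧ Disjoint S (LinearMap.ker f)) :
    𝓕.ncard ≤
      Fintype.card F ^ (s * finrank F ↥(D ⊓ LinearMap.ker f)) * (Submodule.map f '' 𝓕).ncard := by
  have : Finite E := Module.finite_of_finite F
  lift 𝓕 to Finset (Submodule F E) using 𝓕.toFinite
  rw [← coe_image, Set.ncard_coe_finset, Set.ncard_coe_finset]
  refine card_le_mul_card_image _ _ fun T hT => ?_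
  obtain ⟨S₀, hS₀, rfl⟩ := mem_image.1 hT
  rw [← hs S₀ hS₀, ← finrank_map_of_disjoint_ker (h𝓕 S₀ hS₀).2, ← Set.ncard_coe_finset]
  refine (Set.ncard_le_ncard (fun S hS => ?_) (Set.toFinite _)).trans
    (ncard_disjoint_ker_map_eq_le f D _)
  obtain ⟨hS, hST⟩ := mem_filter.1 hS
  exact ⟨(h𝓕 S hS).1, (h𝓕 S hS).2, hST⟩

end Sections

section Reduction

variable {F V : Type*} [Field F] [AddCommGroup V] [Module F V] [FiniteDimensional F V]
  {B : V →ₗ[F] V →ₗ[F] F} {P : Submodule F V}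

theorem exists_isCompl_orthogonalBilin_sup_eq (hB : B.IsRefl) (hnd : B.Nondegenerate)
    (hP : P ≤ P.orthogonalBilin B) :
    ∃ W : Submodule F V, Disjoint P W ∧ P ⊔ W = P.orthogonalBilin B ∧
      P.orthogonalBilin B ⊓ W.orthogonalBilin B = P ∧ IsCompl W (W.orthogonalBilin B) := by
  obtain ⟨W, hPW, hsup⟩ := IsModularLattice.exists_disjoint_and_sup_eq hP
  have hWP : W ≤ P.orthogonalBilin B := hsup ▸ le_sup_right
  have hinf : P.orthogonalBilin B ⊓ W.orthogonalBilin B = P := by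
    refine le_antisymm ?_ (le_inf hP fun p hp w hw => hB _ _ (hWP hw p hp))
    calc P.orthogonalBilin B ⊓ W.orthogonalBilin B
        ≤ (P.orthogonalBilin B).orthogonalBilin B := fun v hv u hu => by
          obtain ⟨p, hp, w, hw, rfl⟩ := Submodule.mem_sup.1 (hsup ▸ hu)
          rw [map_add, LinearMap.add_apply, hv.1 p hp, hv.2 w hw, add_zero]
      _ = P := LinearMap.BilinForm.orthogonal_orthogonal hnd hB P
  have hdisj : Disjoint W (W.orthogonalBilin B) := Submodule.disjoint_def.2 fun w hw hw' =>
    Submodule.disjoint_def.1 hPW w (hinf.le ⟨hWP hw, hw'⟩) hw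
  exact ⟨W, hPW, hsup, hinf, (LinearMap.BilinForm.isCompl_orthogonal_iff_disjoint hB).2 hdisj⟩

theorem exists_projection_orthogonalBilin (hB : B.IsRefl) (hnd : B.Nondegenerate)
    (hP : P ≤ P.orthogonalBilin B) :
    ∃ (W : Submodule F V) (π : V →ₗ[F] W),
      (B.domRestrict₁₂ W W).Nondegenerate ∧ finrank F W + 2 * finrank F P = finrank F V ∧
      P.orthogonalBilin B ⊓ LinearMap.ker π = P ∧
      ∀ u ∈ P.orthogonalBilin B, ∀ v ∈ P.orthogonalBilin B,
        B.domRestrict₁₂ W W (π u) (π v) = B u v := by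
  obtain ⟨W, hPW, hsup, hinf, hW⟩ := exists_isCompl_orthogonalBilin_sup_eq hB hnd hP
  refine ⟨W, W.projectionOnto _ hW,
    LinearMap.nondegenerate_restrict_of_disjoint_orthogonal hB hW.disjoint, ?_, ?_, ?_⟩
  · have hdim := Submodule.finrank_sup_add_finrank_inf_eq P W
    rw [hPW.eq_bot, finrank_bot, hsup, add_zero] at hdim
    have horth : finrank F (P.orthogonalBilin B) = _ :=
      LinearMap.BilinForm.finrank_orthogonal hnd P
    have := P.finrank_le
    omega
  · rw [Submodule.ker_projectionOnto, hinf]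
  · intro u hu v hv
    have hmem (v : V) : v - W.projectionOnto _ hW v ∈ W.orthogonalBilin B := by
      rw [← Submodule.projectionOnto_apply_eq_zero_iff hW, map_sub,
        Submodule.projectionOnto_apply_left, sub_self]
    have huP : u - W.projectionOnto _ hW u ∈ P := hinf.le
      ⟨sub_mem hu (hsup.le (Submodule.mem_sup_right (W.projectionOnto _ hW u).2)), hmem u⟩
    have hleft := hv _ huP
    have hright := hmem v _ (W.projectionOnto _ hW u).2
    rw [map_sub, LinearMap.sub_apply, sub_eq_zero] at hleft
    rw [map_sub, sub_eq_zero] at hright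
    exact (hleft.trans hright).symm

end Reduction

section Residue

variable {F V W : Type} [Field F] [AddCommGroup V] [Module F V] [AddCommGroup W] [Module F W]
  {B : V →ₗ[F] V →ₗ[F] F} {B' : W →ₗ[F] W →ₗ[F] F} {f : V →ₗ[F] W} {D : Submodule F V}

theorem isEKRSpaces_image_map (hf : ∀ u ∈ D, ∀ v ∈ D, B' (f u) (f v) = B u v) {s : ℕ}
    {𝓕 : Set (Submodule F V)} (h𝓕 : IsEKRSpaces B s 𝓕)
    (hD : ∀ S ∈ 𝓕, S ≤ D ∧ Disjoint S (LinearMap.ker f)) :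
    IsEKRSpaces B' s (Submodule.map f '' 𝓕) := by
  refine ⟨?_, ?_⟩
  · rintro _ ⟨S, hS, rfl⟩
    refine ⟨?_, (finrank_map_of_disjoint_ker (hD S hS).2).trans (h𝓕.1 S hS).2⟩
    rintro _ ⟨u, hu, rfl⟩ _ ⟨v, hv, rfl⟩
    rw [hf u ((hD S hS).1 hu) v ((hD S hS).1 hv), (h𝓕.1 S hS).1 u hu v hv]
  · rintro _ ⟨S, hS, rfl⟩ _ ⟨T, hT, rfl⟩ hopp
    refine h𝓕.2 S hS T hT (spaceOpp_iff.2 (Submodule.disjoint_def.2 fun v hvT hvS => ?_))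
    have hfv : f v = 0 := Submodule.disjoint_def.1 (spaceOpp_iff.1 hopp) _ ⟨v, hvT, rfl⟩ <| by
      rintro _ ⟨u, hu, rfl⟩
      rw [hf u ((hD S hS).1 hu) v ((hD T hT).1 hvT), hvS u hu]
    exact Submodule.disjoint_def.1 (hD T hT).2 v hvT hfv

end Residue

end SymplecticEKR

open SymplecticEKR in
theorem stmt_19_general {F V : Type} [Field F] [Fintype F] [AddCommGroup V] [Module F V]
    [FiniteDimensional F V] {B : V →ₗ[F] V →ₗ[F] F} (halt : IsAltForm B) (hnd : NondegForm B)
    {n r s : ℕ} (hdim : finrank F V = 2 * n) (hs : 1 ≤ s) (hrs : r + s ≤ n)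
    {P : Submodule F V} (hP : IsTotIso B P) (hr : finrank F P = r)
    {𝓕 : Set (Submodule F V)} (h𝓕 : IsEKRSpaces B s 𝓕)
    (hperp : ∀ S ∈ 𝓕, S ≤ bperp B P ∧ Disjoint S P) :
    𝓕.ncard ≤ (Fintype.card F : ℝ) ^ (s * r) *
      ratioBound (Fintype.card F) (n - r) s := by
  have hB : B.IsAlt := halt
  obtain ⟨W, π, hndW, hdimW, hker, hπ⟩ := exists_projection_orthogonalBilin
    hB.isRefl (nondegenerate_of_nondegForm halt hnd)
    (isTotIso_iff_le_orthogonalBilin.1 hP)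
  rw [← bperp_eq_orthogonalBilin] at hker hπ
  have hdisj (S) (hS : S ∈ 𝓕) : S ≤ bperp B P ∧ Disjoint S (LinearMap.ker π) := by
    obtain ⟨hSP, hSdisj⟩ := hperp S hS
    exact ⟨hSP, Submodule.disjoint_def.2 fun v hv hπv =>
      Submodule.disjoint_def.1 hSdisj v hv (hker.le ⟨hSP hv, hπv⟩)⟩
  have hfibres := ncard_le_mul_ncard_image_map (fun S hS => (h𝓕.1 S hS).2) hdisj
  rw [hker, hr] at hfibres
  have hbound := ncard_le_ratioBound (m := n - r) (B := B.domRestrict₁₂ W W)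
    (fun w => hB w) hndW (by omega) hs (by omega) (isEKRSpaces_image_map hπ h𝓕 hdisj)
  calc (𝓕.ncard : ℝ) ≤ (Fintype.card F : ℝ) ^ (s * r) * (Submodule.map π '' 𝓕).ncard := by
        exact_mod_cast hfibres
    _ ≤ _ := by gcongr

/-- an EKR-set of totally isotropic `s`-spaces contained in `P^⊥` and
not containing the point `P` has size at most
`q^s · [(n-1) choose s]_q · ∏_{i=1}^{s-1}(q^{n-1-i}+1)`. -/
theorem stmt_19 {F V : Type} [Field F] [Fintype F] [AddCommGroup V] [Module F V]
    [FiniteDimensional F V] (n q : ℕ) (hn : 3 ≤ n) (hq : Fintype.card F = q)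
    (B : V →ₗ[F] V →ₗ[F] F) (halt : IsAltForm B) (hnd : NondegForm B)
    (hdim : Module.finrank F V = 2 * n)
    (s : ℕ) (hs1 : 1 ≤ s) (hsn : s ≤ n - 1)
    (P : Submodule F V) (hPiso : IsTotIso B P) (hPrank : Module.finrank F P = 1)
    (𝓕 : Set (Submodule F V))
    (h𝓕 : ∀ S ∈ 𝓕, IsTotIso B S ∧ Module.finrank F S = s ∧
      S ≤ bperp B P ∧ ¬ P ≤ S)
    (hno : ∀ S ∈ 𝓕, ∀ T ∈ 𝓕, ¬ SpaceOpp B S T) :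
    (𝓕.ncard : ℝ) ≤
      (q : ℝ) ^ s * gaussq q (n - 1) s *
        ∏ i ∈ Finset.Icc 1 (s - 1), ((q : ℝ) ^ (n - 1 - i) + 1) := by
  subst hq
  have hEKR : IsEKRSpaces B s 𝓕 := ⟨fun S hS => ⟨(h𝓕 S hS).1, (h𝓕 S hS).2.1⟩, hno⟩
  have hperp (S) (hS : S ∈ 𝓕) : S ≤ bperp B P ∧ Disjoint S P :=
    ⟨(h𝓕 S hS).2.2.1, ((Submodule.isAtom_iff_finrank_eq_one.2 hPrank).not_le_iff_disjoint.1
      (h𝓕 S hS).2.2.2).symm⟩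
  simpa only [mul_one, SymplecticEKR.ratioBound, mul_assoc] using
    stmt_19_general halt hnd hdim hs1 (by omega) hPiso hPrank hEKR hperp
end
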